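/- arXiv:2204.07419 — 9 statements merged into one kernel-verified Lean document; each statement's English description precedes it below -/
import Mathlib

section
/- Let p be a prime. The set A of all functions f : ℚ_p → ℚ_p that are strictly differentiable of order 1 on ℚ_p but not strictly differentiable of order 2 on ℚ_p is 𝔠-lineable in the ℚ_p-vector space of all functions ℚ_p → ℚ_p: there exists a ℚ_p-submodule M of the space of functions ℚ_p → ℚ_p whose rank over ℚ_p equals the cardinality 𝔠 of the continuum and such that M \ {0} ⊆ A. -/
/-!
On an ultrametric field `K`, a function `ρ` depending only on the norm is locally constant away
from `0`, so it is strictly differentiable of order 1 as soon as its derivative at `0` vanishes.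
If it were also strictly differentiable of order 2, the second difference quotient at
`((1 + t) x, x, 0)`, which equals `-(ρ x - ρ 0) / ((1 + t) x ^ 2)` for small `t ≠ 0`, would have a
limit independent of `t` as `x → 0`, forcing `(ρ x - ρ 0) / x ^ 2 → 0`. This fails for a nonzero
multiple of `ρ x = r x ^ 2`, where `r x` has the norm of `x` and depends only on that norm.

Placing copies of `ρ` on the infinitely many cosets of the open unit ball, with arbitrary
coefficients, embeds `(K ⧸ ball) → K`, whose rank is at least the continuum.
-/

open Filter Topology Cardinal

section Lineable

universe u v

variable {F : Type u} {V W : Type v} [Field F] [AddCommGroup V] [Module F V]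
  [AddCommGroup W] [Module F W]

variable (F) in
/-- `κ`-lineability over `F`: the set `A`, together with `0`, contains a subspace of dimension
`κ`. -/
def IsLineable (κ : Cardinal.{v}) (A : Set V) : Prop :=
  ∃ M : Submodule F V, Module.rank F M = κ ∧ ∀ f ∈ M, f ≠ 0 → f ∈ A

lemma exists_submodule_rank_eq {κ : Cardinal.{v}} (hκ : κ ≤ Module.rank F W) :
    ∃ M : Submodule F W, Module.rank F M = κ := by
  obtain ⟨s, rfl, hs⟩ := le_rank_iff_exists_linearIndependent.1 hκ
  exact ⟨Submodule.span F s, rank_span_set hs⟩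

lemma IsLineable.of_linearMap {κ : Cardinal.{v}} {A : Set V} (T : W →ₗ[F] V)
    (h0 : (0 : V) ∉ A) (hT : ∀ w ≠ 0, T w ∈ A) (hκ : κ ≤ Module.rank F W) :
    IsLineable F κ A := by
  have hinj : Function.Injective T := (injective_iff_map_eq_zero T).2 fun w hw =>
    by_contra fun hw0 => h0 (hw ▸ hT w hw0)
  obtain ⟨M, hM⟩ := exists_submodule_rank_eq hκ
  refine ⟨M.map T, (rank_map_eq hinj M).trans hM, ?_⟩
  rintro _ ⟨w, -, rfl⟩ hw
  exact hT w fun h => hw (by rw [h, map_zero])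

lemma continuum_le_rank_fun {ι : Type v} [Infinite ι] {k : Type v} [Field k] :
    𝔠 ≤ Module.rank k (ι → k) := by
  rw [rank_fun_infinite, ← two_power_aleph0, mk_arrow, lift_id, lift_id]
  exact (power_le_power_left two_ne_zero (aleph0_le_mk ι)).trans
    (power_le_power_right (two_le_iff.2 (exists_pair_ne k)))

end Lineable

section StrictDifferentiability

/-- Strict differentiability of order 1: the first difference quotient extends continuously to the
diagonal. -/
def StrictlyDiffOne {K : Type*} [Field K] [TopologicalSpace K] (f : K → K) : Prop :=
  ∃ F : K × K → K, Continuous F ∧ ∀ x y : K, x ≠ y → F (x, y) = (f x - f y) / (x - y)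

/-- Strict differentiability of order 2: the second difference quotient extends continuously to
triples with repeated entries. -/
def StrictlyDiffTwo {K : Type*} [Field K] [TopologicalSpace K] (f : K → K) : Prop :=
  ∃ G : K × K × K → K, Continuous G ∧ ∀ x y z : K, x ≠ y → x ≠ z → y ≠ z →
    G (x, y, z) = ((f x - f z) / (x - z) - (f y - f z) / (y - z)) / (x - y)

lemma strictlyDiffTwo_zero {K : Type*} [Field K] [TopologicalSpace K] :
    StrictlyDiffTwo (0 : K → K) :=
  ⟨0, continuous_zero, by simp⟩

lemma dense_compl_diagonal {X : Type*} [TopologicalSpace X] [∀ x : X, (𝓝[≠] x).NeBot] :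
    Dense (Set.diagonal X)ᶜ := by
  rintro ⟨x, y⟩
  have hy : y ∈ closure {x}ᶜ := dense_compl_singleton x y
  exact map_mem_closure (by fun_prop : Continuous fun z : X => (x, z)) hy fun _ hz => Ne.symm hz

variable {K : Type*} [NontriviallyNormedField K] {f : K → K}

lemma tendsto_diffQuot_of_hasStrictDerivAt {f' a : K} (h : HasStrictDerivAt f f' a) :
    Tendsto (fun q : K × K => (f q.1 - f q.2) / (q.1 - q.2)) (𝓝[(Set.diagonal K)ᶜ] (a, a))
      (𝓝 f') := by
  have hlim := (h.hasStrictFDerivAt.isLittleO.tendsto_div_nhds_zero.mono_left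
    (nhdsWithin_le_nhds (s := (Set.diagonal K)ᶜ))).add_const f'
  rw [zero_add] at hlim
  refine hlim.congr' ?_
  filter_upwards [self_mem_nhdsWithin] with q (hq : q.1 ≠ q.2)
  have hsub : q.1 - q.2 ≠ 0 := sub_ne_zero.2 hq
  rw [ContinuousLinearMap.toSpanSingleton_apply, smul_eq_mul, sub_div,
    mul_div_cancel_left₀ _ hsub, sub_add_cancel]

lemma strictlyDiffOne_of_hasStrictDerivAt {f' : K → K} (h : ∀ a, HasStrictDerivAt f (f' a) a) :
    StrictlyDiffOne f := by
  set q : K × K → K := fun q => (f q.1 - f q.2) / (q.1 - q.2)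
  have hf : Continuous f :=
    continuous_iff_continuousAt.2 fun a => (h a).hasDerivAt.continuousAt
  have hq : ∀ x y, x ≠ y → ContinuousAt q (x, y) := fun x y hxy =>
    ContinuousAt.div (by fun_prop) (by fun_prop) (sub_ne_zero.2 hxy)
  refine ⟨extendFrom (Set.diagonal K)ᶜ q, continuous_extendFrom dense_compl_diagonal ?_, ?_⟩
  · rintro ⟨x, y⟩
    obtain rfl | hxy := eq_or_ne x y
    · exact ⟨f' x, tendsto_diffQuot_of_hasStrictDerivAt (h x)⟩
    · exact ⟨_, (hq x y hxy).mono_left nhdsWithin_le_nhds⟩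
  · exact fun x y hxy => extendFrom_eq (dense_compl_diagonal _)
      ((hq x y hxy).mono_left nhdsWithin_le_nhds)

end StrictDifferentiability

section Radial

variable {K : Type*} [NontriviallyNormedField K] [IsUltrametricDist K] {ρ : K → K}

lemma eventually_norm_eq {E : Type*} [SeminormedAddCommGroup E] [IsUltrametricDist E] {a : E}
    (ha : ‖a‖ ≠ 0) : ∀ᶠ x in 𝓝 a, ‖x‖ = ‖a‖ := by
  filter_upwards [(IsUltrametricDist.isOpen_sphere (0 : E) ha).mem_nhds (by simp)] with x hx
  simpa using hx

lemma hasStrictDerivAt_zero_of_radial (hρ : ρ.FactorsThrough norm) (h0 : HasDerivAt ρ 0 0)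
    (a : K) : HasStrictDerivAt ρ 0 a := by
  obtain rfl | ha := eq_or_ne a 0
  · refine hasStrictDerivAt_iff_hasStrictFDerivAt.2 (.of_isLittleO (.of_bound fun ε hε => ?_))
    have hbound : ∀ᶠ x in 𝓝 (0 : K), ‖ρ x - ρ 0‖ ≤ ε * ‖x‖ := by
      simpa using (hasDerivAt_iff_isLittleO.1 h0).bound hε
    rw [nhds_prod_eq]
    filter_upwards [hbound.prod_mk hbound] with ⟨x, y⟩ ⟨hx, hy⟩
    rw [ContinuousLinearMap.toSpanSingleton_apply, smul_zero, sub_zero]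
    obtain hxy | hxy := eq_or_ne ‖x‖ ‖y‖
    · rw [hρ hxy, sub_self, norm_zero]
      positivity
    · calc ‖ρ x - ρ y‖ ≤ max ‖ρ x - ρ 0‖ ‖ρ y - ρ 0‖ := by
            simpa [dist_eq_norm, norm_sub_rev] using dist_triangle_max (ρ x) (ρ 0) (ρ y)
        _ ≤ max (ε * ‖x‖) (ε * ‖y‖) := max_le_max hx hy
        _ = ε * ‖x - y‖ := by
            rw [← mul_max_of_nonneg _ _ hε.le, sub_eq_add_neg,
              IsUltrametricDist.norm_add_eq_max_of_norm_ne_norm (by simpa using hxy), norm_neg]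
  · refine (hasStrictDerivAt_const a (ρ a)).congr_of_eventuallyEq ?_
    filter_upwards [eventually_norm_eq (norm_ne_zero_iff.2 ha)] with x hx
    exact (hρ hx).symm

lemma StrictlyDiffTwo.exists_tendsto_div_sq_of_radial {f : K → K} (hf : StrictlyDiffTwo f) {c : K}
    (hρ : ρ.FactorsThrough norm) (hfρ : (fun x => f (c + x)) =ᶠ[𝓝 0] ρ) :
    ∃ L, ∀ t : K, t ≠ 0 → ‖t‖ < 1 →
      Tendsto (fun x => (ρ x - ρ 0) / x ^ 2) (𝓝[≠] 0) (𝓝 (-(1 + t) * L)) := by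
  obtain ⟨G, hG, hGf⟩ := hf
  refine ⟨G (c, c, c), fun t ht0 ht1 => ?_⟩
  have hu : ‖1 + t‖ = 1 := by
    rw [IsUltrametricDist.norm_add_eq_max_of_norm_ne_norm (by simpa using ht1.ne'), norm_one,
      max_eq_left ht1.le]
  have hu0 : 1 + t ≠ 0 := norm_ne_zero_iff.1 (by simp [hu])
  have hmul : Tendsto (fun x => (1 + t) * x) (𝓝 0) (𝓝 0) :=
    Continuous.tendsto' (by fun_prop) _ _ (mul_zero _)
  have hlim : Tendsto (fun x => -(1 + t) * G (c + (1 + t) * x, c + x, c)) (𝓝 0)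
      (𝓝 (-(1 + t) * G (c, c, c))) :=
    Continuous.tendsto' (by fun_prop) _ _ (by simp)
  refine (hlim.mono_left nhdsWithin_le_nhds).congr' ?_
  filter_upwards [self_mem_nhdsWithin, nhdsWithin_le_nhds hfρ,
    nhdsWithin_le_nhds (hmul.eventually hfρ)] with x (hx : x ≠ 0) hfx hfux
  have hρu : ρ ((1 + t) * x) = ρ x := hρ (by rw [norm_mul, hu, one_mul])
  have hfc : f c = ρ 0 := by simpa using hfρ.self_of_nhds
  have hGx := hGf (c + (1 + t) * x) (c + x) c (by simpa [add_mul] using ⟨ht0, hx⟩)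
    (by simpa using ⟨hu0, hx⟩) (by simpa using hx)
  rw [hGx, hfux, hfx, hfc, hρu]
  have hux : c + (1 + t) * x - (c + x) = t * x := by ring
  rw [hux, add_sub_cancel_left, add_sub_cancel_left]
  field_simp
  ring

lemma StrictlyDiffTwo.tendsto_div_sq_of_radial {f : K → K} (hf : StrictlyDiffTwo f) {c : K}
    (hρ : ρ.FactorsThrough norm) (hfρ : (fun x => f (c + x)) =ᶠ[𝓝 0] ρ) :
    Tendsto (fun x => (ρ x - ρ 0) / x ^ 2) (𝓝[≠] 0) (𝓝 0) := by
  obtain ⟨L, hL⟩ := hf.exists_tendsto_div_sq_of_radial hρ hfρ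
  obtain ⟨t, ht0, ht1⟩ := NormedField.exists_norm_lt_one K
  rw [norm_pos_iff] at ht0
  have ht2 : ‖t ^ 2‖ < 1 := by
    rw [norm_pow]; exact pow_lt_one₀ (norm_nonneg t) ht1 two_ne_zero
  have ht : 1 - t ≠ 0 := sub_ne_zero.2 fun h => by simp [← h] at ht1
  have hlim := tendsto_nhds_unique (hL t ht0 ht1) (hL (t ^ 2) (pow_ne_zero 2 ht0) ht2)
  have hL0 : L = 0 := by
    have : t * (1 - t) * L = 0 := by linear_combination -hlim
    simpa [ht0, ht] using this
  simpa [hL0] using hL t ht0 ht1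

end Radial

section NormRep

variable {E : Type*} [Norm E] [Nonempty E]

/-- An element with the same norm as `x`, chosen as a function of `‖x‖` alone. -/
noncomputable def normRep (x : E) : E := Function.invFun (norm : E → ℝ) ‖x‖

@[simp]
lemma norm_normRep (x : E) : ‖normRep x‖ = ‖x‖ := Function.invFun_eq ⟨x, rfl⟩

lemma factorsThrough_normRep : (normRep : E → E).FactorsThrough norm :=
  fun _ _ h => congrArg (Function.invFun norm) h

lemma hasDerivAt_normRep_sq {K : Type*} [NontriviallyNormedField K] :
    HasDerivAt (fun x : K => normRep x ^ 2) 0 0 := by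
  have h : (fun x : K => normRep x ^ 2) =O[𝓝 0] fun x => ‖x - 0‖ ^ 2 :=
    .of_norm_le fun x => by simp
  simpa using (h.hasFDerivAt one_lt_two).hasDerivAt

variable {K : Type*} [NontriviallyNormedField K] [IsUltrametricDist K]

lemma hasStrictDerivAt_normRep_sq (a : K) : HasStrictDerivAt (fun x : K => normRep x ^ 2) 0 a :=
  hasStrictDerivAt_zero_of_radial (fun _ _ h => congrArg (· ^ 2) (factorsThrough_normRep h))
    hasDerivAt_normRep_sq a

lemma not_strictlyDiffTwo_of_eventuallyEq_normRep_sq {f : K → K} {b c : K} (hb : b ≠ 0)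
    (hf : (fun x => f (c + x)) =ᶠ[𝓝 0] fun x => b * normRep x ^ 2) : ¬ StrictlyDiffTwo f := by
  intro hf2
  have h0 : normRep (0 : K) = 0 := norm_eq_zero.1 (by simp)
  have hlim := hf2.tendsto_div_sq_of_radial
    (fun x y h => by simp only [factorsThrough_normRep h]) hf
  have hnorm : Tendsto (fun _ : K => ‖b‖) (𝓝[≠] 0) (𝓝 0) := by
    refine (tendsto_zero_iff_norm_tendsto_zero.1 hlim).congr' ?_
    filter_upwards [self_mem_nhdsWithin] with x (hx : x ≠ 0)
    simp [h0, hx]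
  exact hb (norm_eq_zero.1 (tendsto_nhds_unique tendsto_const_nhds hnorm))

end NormRep

section Cosetwise

/-- The function equal on each coset `q` of `H` to `b q` times the translate of `ρ` centred at the
chosen representative of `q`, as a linear function of the coefficients `b`. -/
noncomputable def cosetwise {R : Type*} [CommRing R] (H : AddSubgroup R) (ρ : R → R) :
    (R ⧸ H → R) →ₗ[R] (R → R) where
  toFun b x := b x * ρ (x - (x : R ⧸ H).out)
  map_add' a b := by ext x; exact add_mul _ _ _
  map_smul' c b := by ext x; exact mul_assoc _ _ _

lemma cosetwise_eventuallyEq {R : Type*} [CommRing R] [TopologicalSpace R] [ContinuousAdd R]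
    {H : AddSubgroup R} (hH : IsOpen (H : Set R)) (ρ : R → R) (b : R ⧸ H → R) (a : R) :
    cosetwise H ρ b =ᶠ[𝓝 a] fun x => b a * ρ (x - (a : R ⧸ H).out) := by
  have := QuotientAddGroup.discreteTopology hH
  have hmk : ∀ᶠ x : R in 𝓝 a, (x : R ⧸ H) = a :=
    QuotientAddGroup.continuous_mk.continuousAt.eventually_mem
      (mem_nhds_discrete.2 (Set.mem_singleton _))
  filter_upwards [hmk] with x hx
  simp only [cosetwise, LinearMap.coe_mk, AddHom.coe_mk, hx]

lemma infinite_quotient_of_isBounded {E : Type*} [SeminormedAddCommGroup E] {H : AddSubgroup E}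
    (hH : Bornology.IsBounded (H : Set E)) (hE : ¬ Bornology.IsBounded (Set.univ : Set E)) :
    Infinite (E ⧸ H) := by
  by_contra hfin
  rw [not_infinite_iff_finite] at hfin
  have hout : (Set.range (Quotient.out : E ⧸ H → E)).Finite := Set.finite_range _
  refine hE ((hout.isBounded.add hH).subset fun x _ => ?_)
  refine ⟨_, ⟨(x : E ⧸ H), rfl⟩, -(x : E ⧸ H).out + x, ?_, add_neg_cancel_left _ _⟩
  exact QuotientAddGroup.eq.1 (QuotientAddGroup.out_eq' _)

variable {K : Type*} [NontriviallyNormedField K] [IsUltrametricDist K] {H : AddSubgroup K}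

lemma strictlyDiffOne_cosetwise_normRep_sq (hH : IsOpen (H : Set K)) (b : K ⧸ H → K) :
    StrictlyDiffOne (cosetwise H (normRep · ^ 2) b) := by
  refine strictlyDiffOne_of_hasStrictDerivAt (f' := 0) fun a => ?_
  have h := (hasStrictDerivAt_normRep_sq (a - (a : K ⧸ H).out)).comp a
    ((hasStrictDerivAt_id a).sub_const (a : K ⧸ H).out)
  have hb := h.const_mul (b a)
  rw [zero_mul, mul_zero] at hb
  exact hb.congr_of_eventuallyEq (cosetwise_eventuallyEq hH (normRep · ^ 2) b a).symm

lemma not_strictlyDiffTwo_cosetwise_normRep_sq (hH : IsOpen (H : Set K)) {b : K ⧸ H → K}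
    (hb : b ≠ 0) : ¬ StrictlyDiffTwo (cosetwise H (normRep · ^ 2) b) := by
  obtain ⟨q, hq⟩ := Function.ne_iff.1 hb
  have htranslate : Tendsto (fun x => q.out + x) (𝓝 0) (𝓝 q.out) :=
    Continuous.tendsto' (by fun_prop) _ _ (add_zero _)
  refine not_strictlyDiffTwo_of_eventuallyEq_normRep_sq (c := q.out) hq ?_
  filter_upwards [htranslate.eventually (cosetwise_eventuallyEq hH (normRep · ^ 2) b q.out)]
    with x hx
  rw [hx, QuotientAddGroup.out_eq', add_sub_cancel_left]

end Cosetwise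

theorem stmt_0_general (K : Type*) [NontriviallyNormedField K] [IsUltrametricDist K] :
    IsLineable K 𝔠 {f : K → K | StrictlyDiffOne f ∧ ¬ StrictlyDiffTwo f} := by
  let B := IsUltrametricDist.ball_openAddSubgroup K one_pos
  have hB : IsOpen (B.toAddSubgroup : Set K) := B.isOpen
  have : Infinite (K ⧸ B.toAddSubgroup) :=
    infinite_quotient_of_isBounded Metric.isBounded_ball (NormedSpace.unbounded_univ K K)
  exact .of_linearMap (cosetwise B.toAddSubgroup (normRep · ^ 2))
    (fun h => h.2 strictlyDiffTwo_zero)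
    (fun b hb => ⟨strictlyDiffOne_cosetwise_normRep_sq hB b,
      not_strictlyDiffTwo_cosetwise_normRep_sq hB hb⟩)
    continuum_le_rank_fun

/-- The set of functions `ℚ_[p] → ℚ_[p]` that are strictly differentiable of
order 1 but not of order 2 on `ℚ_[p]` is `𝔠`-lineable. -/
theorem stmt_0 (p : ℕ) [Fact p.Prime] :
    ∃ M : Submodule ℚ_[p] (ℚ_[p] → ℚ_[p]),
      Module.rank ℚ_[p] M = Cardinal.continuum ∧
      ∀ f ∈ (M : Set (ℚ_[p] → ℚ_[p])), f ≠ 0 →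
        (∃ F : ℚ_[p] × ℚ_[p] → ℚ_[p], Continuous F ∧
            ∀ x y : ℚ_[p], x ≠ y → F (x, y) = (f x - f y) / (x - y)) ∧
        ¬ (∃ G : ℚ_[p] × ℚ_[p] × ℚ_[p] → ℚ_[p], Continuous G ∧
            ∀ x y z : ℚ_[p], x ≠ y → x ≠ z → y ≠ z →
              G (x, y, z) =
                ((f x - f z) / (x - z) - (f y - f z) / (y - z)) / (x - y)) :=
  stmt_0_general ℚ_[p]
end

section
/- Let p be a prime and let r ≥ 1 be a natural number. The set A of all functions f : ℚ_p → ℚ_p that are strictly differentiable of order r on ℚ_p but not strictly differentiable of order r+1 on ℚ_p is 𝔠-lineable in the ℚ_p-vector space of all functions ℚ_p → ℚ_p: there exists a ℚ_p-submodule M of the space of functions ℚ_p → ℚ_p whose rank over ℚ_p equals the cardinality 𝔠 of the continuum and such that M \ {0} ⊆ A. -/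
/-- The `r`-th difference quotient `Φ_r f` of a function `f : ℚ_[p] → ℚ_[p]`, defined on
tuples `(x₁, …, x_{r+1})` (indexed by `Fin (r+1)`), recursively by `Φ₀ f = f` and
`Φ_r f (x₁, x₂, …, x_{r+1}) =
  (Φ_{r-1} f (x₁, x₃, …, x_{r+1}) - Φ_{r-1} f (x₂, x₃, …, x_{r+1})) / (x₁ - x₂)`.
Only its values at injective (pairwise distinct) tuples are relevant. -/
noncomputable def diffQuotient (p : ℕ) [Fact p.Prime] :
    (r : ℕ) → (ℚ_[p] → ℚ_[p]) → (Fin (r + 1) → ℚ_[p]) → ℚ_[p]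
  | 0, f, x => f (x 0)
  | r + 1, f, x =>
      (diffQuotient p r f (fun i => x ((1 : Fin (r + 2)).succAbove i)) -
        diffQuotient p r f (fun i => x ((0 : Fin (r + 2)).succAbove i))) / (x 0 - x 1)

/-! Over an ultrametric field, let `f` be radial near `c`, i.e. a function of `‖x - c‖`, with
`‖f x‖ = C * ‖x - c‖ ^ (r + 1)` and `C > 0`. Away from `c`, `f` is locally constant. At `c`, an
induction on the number of nodes shows that the divided differences of order at most `r` tend to
zero: either two nodes are as far apart as the largest distance to `c`, and the recursion applies,
or all nodes lie on one sphere around `c`, where `f` is constant. The divided difference of order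
`r + 1` however vanishes on nodes of a common sphere, whereas it has norm `C` on nodes all but one
of which lie on a strictly smaller sphere, so it has no limit at `(c, …, c)`.

Gluing such functions, scaled by the terms of an arbitrary sequence `τ : ℕ → K`, over a partition of
`K` into infinitely many open sets gives a linear copy of `ℕ → K`, whose rank is its cardinality. -/

open Filter Topology

section Algebra

variable {K E ι κ : Type*} [Field K] [AddCommGroup E] [Module K E] [DecidableEq ι] [DecidableEq κ]

/-- The divided difference of `f` at the nodes `v i`, `i ∈ s`, in its closed Lagrange form, which
makes the symmetry in the nodes visible. Only its values at distinct nodes are relevant. -/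
noncomputable def dividedDifference (f : K → E) (s : Finset ι) (v : ι → K) : E :=
  ∑ i ∈ s, Lagrange.nodalWeight s v i • f (v i)

theorem dividedDifference_congr {f g : K → E} {s : Finset ι} {v : ι → K}
    (h : ∀ i ∈ s, f (v i) = g (v i)) : dividedDifference f s v = dividedDifference g s v :=
  Finset.sum_congr rfl fun i hi ↦ by rw [h i hi]

theorem dividedDifference_map (f : K → E) (e : κ ↪ ι) (s : Finset κ) (v : ι → K) :
    dividedDifference f (s.map e) v = dividedDifference f s (v ∘ e) := by
  simp only [dividedDifference, Lagrange.nodalWeight, Finset.sum_map, ← Finset.map_erase,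
    Finset.prod_map, Function.comp_apply]

theorem dividedDifference_sub (f g : K → E) (s : Finset ι) (v : ι → K) :
    dividedDifference (fun x ↦ f x - g x) s v =
      dividedDifference f s v - dividedDifference g s v := by
  simp only [dividedDifference, smul_sub, Finset.sum_sub_distrib]

theorem sum_nodalWeight {s : Finset ι} {v : ι → K} (hv : Set.InjOn v s) :
    ∑ i ∈ s, Lagrange.nodalWeight s v i = if s.card = 1 then 1 else 0 := by
  obtain rfl | hs := s.eq_empty_or_nonempty
  · simp
  have hcoeff := Lagrange.coeff_eq_sum (P := (1 : Polynomial K)) hv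
    (by simpa using hs.card_pos)
  have hpred : s.card - 1 = 0 ↔ s.card = 1 := by have := hs.card_pos; omega
  simpa only [Lagrange.nodalWeight, Finset.prod_inv_distrib, Polynomial.eval_one, one_div,
    Polynomial.coeff_one, hpred] using hcoeff.symm

theorem dividedDifference_const (w : E) {s : Finset ι} {v : ι → K} (hv : Set.InjOn v s) :
    dividedDifference (fun _ ↦ w) s v = if s.card = 1 then w else 0 := by
  rw [dividedDifference, ← Finset.sum_smul, sum_nodalWeight hv, ite_smul, one_smul, zero_smul]

theorem dividedDifference_erase (f : K → E) {s : Finset ι} {v : ι → K} (hv : Set.InjOn v s)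
    {i : ι} (hi : i ∈ s) :
    dividedDifference f (s.erase i) v =
      ∑ j ∈ s, (v j - v i) • Lagrange.nodalWeight s v j • f (v j) := by
  rw [← Finset.add_sum_erase s _ hi, sub_self, zero_smul, zero_add]
  refine Finset.sum_congr rfl fun j hj ↦ ?_
  obtain ⟨hji, hj⟩ := Finset.mem_erase.1 hj
  have hij : i ∈ s.erase j := Finset.mem_erase.2 ⟨hji.symm, hi⟩
  have hne : v j - v i ≠ 0 := sub_ne_zero.2 (hv.ne hj hi hji)
  rw [smul_smul, Lagrange.nodalWeight, Lagrange.nodalWeight, ← Finset.mul_prod_erase _ _ hij,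
    mul_inv_cancel_left₀ hne, Finset.erase_right_comm]

theorem dividedDifference_eq_inv_smul_sub (f : K → E) {s : Finset ι} {v : ι → K}
    (hv : Set.InjOn v s) {i j : ι} (hi : i ∈ s) (hj : j ∈ s) (hij : i ≠ j) :
    dividedDifference f s v = (v i - v j)⁻¹ •
      (dividedDifference f (s.erase j) v - dividedDifference f (s.erase i) v) := by
  rw [eq_inv_smul_iff₀ (sub_ne_zero.2 (hv.ne hi hj hij)), dividedDifference_erase f hv hi,
    dividedDifference_erase f hv hj, ← Finset.sum_sub_distrib, dividedDifference, Finset.smul_sum]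
  refine Finset.sum_congr rfl fun k _ ↦ ?_
  rw [← sub_smul, sub_sub_sub_cancel_left]

theorem dividedDifference_eq_nodalWeight_smul_sub {f : K → E} {s : Finset ι} {v : ι → K}
    (hv : Set.InjOn v s) (hs : s.card ≠ 1) {i : ι} (hi : i ∈ s) {w : E}
    (hw : ∀ j ∈ s.erase i, f (v j) = w) :
    dividedDifference f s v = Lagrange.nodalWeight s v i • (f (v i) - w) := by
  have hsub := dividedDifference_sub f (fun _ ↦ w) s v
  rw [dividedDifference_const w hv, if_neg hs, sub_zero] at hsub
  rw [← hsub, dividedDifference, ← Finset.add_sum_erase s _ hi, add_eq_left]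
  exact Finset.sum_eq_zero fun j hj ↦ by rw [hw j hj, sub_self, smul_zero]

end Algebra

section StrictDifferentiability

variable {K E ι : Type*} [NormedField K] [NormedAddCommGroup E] [NormedSpace K E]

/-- Strict differentiability of order `r`: the divided difference of `f` at `r + 1` distinct nodes
extends continuously to all `(r + 1)`-tuples. At distinct nodes the recursively defined difference
quotient is this divided difference, whose closed form does not depend on the order of the nodes. -/
def StrictlyDifferentiable (r : ℕ) (f : K → E) : Prop :=
  ∃ F : (Fin (r + 1) → K) → E, Continuous F ∧
    ∀ x : Fin (r + 1) → K, Function.Injective x → F x = dividedDifference f Finset.univ x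

theorem strictlyDifferentiable_zero (r : ℕ) : StrictlyDifferentiable r (0 : K → E) :=
  ⟨0, continuous_zero, fun x _ ↦ by simp [dividedDifference]⟩

theorem StrictlyDifferentiable.exists_tendsto_add_mul {r : ℕ} {f : K → E}
    (hf : StrictlyDifferentiable r f) (c : K) :
    ∃ L, ∀ v : Fin (r + 1) → K, Function.Injective v →
      Tendsto (fun t ↦ dividedDifference f Finset.univ fun i ↦ c + t * v i) (𝓝[≠] 0) (𝓝 L) := by
  obtain ⟨F, hF, hFf⟩ := hf
  refine ⟨F fun _ ↦ c, fun v hv ↦ ?_⟩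
  have hlim : Tendsto (fun t ↦ F fun i ↦ c + t * v i) (𝓝[≠] 0) (𝓝 (F fun _ ↦ c)) :=
    (Continuous.tendsto' (by fun_prop) 0 _ (by simp)).mono_left nhdsWithin_le_nhds
  refine hlim.congr' ?_
  filter_upwards [self_mem_nhdsWithin] with t ht
  exact hFf _ ((add_right_injective c).comp ((mul_right_injective₀ ht).comp hv))

theorem eventually_forall_mem_of_forall_eq {p : K → Prop} {c : K} (hp : ∀ᶠ x in 𝓝 c, p x)
    {s : Finset ι} {a : ι → K} (ha : ∀ i ∈ s, a i = c) : ∀ᶠ v in 𝓝 a, ∀ i ∈ s, p (v i) :=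
  (Finset.eventually_all s).2 fun i hi ↦
    ((continuous_apply i).tendsto' a c (ha i hi)).eventually hp

variable [DecidableEq ι]

theorem eventually_dividedDifference_add_mul_eq {f g : K → E} {c : K} (hfg : f =ᶠ[𝓝 c] g)
    (s : Finset ι) (v : ι → K) : ∀ᶠ t in 𝓝 0,
      dividedDifference f s (fun i ↦ c + t * v i) =
        dividedDifference g s fun i ↦ c + t * v i := by
  have hlim : Tendsto (fun t i ↦ c + t * v i) (𝓝 0) (𝓝 fun _ ↦ c) :=
    Continuous.tendsto' (by fun_prop) 0 _ (by simp)
  filter_upwards [hlim.eventually (eventually_forall_mem_of_forall_eq hfg (s := s) fun _ _ ↦ rfl)]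
    with t ht
  exact dividedDifference_congr ht

/-- The divided difference of `f` with nodes indexed by `s` converges as all these nodes coalesce
at `c`. Nodes are indexed by a subset of a fixed type `ι`, so that nodes can be removed without
reindexing; the coordinates of `a` outside `s` are irrelevant. -/
def HasConfluentLimit (f : K → E) (s : Finset ι) (c : K) : Prop :=
  ∀ a : ι → K, (∀ i ∈ s, a i = c) →
    ∃ L, Tendsto (dividedDifference f s) (𝓝[{v | Set.InjOn v s}] a) (𝓝 L)

theorem exists_tendsto_dividedDifference {f : K → E} {s : Finset ι}
    (h : ∀ t ⊆ s, ∀ c, HasConfluentLimit f t c) (a : ι → K) :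
    ∃ L, Tendsto (dividedDifference f s) (𝓝[{v | Set.InjOn v s}] a) (𝓝 L) := by
  induction s using Finset.strongInduction with | H s ih
  by_cases hconst : ∃ c, ∀ i ∈ s, a i = c
  · obtain ⟨c, hc⟩ := hconst
    exact h s subset_rfl c a hc
  obtain ⟨i, hi, j, hj, haij⟩ : ∃ i ∈ s, ∃ j ∈ s, a i ≠ a j := by
    by_contra! heq
    obtain rfl | ⟨i, hi⟩ := s.eq_empty_or_nonempty
    · exact hconst ⟨0, by simp⟩
    · exact hconst ⟨a i, fun j hj ↦ heq j hj i hi⟩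
  have hlim_erase : ∀ k ∈ s, ∃ L, Tendsto (dividedDifference f (s.erase k))
      (𝓝[{v | Set.InjOn v s}] a) (𝓝 L) := fun k hk ↦ by
    obtain ⟨L, hL⟩ := ih _ (Finset.erase_ssubset hk)
      fun t ht ↦ h t (ht.trans (Finset.erase_subset k s))
    exact ⟨L, hL.mono_left (nhdsWithin_mono a fun v hv ↦ hv.mono (Finset.erase_subset k s))⟩
  obtain ⟨Li, hLi⟩ := hlim_erase i hi
  obtain ⟨Lj, hLj⟩ := hlim_erase j hj
  have hlim_sub : Tendsto (fun v : ι → K ↦ v i - v j) (𝓝[{v | Set.InjOn v s}] a)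
      (𝓝 (a i - a j)) :=
    (Continuous.tendsto (by fun_prop) a).mono_left nhdsWithin_le_nhds
  refine ⟨_, ((hlim_sub.inv₀ (sub_ne_zero.2 haij)).smul (hLj.sub hLi)).congr' ?_⟩
  filter_upwards [self_mem_nhdsWithin] with v hv
  exact (dividedDifference_eq_inv_smul_sub f hv hi hj fun hij ↦ haij (hij ▸ rfl)).symm

theorem hasConfluentLimit_of_eventuallyEq_const {f : K → E} {c : K} {w : E}
    (hf : f =ᶠ[𝓝 c] fun _ ↦ w) (s : Finset ι) : HasConfluentLimit f s c := by
  refine fun a ha ↦ ⟨if s.card = 1 then w else 0, tendsto_const_nhds.congr' ?_⟩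
  filter_upwards [self_mem_nhdsWithin,
    nhdsWithin_le_nhds (eventually_forall_mem_of_forall_eq hf ha)] with v hv hfv
  rw [dividedDifference_congr (g := fun _ ↦ w) hfv, dividedDifference_const w hv]

theorem dense_setOf_injective {K ι : Type*} [NontriviallyNormedField K] [Finite ι] :
    Dense {v : ι → K | Function.Injective v} := by
  intro v
  have : Infinite K := NontriviallyNormedField.infinite K
  let e : ι ↪ K :=
    ((Finite.equivFin ι).toEmbedding.trans Fin.valEmbedding).trans (Infinite.natEmbedding K)
  have hlim : Tendsto (fun t : K ↦ v + t • e) (𝓝[≠] 0) (𝓝 v) :=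
    (Continuous.tendsto' (by fun_prop) 0 v (by simp)).mono_left nhdsWithin_le_nhds
  refine mem_closure_of_tendsto hlim (nhdsNE_le_cofinite 0 ?_)
  have hne (i j : ι) : ∀ᶠ t : K in cofinite, v i + t * e i = v j + t * e j → i = j := by
    by_cases hij : i = j
    · exact .of_forall fun _ _ ↦ hij
    filter_upwards [eventually_cofinite_ne ((v j - v i) / (e i - e j))] with t ht heq
    refine absurd ?_ ht
    rw [eq_div_iff (sub_ne_zero.2 (e.injective.ne hij))]
    linear_combination heq
  filter_upwards [eventually_all.2 fun i ↦ eventually_all.2 (hne i)] with t ht i j heq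
  exact ht i j heq

theorem strictlyDifferentiable_of_hasConfluentLimit {K : Type*} [NontriviallyNormedField K]
    [NormedSpace K E] {r : ℕ} {f : K → E}
    (h : ∀ (s : Finset (Fin (r + 1))) (c : K), HasConfluentLimit f s c) :
    StrictlyDifferentiable r f := by
  have hlim (a : Fin (r + 1) → K) : ∃ L, Tendsto (dividedDifference f Finset.univ)
      (𝓝[{v | Function.Injective v}] a) (𝓝 L) := by
    simpa only [Finset.coe_univ, Set.injOn_univ] using
      exists_tendsto_dividedDifference (s := Finset.univ) (fun t _ ↦ h t) a
  refine ⟨extendFrom {v | Function.Injective v} (dividedDifference f Finset.univ),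
    continuous_extendFrom dense_setOf_injective hlim, fun x hx ↦ ?_⟩
  obtain ⟨L, hL⟩ := hlim x
  rw [extendFrom_eq (dense_setOf_injective x) hL]
  exact tendsto_nhds_unique (tendsto_pure_nhds _ x) (hL.mono_left (pure_le_nhdsWithin hx)) |>.symm

end StrictDifferentiability

section Radial

theorem norm_sub_eq_left_of_norm_lt {G : Type*} [SeminormedAddCommGroup G] [IsUltrametricDist G]
    {x y : G} (h : ‖y‖ < ‖x‖) : ‖x - y‖ = ‖x‖ := by
  have hne : ‖x‖ ≠ ‖-y‖ := by rw [norm_neg]; exact h.ne'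
  rw [sub_eq_add_neg, IsUltrametricDist.norm_add_eq_max_of_norm_ne_norm hne, norm_neg,
    max_eq_left h.le]

theorem eventually_norm_sub_eq {G : Type*} [NormedAddCommGroup G] [IsUltrametricDist G]
    {a c : G} (hac : a ≠ c) : ∀ᶠ x in 𝓝 a, ‖x - c‖ = ‖a - c‖ := by
  filter_upwards [Metric.ball_mem_nhds a (norm_pos_iff.2 (sub_ne_zero.2 hac))] with x hx
  rw [mem_ball_iff_norm'] at hx
  rw [← norm_sub_eq_left_of_norm_lt hx, sub_sub_sub_cancel_left, norm_sub_rev]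

variable {K E ι : Type*} [NormedField K] [NormedAddCommGroup E] [NormedSpace K E]
  [DecidableEq ι] {h : ℝ → E} {C : ℝ} {N : ℕ} {c : K} {s : Finset ι} {v : ι → K}

theorem norm_dividedDifference_le_div [IsUltrametricDist E] {f : K → E} (hv : Set.InjOn v s)
    {i j : ι} (hi : i ∈ s) (hj : j ∈ s) (hij : i ≠ j) {B : ℝ}
    (hB : ∀ k ∈ s, ‖dividedDifference f (s.erase k) v‖ ≤ B) :
    ‖dividedDifference f s v‖ ≤ B / ‖v i - v j‖ := by
  rw [dividedDifference_eq_inv_smul_sub f hv hi hj hij, norm_smul, norm_inv, ← div_eq_inv_mul]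
  gcongr
  rw [sub_eq_add_neg]
  refine (IsUltrametricDist.norm_add_le_max _ _).trans (max_le (hB j hj) ?_)
  rw [norm_neg]
  exact hB i hi

theorem norm_dividedDifference_radial_le_of_norm_eq (hh : ∀ x : K, ‖h ‖x‖‖ ≤ C * ‖x‖ ^ N)
    (hv : Set.InjOn v s) {y : K} (heq : ∀ i ∈ s, ‖v i - c‖ = ‖y‖) :
    ‖dividedDifference (fun x ↦ h ‖x - c‖) s v‖ ≤ C * ‖y‖ ^ (N + 1 - s.card) := by
  have hC : 0 ≤ C := (norm_nonneg _).trans (by simpa using hh 1)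
  rw [dividedDifference_congr (f := fun x ↦ h ‖x - c‖) (g := fun _ ↦ h ‖y‖)
      fun i hi ↦ congrArg h (heq i hi), dividedDifference_const _ hv]
  split_ifs with hs
  · rw [hs]
    exact hh y
  · rw [norm_zero]
    positivity

theorem norm_dividedDifference_radial_le [IsUltrametricDist K] [IsUltrametricDist E]
    (hh : ∀ x : K, ‖h ‖x‖‖ ≤ C * ‖x‖ ^ N) (hv : Set.InjOn v s) (hs : s.card ≤ N + 1) {ρ : ℝ}
    (hρ₀ : 0 ≤ ρ) (hρ : ∀ i ∈ s, ‖v i - c‖ ≤ ρ) :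
    ‖dividedDifference (fun x ↦ h ‖x - c‖) s v‖ ≤ C * ρ ^ (N + 1 - s.card) := by
  have hC : 0 ≤ C := (norm_nonneg _).trans (by simpa using hh 1)
  induction s using Finset.strongInduction generalizing ρ with | H s ih
  obtain rfl | hne := s.eq_empty_or_nonempty
  · simpa [dividedDifference] using by positivity
  obtain ⟨m, hm, hmax⟩ := s.exists_max_image (fun i ↦ ‖v i - c‖) hne
  suffices ‖dividedDifference (fun x ↦ h ‖x - c‖) s v‖ ≤ C * ‖v m - c‖ ^ (N + 1 - s.card) by
    refine this.trans ?_
    gcongr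
    exact hρ m hm
  by_cases hfar : ∃ i ∈ s, i ≠ m ∧ ‖v m - c‖ ≤ ‖v i - v m‖
  · obtain ⟨i, hi, him, hle⟩ := hfar
    have hpos : 0 < ‖v i - v m‖ := norm_pos_iff.2 (sub_ne_zero.2 (hv.ne hi hm him))
    have herase : ∀ k ∈ s, ‖dividedDifference (fun x ↦ h ‖x - c‖) (s.erase k) v‖ ≤
        C * ‖v m - c‖ ^ (N + 1 - s.card + 1) := fun k hk ↦ by
      have hcard := Finset.card_erase_add_one hk
      have hexp : N + 1 - s.card + 1 = N + 1 - (s.erase k).card := by omega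
      rw [hexp]
      exact ih _ (Finset.erase_ssubset hk) (hv.mono (Finset.erase_subset k s)) (by omega)
        (norm_nonneg _) fun j hj ↦ hmax j (Finset.mem_of_mem_erase hj)
    refine (norm_dividedDifference_le_div hv hi hm him herase).trans ?_
    rw [div_le_iff₀ hpos, pow_succ, ← mul_assoc]
    gcongr
  · push Not at hfar
    refine norm_dividedDifference_radial_le_of_norm_eq hh hv fun i hi ↦ ?_
    obtain rfl | him := eq_or_ne i m
    · rfl
    have hlt : ‖v m - v i‖ < ‖v m - c‖ := norm_sub_rev (v i) (v m) ▸ hfar i hi him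
    rw [← norm_sub_eq_left_of_norm_lt hlt, sub_sub_sub_cancel_left, norm_sub_rev]

theorem hasConfluentLimit_of_eventuallyEq_radial [IsUltrametricDist K] [IsUltrametricDist E]
    (hh : ∀ x : K, ‖h ‖x‖‖ ≤ C * ‖x‖ ^ N) {f : K → E} (hf : f =ᶠ[𝓝 c] fun x ↦ h ‖x - c‖)
    (hs : s.card ≤ N) : HasConfluentLimit f s c := by
  refine fun a ha ↦ ⟨0, squeeze_zero_norm'
    (a := fun v ↦ C * (∑ i ∈ s, ‖v i - c‖) ^ (N + 1 - s.card)) ?_ ?_⟩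
  · filter_upwards [self_mem_nhdsWithin,
      nhdsWithin_le_nhds (eventually_forall_mem_of_forall_eq hf ha)] with v hv hfv
    rw [dividedDifference_congr (g := fun x ↦ h ‖x - c‖) hfv]
    exact norm_dividedDifference_radial_le hh hv (by omega) (by positivity) fun i hi ↦
      Finset.single_le_sum (f := fun i ↦ ‖v i - c‖) (fun _ _ ↦ norm_nonneg _) hi
  · refine (Continuous.tendsto' (by fun_prop) a 0 ?_).mono_left nhdsWithin_le_nhds
    have hzero : ∑ i ∈ s, ‖a i - c‖ = 0 :=
      Finset.sum_eq_zero fun i hi ↦ by rw [ha i hi, sub_self, norm_zero]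
    rw [hzero, zero_pow (by omega), mul_zero]

theorem norm_nodalWeight_of_norm_lt [IsUltrametricDist K] {i : ι}
    (hlt : ∀ j ∈ s.erase i, ‖v j - c‖ < ‖v i - c‖) :
    ‖Lagrange.nodalWeight s v i‖ = (‖v i - c‖ ^ (s.erase i).card)⁻¹ := by
  rw [Lagrange.nodalWeight, norm_prod, ← inv_pow, ← Finset.prod_const]
  refine Finset.prod_congr rfl fun j hj ↦ ?_
  rw [norm_inv, ← norm_sub_eq_left_of_norm_lt (hlt j hj), sub_sub_sub_cancel_right]

theorem norm_dividedDifference_radial_eq [IsUltrametricDist K] [IsUltrametricDist E] (hC : 0 < C)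
    (hN : N ≠ 0) (hh : ∀ x : K, ‖h ‖x‖‖ = C * ‖x‖ ^ N) (hv : Set.InjOn v s)
    (hs : s.card = N + 1) {i : ι} (hi : i ∈ s) {δ : ℝ} (hδ : δ < ‖v i - c‖)
    (heq : ∀ j ∈ s.erase i, ‖v j - c‖ = δ) :
    ‖dividedDifference (fun x ↦ h ‖x - c‖) s v‖ = C := by
  have hcard : (s.erase i).card = N := by rw [Finset.card_erase_of_mem hi, hs, Nat.add_sub_cancel]
  obtain ⟨j, hj⟩ : (s.erase i).Nonempty := Finset.card_pos.1 (by omega)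
  have hδ₀ : 0 ≤ δ := heq j hj ▸ norm_nonneg _
  have hpow : ‖v i - c‖ ^ N ≠ 0 := pow_ne_zero N (hδ₀.trans_lt hδ).ne'
  have hlt : ‖h δ‖ < ‖h ‖v i - c‖‖ := by
    rw [← heq j hj, hh, hh, heq j hj]
    gcongr
  rw [dividedDifference_eq_nodalWeight_smul_sub hv (by omega) hi
      fun k hk ↦ congrArg h (heq k hk), norm_smul, norm_sub_eq_left_of_norm_lt hlt, hh,
    norm_nodalWeight_of_norm_lt fun k hk ↦ heq k hk ▸ hδ, hcard]
  field_simp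

end Radial

section Counterexample

theorem exists_injective_norm_eq_one (K : Type*) [NontriviallyNormedField K] [IsUltrametricDist K] :
    ∃ u : ℕ → K, Function.Injective u ∧ ∀ n, ‖u n‖ = 1 := by
  obtain ⟨π, hπ₀, hπ₁⟩ := NormedField.exists_norm_lt_one K
  have hlt (n : ℕ) : ‖π ^ (n + 1)‖ < ‖(1 : K)‖ := by
    rw [norm_pow, norm_one]
    exact pow_lt_one₀ (norm_nonneg π) hπ₁ n.succ_ne_zero
  refine ⟨fun n ↦ 1 - π ^ (n + 1), fun m n hmn ↦ ?_, fun n ↦ ?_⟩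
  · have hnorm := congrArg norm (sub_right_injective hmn)
    rw [norm_pow, norm_pow] at hnorm
    exact Nat.succ_injective ((pow_right_strictAnti₀ hπ₀ hπ₁).injective hnorm)
  · rw [norm_sub_eq_left_of_norm_lt (hlt n), norm_one]

theorem exists_injective_cons_norm (K : Type*) [NontriviallyNormedField K] [IsUltrametricDist K]
    (N : ℕ) : ∃ v : Fin (N + 1) → K, Function.Injective v ∧ ‖v 0‖ = 1 ∧
      ∃ δ < 1, ∀ i ≠ 0, ‖v i‖ = δ := by
  obtain ⟨u, hu, hu₁⟩ := exists_injective_norm_eq_one K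
  obtain ⟨π, hπ₀, hπ₁⟩ := NormedField.exists_norm_lt_one K
  have hnorm (i : ℕ) : ‖π * u i‖ = ‖π‖ := by rw [norm_mul, hu₁, mul_one]
  refine ⟨Fin.cons 1 fun i : Fin N ↦ π * u i, Fin.cons_injective_iff.2 ⟨?_, ?_⟩, norm_one,
    ‖π‖, hπ₁, fun i hi ↦ ?_⟩
  · rintro ⟨i, hi⟩
    exact hπ₁.ne ((hnorm i).symm.trans (congrArg norm hi |>.trans norm_one))
  · exact (mul_right_injective₀ (norm_pos_iff.1 hπ₀)).comp (hu.comp Fin.val_injective)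
  · obtain ⟨j, rfl⟩ := Fin.exists_succ_eq.2 hi
    exact hnorm j

variable {K E : Type*} [NontriviallyNormedField K] [IsUltrametricDist K] [NormedAddCommGroup E]
  [NormedSpace K E] [IsUltrametricDist E]

theorem not_strictlyDifferentiable_of_eventuallyEq_radial {h : ℝ → E} {C : ℝ} {N : ℕ} (hC : 0 < C)
    (hN : N ≠ 0) (hh : ∀ x : K, ‖h ‖x‖‖ = C * ‖x‖ ^ N) {f : K → E} {c : K}
    (hf : f =ᶠ[𝓝 c] fun x ↦ h ‖x - c‖) : ¬ StrictlyDifferentiable N f := by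
  intro hdiff
  obtain ⟨L, hL⟩ := hdiff.exists_tendsto_add_mul c
  have hinj {v : Fin (N + 1) → K} (hv : Function.Injective v) {t : K} (ht : t ≠ 0) :
      Set.InjOn (fun i ↦ c + t * v i) (Finset.univ : Finset (Fin (N + 1))) :=
    ((add_right_injective c).comp ((mul_right_injective₀ ht).comp hv)).injOn
  have hL_zero : L = 0 := by
    obtain ⟨u, hu, hu₁⟩ := exists_injective_norm_eq_one K
    have hu_fin : Function.Injective fun i : Fin (N + 1) ↦ u i := hu.comp Fin.val_injective
    refine tendsto_nhds_unique ((hL _ hu_fin).congr' ?_) tendsto_const_nhds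
    filter_upwards [self_mem_nhdsWithin, nhdsWithin_le_nhds
      (eventually_dividedDifference_add_mul_eq hf Finset.univ fun i : Fin (N + 1) ↦ u i)]
      with t ht hft
    rw [hft, dividedDifference_congr (g := fun _ ↦ h ‖t‖) (by simp [hu₁]),
      dividedDifference_const _ (hinj hu_fin ht), if_neg (by simpa using hN)]
  have hL_norm : ‖L‖ = C := by
    obtain ⟨v, hv, hv₀, δ, hδ, hvδ⟩ := exists_injective_cons_norm K N
    refine tendsto_nhds_unique ((hL v hv).norm.congr' ?_) tendsto_const_nhds
    filter_upwards [self_mem_nhdsWithin, nhdsWithin_le_nhds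
      (eventually_dividedDifference_add_mul_eq hf Finset.univ v)] with t ht hft
    have hnorm (i : Fin (N + 1)) : ‖c + t * v i - c‖ = ‖t‖ * ‖v i‖ := by
      rw [add_sub_cancel_left, norm_mul]
    rw [hft]
    refine norm_dividedDifference_radial_eq (δ := ‖t‖ * δ) hC hN hh (hinj hv ht) (by simp)
      (Finset.mem_univ 0) ?_ fun i hi ↦ ?_
    · rw [hnorm, hv₀]
      exact mul_lt_mul_of_pos_left hδ (norm_pos_iff.2 ht)
    · rw [hnorm, hvδ i (Finset.ne_of_mem_erase hi)]
  exact hC.ne (by rw [← hL_norm, hL_zero, norm_zero])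

end Counterexample

section Patching

theorem exists_norm_radial_eq_pow (K : Type*) [NormedField K] (N : ℕ) :
    ∃ h : ℝ → K, ∀ x : K, ‖h ‖x‖‖ = ‖x‖ ^ N :=
  ⟨fun t ↦ Function.invFun norm t ^ N, fun x ↦ by
    rw [norm_pow, Function.invFun_eq (f := (norm : K → ℝ)) ⟨x, rfl⟩]⟩

variable {K E α : Type*} [NormedField K] [NormedAddCommGroup E] [NormedSpace K E]

/-- The function which on the fibre of `idx` over `n` is the radial function `h ‖x - c n‖` around
`c n`, scaled by `τ n`. It is linear in `τ`, so its range is a candidate for a large subspace. -/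
noncomputable def radialPatching (h : ℝ → K) (idx : K → α) (c : α → K) :
    (α → E) →ₗ[K] (K → E) :=
  LinearMap.pi fun x ↦ h ‖x - c (idx x)‖ • LinearMap.proj (idx x)

variable {h : ℝ → K} {idx : K → α} {c : α → K} {N : ℕ}

theorem radialPatching_eventuallyEq (hidx : IsLocallyConstant idx) (τ : α → E) (a : K) :
    radialPatching h idx c τ =ᶠ[𝓝 a] fun x ↦ h ‖x - c (idx a)‖ • τ (idx a) := by
  filter_upwards [hidx.eventually_eq a] with x hx
  simp [radialPatching, hx]

theorem norm_smul_radial_eq (hh : ∀ x : K, ‖h ‖x‖‖ = ‖x‖ ^ N) (w : E) (x : K) :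
    ‖h ‖x‖ • w‖ = ‖w‖ * ‖x‖ ^ N := by
  rw [norm_smul, hh, mul_comm]

end Patching

section Lineability

theorem exists_isLocallyConstant_surjective (K : Type*) [NontriviallyNormedField K]
    [IsUltrametricDist K] : ∃ f : K → ℕ, IsLocallyConstant f ∧ Function.Surjective f := by
  obtain ⟨ϖ, hϖ⟩ := NormedField.exists_one_lt_norm K
  have hloc : IsLocallyConstant fun x : K ↦ max ‖x‖ 1 := by
    refine (IsLocallyConstant.iff_eventually_eq _).2 fun x ↦ ?_
    obtain hx | hx := eq_or_ne x 0
    · filter_upwards [Metric.ball_mem_nhds x one_pos] with y hy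
      rw [hx, mem_ball_zero_iff] at hy
      rw [hx, norm_zero, max_eq_right hy.le, max_eq_right zero_le_one]
    · filter_upwards [eventually_norm_sub_eq hx] with y hy
      rw [sub_zero, sub_zero] at hy
      rw [hy]
  refine ⟨_, hloc.comp (Function.invFun fun n : ℕ ↦ ‖ϖ‖ ^ n), fun n ↦ ⟨ϖ ^ n, ?_⟩⟩
  rw [Function.comp_apply, norm_pow, max_eq_left (one_le_pow₀ hϖ.le)]
  exact Function.leftInverse_invFun (pow_right_strictMono₀ hϖ).injective n

variable {K E α : Type*} [NontriviallyNormedField K] [IsUltrametricDist K] [NormedAddCommGroup E]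
  [NormedSpace K E] [IsUltrametricDist E]
variable {h : ℝ → K} {idx : K → α} {c : α → K} {N : ℕ}

theorem strictlyDifferentiable_radialPatching {r : ℕ} (hh : ∀ x : K, ‖h ‖x‖‖ = ‖x‖ ^ (r + 1))
    (hidx : IsLocallyConstant idx) (τ : α → E) :
    StrictlyDifferentiable r (radialPatching h idx c τ) := by
  refine strictlyDifferentiable_of_hasConfluentLimit fun s a ↦ ?_
  have hlocal := radialPatching_eventuallyEq (h := h) (c := c) hidx τ a
  obtain hac | hac := eq_or_ne a (c (idx a))
  · rw [← hac] at hlocal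
    exact hasConfluentLimit_of_eventuallyEq_radial (h := fun t ↦ h t • τ (idx a))
      (fun x ↦ (norm_smul_radial_eq hh _ x).le) hlocal (by simpa using s.card_le_univ)
  · refine hasConfluentLimit_of_eventuallyEq_const (w := h ‖a - c (idx a)‖ • τ (idx a)) ?_ s
    filter_upwards [hlocal, eventually_norm_sub_eq hac] with x hx hnorm
    rw [hx, hnorm]

theorem not_strictlyDifferentiable_radialPatching (hN : N ≠ 0) (hh : ∀ x : K, ‖h ‖x‖‖ = ‖x‖ ^ N)
    (hidx : IsLocallyConstant idx) (hc : Function.RightInverse c idx) {τ : α → E} (hτ : τ ≠ 0) :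
    ¬ StrictlyDifferentiable N (radialPatching h idx c τ) := by
  obtain ⟨n, hn⟩ := Function.ne_iff.1 hτ
  have hlocal := radialPatching_eventuallyEq (h := h) (c := c) hidx τ (c n)
  rw [hc n] at hlocal
  exact not_strictlyDifferentiable_of_eventuallyEq_radial (h := fun t ↦ h t • τ n)
    (norm_pos_iff.2 hn) hN (norm_smul_radial_eq hh _) hlocal

end Lineability

theorem stmt_1_general (K : Type*) [NontriviallyNormedField K] [IsUltrametricDist K] (r : ℕ) :
    ∃ M : Submodule K (K → K), Module.rank K M = Cardinal.mk (ℕ → K) ∧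
      ∀ f ∈ (M : Set (K → K)), f ≠ 0 →
        StrictlyDifferentiable r f ∧ ¬ StrictlyDifferentiable (r + 1) f := by
  obtain ⟨idx, hidx, hsurj⟩ := exists_isLocallyConstant_surjective K
  obtain ⟨h, hh⟩ := exists_norm_radial_eq_pow K (r + 1)
  let T : (ℕ → K) →ₗ[K] (K → K) := radialPatching h idx (Function.surjInv hsurj)
  have hnot {τ : ℕ → K} (hτ : τ ≠ 0) : ¬ StrictlyDifferentiable (r + 1) (T τ) :=
    not_strictlyDifferentiable_radialPatching r.succ_ne_zero hh hidx
      (Function.rightInverse_surjInv hsurj) hτ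
  have hT : Function.Injective T := (injective_iff_map_eq_zero T).2 fun τ hτ ↦ by
    by_contra hne
    exact hnot hne (hτ ▸ strictlyDifferentiable_zero (r + 1))
  refine ⟨LinearMap.range T, ?_, ?_⟩
  · rw [← (LinearEquiv.ofInjective T hT).rank_eq, rank_fun_infinite]
  · rintro _ ⟨τ, rfl⟩ hτ
    exact ⟨strictlyDifferentiable_radialPatching hh hidx τ, hnot fun h ↦ hτ (by rw [h, map_zero])⟩

section Padic

variable {p : ℕ} [Fact p.Prime] {r : ℕ}

theorem diffQuotient_eq_dividedDifference (f : ℚ_[p] → ℚ_[p]) {x : Fin (r + 1) → ℚ_[p]}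
    (hx : Function.Injective x) : diffQuotient p r f x = dividedDifference f Finset.univ x := by
  induction r with
  | zero => simp [diffQuotient, dividedDifference, Lagrange.nodalWeight]
  | succ r ih =>
    have herase (j : Fin (r + 2)) : diffQuotient p r f (fun i ↦ x (j.succAbove i)) =
        dividedDifference f (Finset.univ.erase j) x := by
      have huniv : Finset.univ.erase j = Finset.univ.map j.succAboveEmb := by
        ext; simp
      rw [huniv, dividedDifference_map]
      exact ih (hx.comp Fin.succAbove_right_injective)
    rw [diffQuotient, herase, herase, dividedDifference_eq_inv_smul_sub f hx.injOn
      (Finset.mem_univ 0) (Finset.mem_univ 1) zero_ne_one, smul_eq_mul, div_eq_inv_mul]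

theorem strictlyDifferentiable_iff_diffQuotient {f : ℚ_[p] → ℚ_[p]} :
    StrictlyDifferentiable r f ↔ ∃ F : (Fin (r + 1) → ℚ_[p]) → ℚ_[p], Continuous F ∧
      ∀ x : Fin (r + 1) → ℚ_[p], Function.Injective x → F x = diffQuotient p r f x := by
  refine exists_congr fun F ↦ and_congr_right fun _ ↦ forall₂_congr fun x hx ↦ ?_
  rw [diffQuotient_eq_dividedDifference f hx]

theorem cardinal_mk_padic : Cardinal.mk ℚ_[p] = Cardinal.continuum := by
  refine le_antisymm ?_ (continuum_le_cardinal_of_nontriviallyNormedField ℚ_[p])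
  calc Cardinal.mk ℚ_[p] ≤ Cardinal.mk (PadicSeq p) := Cardinal.mk_quotient_le
    _ ≤ Cardinal.mk (ℕ → ℚ) := Cardinal.mk_subtype_le _
    _ = Cardinal.continuum := by simp

end Padic

/-- For `r ≥ 1`, the set of functions `ℚ_[p] → ℚ_[p]` that are strictly
differentiable of order `r` but not of order `r+1` on `ℚ_[p]` is `𝔠`-lineable. -/
theorem stmt_1 (p : ℕ) [Fact p.Prime] (r : ℕ) (hr : 1 ≤ r) :
    ∃ M : Submodule ℚ_[p] (ℚ_[p] → ℚ_[p]),
      Module.rank ℚ_[p] M = Cardinal.continuum ∧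
      ∀ f ∈ (M : Set (ℚ_[p] → ℚ_[p])), f ≠ 0 →
        (∃ F : (Fin (r + 1) → ℚ_[p]) → ℚ_[p], Continuous F ∧
            ∀ x : Fin (r + 1) → ℚ_[p], Function.Injective x →
              F x = diffQuotient p r f x) ∧
        ¬ (∃ G : (Fin (r + 2) → ℚ_[p]) → ℚ_[p], Continuous G ∧
            ∀ x : Fin (r + 2) → ℚ_[p], Function.Injective x →
              G x = diffQuotient p (r + 1) f x) := by
  obtain ⟨M, hrank, hM⟩ := stmt_1_general ℚ_[p] r
  exact ⟨M, by simpa [cardinal_mk_padic] using hrank, by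
    simpa only [strictlyDifferentiable_iff_diffQuotient] using hM⟩
end

section
/- Let p be a prime. The set A of all functions f : ℚ_p → ℚ_p such that f is differentiable at every point of ℚ_p and the derivative function x ↦ deriv f x is unbounded (for every C > 0 there exists x ∈ ℚ_p with ‖deriv f x‖ > C) is strongly 𝔠-algebrable in the commutative ℚ_p-algebra of all functions ℚ_p → ℚ_p under pointwise operations: there exists a set B of functions ℚ_p → ℚ_p with cardinality 𝔠 (the continuum) such that for every n ≥ 1, every injective map e : Fin n → B, and every polynomial P ∈ MvPolynomial (Fin n) ℚ_p with P ≠ 0 and constant coefficient 0, the function obtained by evaluating P at the functions e(0), …, e(n−1) (pointwise) belongs to A. -/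
/-!
Let `K` be an ultrametric field of characteristic zero and fix `a` with `1 < ‖a‖`. A function
`x ↦ c k * x ^ 2`, where `k` is the index of the shell `‖a‖ ^ k ≤ ‖x‖ < ‖a‖ ^ (k + 1)` containing
`x` (and `k = 0` if `‖x‖ < 1`), is differentiable because `k` is locally constant in `x`. Choose `𝔠`
many coefficient sequences `c` that are independent: any finitely many of them take any prescribed
values `v` simultaneously at infinitely many `k`. On each of these shells a polynomial expression
`P` in the corresponding functions is the one-variable polynomial `P (v * X ^ 2)`. If `P v ≠ 0` and
`P 0 = 0`, this has a nonconstant derivative, which tends to infinity along the points `a ^ k`.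
-/

open Filter Function Polynomial Topology
open scoped Cardinal

section Independent

theorem eventually_injective_restrict_fin {ι α : Type*} [Finite ι] {b : ι → ℕ → α}
    (hb : Injective b) : ∀ᶠ N in atTop, Injective fun i (m : Fin N) ↦ b i m := by
  suffices ∀ i j, ∀ᶠ N in atTop, ((fun m : Fin N ↦ b i m) = fun m : Fin N ↦ b j m) → i = j by
    simpa only [Injective, eventually_all] using this
  intro i j
  by_cases hij : i = j
  · exact Eventually.of_forall fun _ _ ↦ hij
  obtain ⟨m, hm⟩ := ne_iff.1 (hb.ne hij)
  filter_upwards [eventually_gt_atTop m] with N hN h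
  exact absurd (congrFun h ⟨m, hN⟩) hm

variable {β : Type*} [Countable β] [Nonempty β]

variable (β) in
/-- An enumeration of all pairs consisting of a length `N` and a `β`-valued function of the first
`N` terms of a binary sequence. -/
noncomputable def cylinderFunEnum : ℕ → Σ N : ℕ, (Fin N → Bool) → β :=
  (exists_surjective_nat _).choose

theorem cylinderFunEnum_surjective : Surjective (cylinderFunEnum β) :=
  (exists_surjective_nat _).choose_spec

/-- An independent family of sequences in `β`, indexed by the Cantor space: the `k`-th term of the
sequence of index `b` is the value at `b` of the `k`-th function depending on a finite initial
segment. -/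
noncomputable def independentSeq (b : ℕ → Bool) (k : ℕ) : β :=
  (cylinderFunEnum β k).2 fun m ↦ b m

theorem frequently_independentSeq_eq {ι : Type*} [Finite ι] {b : ι → ℕ → Bool}
    (hb : Injective b) (v : ι → β) : ∃ᶠ k in atTop, ∀ i, independentSeq (b i) k = v i := by
  have separating : {N | Injective fun i (m : Fin N) ↦ b i m}.Infinite :=
    Nat.frequently_atTop_iff_infinite.1 (eventually_injective_restrict_fin hb).frequently
  refine Nat.frequently_atTop_iff_infinite.2 (.of_image (fun k ↦ (cylinderFunEnum β k).1)
    (separating.mono fun N hN ↦ ?_))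
  obtain ⟨k, hk⟩ := cylinderFunEnum_surjective
    ⟨N, extend (fun i (m : Fin N) ↦ b i m) v fun _ ↦ Classical.arbitrary β⟩
  refine ⟨k, fun i ↦ ?_, congrArg Sigma.fst hk⟩
  rw [independentSeq, hk]
  exact hN.extend_apply v (fun _ ↦ Classical.arbitrary β) i

theorem independentSeq_injective {γ : Type*} [Countable γ] [Nontrivial γ] :
    Injective (independentSeq : (ℕ → Bool) → ℕ → γ) := by
  intro b₀ b₁ h
  by_contra hne
  obtain ⟨x, y, hxy⟩ := exists_pair_ne γ
  have hb : Injective ![b₀, b₁] := by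
    simpa [Injective, Fin.forall_fin_two, eq_comm] using hne
  obtain ⟨k, hk⟩ := (frequently_independentSeq_eq hb ![x, y]).exists
  exact hxy ((hk 0).symm.trans ((congrFun h k).trans (hk 1)))

end Independent

section LineRestriction

variable {σ R : Type*}

/-- The restriction `P (v * X)` of a multivariate polynomial `P` to the line through the origin in
the direction `v`. -/
noncomputable def lineRestriction [CommSemiring R] (P : MvPolynomial σ R) (v : σ → R) : R[X] :=
  MvPolynomial.aeval (fun i ↦ C (v i) * X) P

theorem eval_lineRestriction [CommSemiring R] (P : MvPolynomial σ R) (v : σ → R) (t : R) :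
    (lineRestriction P v).eval t = MvPolynomial.eval (fun i ↦ v i * t) P := by
  rw [lineRestriction, ← coe_aeval_eq_eval, ← AlgHom.comp_apply, MvPolynomial.comp_aeval]
  simp [MvPolynomial.aeval_eq_eval]

theorem natDegree_lineRestriction_ne_zero [CommSemiring R] {P : MvPolynomial σ R} {v : σ → R}
    (hP : MvPolynomial.coeff 0 P = 0) (hv : MvPolynomial.eval v P ≠ 0) :
    (lineRestriction P v).natDegree ≠ 0 := by
  intro hdeg
  obtain ⟨c, hc⟩ := natDegree_eq_zero.1 hdeg
  have eval_zero : MvPolynomial.eval (0 : σ → R) P = 0 := by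
    rw [MvPolynomial.eval_zero, MvPolynomial.constantCoeff_eq, hP]
  have at_zero := eval_lineRestriction P v 0
  have at_one := eval_lineRestriction P v 1
  simp only [← hc, eval_C, mul_zero, mul_one] at at_zero at_one
  exact hv (at_one.symm.trans (at_zero.trans eval_zero))

theorem degree_derivative_expand_pos [CommSemiring R] [IsAddTorsionFree R] {q : R[X]} {m : ℕ}
    (hm : 1 < m) (hq : q.natDegree ≠ 0) : 0 < (derivative (expand R m q)).degree := by
  rw [← natDegree_pos_iff_degree_pos, natDegree_derivative, natDegree_expand]
  have : 1 * m ≤ q.natDegree * m := Nat.mul_le_mul_right m (Nat.one_le_iff_ne_zero.2 hq)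
  omega

theorem exists_eval_natCast_ne_zero [CommRing R] [IsDomain R] [CharZero R]
    {P : MvPolynomial σ R} (hP : P ≠ 0) :
    ∃ v : σ → ℕ, MvPolynomial.eval (fun i ↦ (v i : R)) P ≠ 0 := by
  by_contra! h
  refine hP (MvPolynomial.funext_set (fun _ ↦ Set.range (Nat.cast : ℕ → R))
    (fun _ ↦ Set.infinite_range_of_injective Nat.cast_injective) fun x hx ↦ ?_)
  choose v hv using fun i ↦ hx i (Set.mem_univ i)
  rw [← funext hv, h v, map_zero]

end LineRestriction

section Shells

variable {K : Type*}

/-- The index `k` of the shell `‖a‖ ^ k ≤ ‖x‖ < ‖a‖ ^ (k + 1)` containing `x`, where `1 < ‖a‖`.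
All `x` with `‖x‖ < 1`, including `0`, have index `0`. -/
noncomputable def shellIndex [Norm K] (a x : K) : ℕ :=
  ⌊Real.logb ‖a‖ ‖x‖⌋₊

theorem shellIndex_pow [NormedDivisionRing K] {a : K} (ha : 1 < ‖a‖) (k : ℕ) :
    shellIndex a (a ^ k) = k := by
  rw [shellIndex, norm_pow, Real.logb_pow, Real.logb_self_eq_one ha, mul_one, Nat.floor_natCast]

theorem isLocallyConstant_shellIndex [SeminormedAddCommGroup K] [IsUltrametricDist K] {a : K}
    (ha : 1 < ‖a‖) : IsLocallyConstant (shellIndex a) := by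
  refine (IsLocallyConstant.iff_eventually_eq _).2 fun x ↦ ?_
  rcases eq_or_ne ‖x‖ 0 with hx | hx
  · have index_eq_zero {y : K} (hy : ‖y‖ ≤ 1) : shellIndex a y = 0 :=
      Nat.floor_eq_zero.2 ((Real.logb_nonpos ha (norm_nonneg y) hy).trans_lt one_pos)
    have norm_lt_one : ∀ᶠ y in 𝓝 x, ‖y‖ < 1 :=
      continuous_norm.continuousAt.eventually_lt_const (hx.trans_lt one_pos)
    filter_upwards [norm_lt_one] with y hy
    rw [index_eq_zero hy.le, index_eq_zero (hx.trans_le zero_le_one)]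
  · have sphere_mem_nhds : Metric.sphere (0 : K) ‖x‖ ∈ 𝓝 x :=
      (IsUltrametricDist.isOpen_sphere 0 hx).mem_nhds (mem_sphere_zero_iff_norm.2 rfl)
    filter_upwards [sphere_mem_nhds] with y hy
    rw [shellIndex, shellIndex, mem_sphere_zero_iff_norm.1 hy]

/-- The function equal to `c k * x ^ 2` on the shell of index `k`. The exponent is `2` so that the
derivative is unbounded even when `c` is constant. -/
noncomputable def shellwiseSq [NormedField K] (a : K) (c : ℕ → K) (x : K) : K :=
  c (shellIndex a x) * x ^ 2

theorem shellwiseSq_injective [NormedField K] {a : K} (ha : 1 < ‖a‖) :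
    Injective (shellwiseSq a) := by
  intro c d h
  funext k
  have ha₀ : a ≠ 0 := norm_pos_iff.1 (one_pos.trans ha)
  have hk := congrFun h (a ^ k)
  rw [shellwiseSq, shellwiseSq, shellIndex_pow ha] at hk
  exact mul_right_cancel₀ (pow_ne_zero 2 (pow_ne_zero k ha₀)) hk

variable {ι : Type*} [NontriviallyNormedField K] [IsUltrametricDist K] {a : K}

theorem hasDerivAt_eval_shellwiseSq (ha : 1 < ‖a‖) (P : MvPolynomial ι K) (c : ι → ℕ → K)
    (x : K) :
    HasDerivAt (fun y ↦ MvPolynomial.eval (fun i ↦ shellwiseSq a (c i) y) P)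
      ((derivative (expand K 2 (lineRestriction P fun i ↦ c i (shellIndex a x)))).eval x) x := by
  refine (Polynomial.hasDerivAt _ x).congr_of_eventuallyEq ?_
  filter_upwards [(isLocallyConstant_shellIndex ha).eventually_eq x] with y hy
  simp only [shellwiseSq, hy, expand_eval, eval_lineRestriction]

theorem exists_lt_norm_deriv_eval_shellwiseSq [CharZero K] (ha : 1 < ‖a‖) {P : MvPolynomial ι K}
    (hP : MvPolynomial.coeff 0 P = 0) {v : ι → K} (hv : MvPolynomial.eval v P ≠ 0)
    {c : ι → ℕ → K} (hc : ∃ᶠ k in atTop, ∀ i, c i k = v i) (r : ℝ) :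
    ∃ x, r < ‖deriv (fun y ↦ MvPolynomial.eval (fun i ↦ shellwiseSq a (c i) y) P) x‖ := by
  have norm_pow_tendsto : Tendsto (fun k : ℕ ↦ ‖a ^ k‖) atTop atTop := by
    simpa only [norm_pow] using tendsto_pow_atTop_atTop_of_one_lt ha
  have deriv_tendsto := Polynomial.tendsto_norm_atTop _
    (degree_derivative_expand_pos one_lt_two (natDegree_lineRestriction_ne_zero hP hv))
    norm_pow_tendsto
  obtain ⟨k, hk, hr⟩ := (hc.and_eventually (deriv_tendsto.eventually_gt_atTop r)).exists
  refine ⟨a ^ k, ?_⟩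
  rwa [(hasDerivAt_eval_shellwiseSq ha P c (a ^ k)).deriv, shellIndex_pow ha, funext hk]

end Shells

section Generators

variable {K : Type*} [NormedField K]

/-- The generator of index `b` of the free algebra: the coefficients of `x ^ 2` on the shells form
the independent sequence of natural numbers of index `b`. -/
noncomputable def shellwiseSqGenerator (a : K) (b : ℕ → Bool) : K → K :=
  shellwiseSq a fun k ↦ (independentSeq b k : ℕ)

theorem shellwiseSqGenerator_injective [CharZero K] {a : K} (ha : 1 < ‖a‖) :
    Injective (shellwiseSqGenerator a) :=
  (shellwiseSq_injective ha).comp (Nat.cast_injective.comp_left.comp independentSeq_injective)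

theorem mk_range_shellwiseSqGenerator [CharZero K] {a : K} (ha : 1 < ‖a‖) :
    #(Set.range (shellwiseSqGenerator a)) = 𝔠 := by
  rw [← Cardinal.lift_inj.{_, 0},
    Cardinal.mk_range_eq_of_injective (shellwiseSqGenerator_injective ha)]
  simp

end Generators

theorem stmt_3_general (K : Type*) [NontriviallyNormedField K] [IsUltrametricDist K]
    [CharZero K] :
    ∃ B : Set (K → K), #B = 𝔠 ∧
      ∀ (n : ℕ) (e : Fin n → (K → K)), Injective e → (∀ i, e i ∈ B) →
        ∀ P : MvPolynomial (Fin n) K, P ≠ 0 → MvPolynomial.coeff 0 P = 0 →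
          (∀ x : K, DifferentiableAt K (fun y ↦ MvPolynomial.eval (fun i ↦ e i y) P) x) ∧
          ∀ r : ℝ, ∃ x : K, r < ‖deriv (fun y ↦ MvPolynomial.eval (fun i ↦ e i y) P) x‖ := by
  obtain ⟨a, ha⟩ := NormedField.exists_one_lt_norm K
  refine ⟨Set.range (shellwiseSqGenerator a), mk_range_shellwiseSqGenerator ha, ?_⟩
  intro n e he heB P hP hP₀
  choose b hb using heB
  obtain rfl : (fun i ↦ shellwiseSqGenerator a (b i)) = e := funext hb
  have hb_inj : Injective b := .of_comp (f := shellwiseSqGenerator a) he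
  obtain ⟨v, hv⟩ := exists_eval_natCast_ne_zero hP
  have hfreq : ∃ᶠ k in atTop, ∀ i, ((independentSeq (b i) k : ℕ) : K) = v i :=
    (frequently_independentSeq_eq hb_inj v).mono fun k hk i ↦ congrArg Nat.cast (hk i)
  exact ⟨fun x ↦ (hasDerivAt_eval_shellwiseSq ha P _ x).differentiableAt,
    exists_lt_norm_deriv_eval_shellwiseSq ha hP₀ hv hfreq⟩

/-- The set of everywhere differentiable functions `ℚ_[p] → ℚ_[p]` with
unbounded derivative is strongly `𝔠`-algebrable in the algebra of all functions
`ℚ_[p] → ℚ_[p]` with pointwise operations. -/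
theorem stmt_3 (p : ℕ) [Fact p.Prime] :
    ∃ B : Set (ℚ_[p] → ℚ_[p]), Cardinal.mk B = Cardinal.continuum ∧
      ∀ n : ℕ, 1 ≤ n → ∀ e : Fin n → (ℚ_[p] → ℚ_[p]), Function.Injective e →
        (∀ i, e i ∈ B) →
        ∀ P : MvPolynomial (Fin n) ℚ_[p], P ≠ 0 → MvPolynomial.coeff 0 P = 0 →
          (∀ x : ℚ_[p],
            DifferentiableAt ℚ_[p] (fun y => MvPolynomial.eval (fun i => e i y) P) x) ∧
          ∀ C : ℝ, 0 < C → ∃ x : ℚ_[p],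
            C < ‖deriv (fun y => MvPolynomial.eval (fun i => e i y) P) x‖ := by
  obtain ⟨B, hB, h⟩ := stmt_3_general ℚ_[p]
  exact ⟨B, hB, fun n _ e he heB P hP hP₀ ↦ (h n e he heB P hP hP₀).imp_right fun hr C _ ↦ hr C⟩
end

section
/- Let p be a prime and fix a ∈ ℚ_p. The set A of all functions f : ℚ_p → ℚ_p such that (1) f is continuous on ℚ_p, (2) f is differentiable at every point x ≠ a, (3) f is not differentiable at a, (4) the derivative of f is unbounded on ℚ_p \ (a + ℤ_p) = {x : ‖x - a‖ > 1} (for every C > 0 there exists x with ‖x - a‖ > 1 and ‖deriv f x‖ > C), and (5) the derivative of f is unbounded on (a + ℤ_p) \ {a} = {x : 0 < ‖x - a‖ ≤ 1} (for every C > 0 there exists x with 0 < ‖x - a‖ ≤ 1 and ‖deriv f x‖ > C), is strongly 𝔠-algebrable in the commutative ℚ_p-algebra of all functions ℚ_p → ℚ_p under pointwise operations: there exists a set B of functions ℚ_p → ℚ_p with cardinality 𝔠 (the continuum) such that for every n ≥ 1, every injective map e : Fin n → B, and every polynomial P ∈ MvPolynomial (Fin n) ℚ_p with P ≠ 0 and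 constant coefficient 0, the pointwise evaluation of P at e(0), …, e(n−1) belongs to A. -/
/-! Fix `π` with `0 < ‖π‖ < 1` and cut `𝕜 \ {a}` into shells `‖π‖ ^ (k + 1) < ‖x - a‖ ≤ ‖π‖ ^ k`,
which are open because the norm is ultrametric. A generator is linear in `x - a` on every shell,
with slope `c |k| b * s |k|`, where `c |k| b` is a natural number and the common factor
`s j = π ^ √j / π ^ j` is so steep that difference quotients explode and so flat that
`s j * π ^ j → 0`. The sequence `c` is chosen, as in Hausdorff's independent families, so that it
takes any prescribed values at any finitely many parameters `b` infinitely often.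

Given `P ≠ 0` without constant term, pick natural numbers `w` for which `Q t = P (w t)` has
`Q' ≠ 0`. On infinitely many shells the polynomial in the generators is `Q (s |k| * (x - a))`. At
`x = a + π ^ j` the argument is `π ^ √j`, and a nonzero polynomial at `π ^ √j` is at least of order
`‖π‖ ^ (d √j)`, which cannot compensate a division by `π ^ j`. At `x = a + π ^ (-j)` the argument
tends to infinity, where `‖Q'‖` is bounded below. -/

open Filter Topology Polynomial

namespace ShellwiseLinear

section IndependentSequence

/-- A sequence of `α`-valued functions on `β` is independent if every prescription of values on a
finite set is met infinitely often. Each `b : β` thus gives a sequence `fun j => c j b`, and these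
sequences form an independent family in the sense of Hausdorff. -/
def IsIndependentSequence {α β : Type*} (c : ℕ → β → α) : Prop :=
  ∀ (s : Finset β) (w : β → α), ∃ᶠ j in atTop, ∀ b ∈ s, c j b = w b

variable {γ : Type*}

theorem exists_injOn_initialSegment (s : Finset (ℕ → γ)) :
    ∃ N : ℕ, Set.InjOn (fun (b : ℕ → γ) (l : Fin N) => b l) s := by
  have separated (b b' : ℕ → γ) :
      ∀ᶠ N : ℕ in atTop, (fun l : Fin N => b l) = (fun l : Fin N => b' l) → b = b' := by
    by_cases hb : b = b'
    · exact .of_forall fun _ _ => hb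
    obtain ⟨l, hl⟩ := Function.ne_iff.1 hb
    filter_upwards [eventually_gt_atTop l] with N hN h
    exact absurd (congrFun h ⟨l, hN⟩) hl
  obtain ⟨N, hN⟩ := ((eventually_all_finset s).2 fun b _ =>
    (eventually_all_finset s).2 fun b' _ => separated b b').exists
  exact ⟨N, fun b hb b' hb' h => hN b hb b' hb' h⟩

theorem exists_isIndependentSequence (γ α : Type*) [Finite γ] [Nonempty γ] [Countable α]
    [Nonempty α] : ∃ c : ℕ → (ℕ → γ) → α, IsIndependentSequence c := by
  obtain ⟨φ, hφ⟩ := exists_surjective_nat (Σ N : ℕ, (Fin N → γ) → α)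
  let readInitialSegment (f : Σ N : ℕ, (Fin N → γ) → α) (b : ℕ → γ) : α := f.2 fun l => b l
  refine ⟨fun j => readInitialSegment (φ j.unpair.1), fun s w => frequently_atTop.2 fun r => ?_⟩
  obtain ⟨N, hN⟩ := exists_injOn_initialSegment s
  obtain ⟨m, hm⟩ := hφ ⟨N, w ∘ Function.invFunOn (fun (b : ℕ → γ) (l : Fin N) => b l) s⟩
  refine ⟨Nat.pair m r, Nat.right_le_pair m r, fun b hb => ?_⟩
  simp only [Nat.unpair_pair, hm]
  exact congrArg w (hN.leftInvOn_invFunOn hb)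

end IndependentSequence

section RestrictLine

variable {R σ : Type*}

/-- The restriction `t ↦ P (t • v)` of a polynomial `P` to the line through the origin in
direction `v`. -/
noncomputable def restrictLine [CommSemiring R] (P : MvPolynomial σ R) (v : σ → R) : R[X] :=
  MvPolynomial.aeval (fun i => C (v i) * X) P

theorem eval_restrictLine [CommSemiring R] (P : MvPolynomial σ R) (v : σ → R) (t : R) :
    (restrictLine P v).eval t = MvPolynomial.eval (fun i => v i * t) P := by
  rw [restrictLine, MvPolynomial.aeval_def, MvPolynomial.polynomial_eval_eval₂,
    MvPolynomial.eval, MvPolynomial.coe_eval₂Hom]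
  congr 1
  · ext; simp
  · ext; simp

theorem restrictLine_congr [CommSemiring R] {P : MvPolynomial σ R} {v w : σ → R}
    (h : ∀ i ∈ P.vars, v i = w i) : restrictLine P v = restrictLine P w :=
  MvPolynomial.eval₂Hom_congr' rfl (fun i hi _ => by rw [h i hi]) rfl

theorem exists_natCast_eval_ne_zero [CommRing R] [IsDomain R] [CharZero R] {P : MvPolynomial σ R}
    (hP : P ≠ 0) : ∃ w : σ → ℕ, MvPolynomial.eval (fun i => (w i : R)) P ≠ 0 := by
  by_contra! h
  refine hP (MvPolynomial.funext_set (fun _ => Set.range (Nat.cast : ℕ → R))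
    (fun _ => Set.infinite_range_of_injective Nat.cast_injective) fun x hx => ?_)
  choose w hw using fun i => hx i (Set.mem_univ i)
  rw [← funext hw, h, map_zero]

theorem exists_derivative_restrictLine_ne_zero [CommRing R] [IsDomain R] [CharZero R]
    {P : MvPolynomial σ R} (hP : P ≠ 0) (hP0 : MvPolynomial.constantCoeff P = 0) :
    ∃ w : σ → ℕ, derivative (restrictLine P fun i => (w i : R)) ≠ 0 := by
  obtain ⟨w, hw⟩ := exists_natCast_eval_ne_zero hP
  refine ⟨w, fun h => hw ?_⟩
  set Q := restrictLine P fun i => (w i : R)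
  have hQ : Q = C (Q.coeff 0) := eq_C_of_derivative_eq_zero h
  calc MvPolynomial.eval (fun i => (w i : R)) P
      = Q.eval 1 := by simp [Q, eval_restrictLine]
    _ = Q.eval 0 := by rw [hQ, eval_C, eval_C]
    _ = MvPolynomial.constantCoeff P := by simp [Q, eval_restrictLine, MvPolynomial.eval_zero']
    _ = 0 := hP0

end RestrictLine

section Growth

theorem tendsto_nat_sqrt_atTop : Tendsto Nat.sqrt atTop atTop :=
  tendsto_atTop_atTop.2 fun m => ⟨m * m, fun _ => Nat.le_sqrt.2⟩

theorem tendsto_natAbs_atTop : Tendsto Int.natAbs atTop atTop :=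
  tendsto_atTop_atTop.2 fun m => ⟨m, fun _ _ => by lia⟩

theorem tendsto_pow_sqrt_pow_mul_inv_pow {r : ℝ} (hr0 : 0 < r) (hr1 : r < 1) (d : ℕ) :
    Tendsto (fun k : ℕ => (r ^ k.sqrt) ^ d * (r ^ k)⁻¹) atTop atTop := by
  have hpow : Tendsto (fun k : ℕ => r⁻¹ ^ k.sqrt) atTop atTop :=
    (tendsto_pow_atTop_atTop_of_one_lt ((one_lt_inv₀ hr0).2 hr1)).comp tendsto_nat_sqrt_atTop
  refine tendsto_atTop_mono' _ ?_ hpow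
  filter_upwards [tendsto_nat_sqrt_atTop.eventually_ge_atTop (d + 1)] with k hk
  have hexp : k.sqrt + k.sqrt * d ≤ k := by nlinarith [k.sqrt_le]
  rw [inv_pow, ← div_eq_mul_inv, ← pow_mul, inv_eq_one_div, div_le_div_iff₀ (by positivity)
    (by positivity), one_mul, mul_comm, ← pow_add]
  exact pow_le_pow_of_le_one hr0.le hr1.le hexp

variable {F : Type*} [NormedField F] {R : F[X]}

theorem exists_pow_le_norm_eval_near_zero (hR : R ≠ 0) :
    ∃ d : ℕ, ∃ δ > 0, ∀ᶠ t in 𝓝 (0 : F), δ * ‖t‖ ^ d ≤ ‖R.eval t‖ := by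
  obtain ⟨S, hRS, hS⟩ := exists_eq_pow_rootMultiplicity_mul_and_not_dvd R hR 0
  have hS0 : 0 < ‖S.eval 0‖ := norm_pos_iff.2 fun h => hS (dvd_iff_isRoot.2 h)
  refine ⟨R.rootMultiplicity 0, ‖S.eval 0‖ / 2, half_pos hS0, ?_⟩
  filter_upwards [S.continuous.norm.continuousAt.eventually_const_lt (half_lt_self hS0)] with t ht
  have hRt : ‖R.eval t‖ = ‖S.eval t‖ * ‖t‖ ^ R.rootMultiplicity 0 := by
    conv_lhs => rw [hRS]
    simp [mul_comm]
  rw [hRt]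
  gcongr

theorem exists_le_norm_eval_cobounded (hR : R ≠ 0) :
    ∃ δ > 0, ∀ᶠ t in Bornology.cobounded F, δ ≤ ‖R.eval t‖ := by
  rcases lt_or_ge 0 R.degree with hdeg | hdeg
  · exact ⟨1, one_pos,
      (R.tendsto_norm_atTop hdeg tendsto_norm_cobounded_atTop).eventually_ge_atTop 1⟩
  · have hC : R = C (R.coeff 0) := eq_C_of_degree_le_zero hdeg
    have h0 : R.coeff 0 ≠ 0 := fun h => hR (by rw [hC, h, C_0])
    exact ⟨‖R.coeff 0‖, norm_pos_iff.2 h0, .of_forall fun t => by rw [hC, eval_C, coeff_C_zero]⟩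

variable {π : F}

theorem tendsto_norm_eval_pow_sqrt_mul_inv_pow (hπ0 : 0 < ‖π‖) (hπ1 : ‖π‖ < 1) (hR : R ≠ 0) :
    Tendsto (fun k : ℕ => ‖R.eval (π ^ k.sqrt) * (π ^ k)⁻¹‖) atTop atTop := by
  obtain ⟨d, δ, hδ, hbound⟩ := exists_pow_le_norm_eval_near_zero hR
  have hpow : Tendsto (fun k : ℕ => π ^ k.sqrt) atTop (𝓝 0) :=
    (tendsto_pow_atTop_nhds_zero_of_norm_lt_one hπ1).comp tendsto_nat_sqrt_atTop
  refine tendsto_atTop_mono' _ ?_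
    ((tendsto_pow_sqrt_pow_mul_inv_pow hπ0 hπ1 d).const_mul_atTop hδ)
  filter_upwards [hpow.eventually hbound] with k hk
  rw [norm_mul, norm_inv, norm_pow, ← mul_assoc]
  rw [norm_pow] at hk
  gcongr

end Growth

section Steepness

/-- The slope `s k` common to all generators on the shells of level `k` and `-k`, up to the
natural number factors `c k b`. -/
def steepness {K : Type*} [Field K] (π : K) (k : ℕ) : K := π ^ k.sqrt * (π ^ k)⁻¹

theorem steepness_mul_pow {K : Type*} [Field K] {π : K} (hπ : π ≠ 0) (k : ℕ) :
    steepness π k * π ^ k = π ^ k.sqrt :=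
  inv_mul_cancel_right₀ (pow_ne_zero k hπ) _

theorem tendsto_norm_steepness {F : Type*} [NormedField F] {π : F} (hπ0 : 0 < ‖π‖)
    (hπ1 : ‖π‖ < 1) :
    Tendsto (fun k => ‖steepness π k‖) atTop atTop := by
  simpa only [eval_X, steepness] using
    tendsto_norm_eval_pow_sqrt_mul_inv_pow hπ0 hπ1 (X_ne_zero (R := F))

end Steepness

section Level

variable {F : Type*} [NormedField F] {π : F}

/-- The index `k` of the shell `‖π‖ ^ (k + 1) < ‖y‖ ≤ ‖π‖ ^ k` containing `y`, when
`0 < ‖π‖ < 1` and `y ≠ 0`; the value at `y = 0` is `0`. -/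
noncomputable def level (π y : F) : ℤ := ⌊Real.logb ‖π‖ ‖y‖⌋

theorem level_zpow (hπ0 : 0 < ‖π‖) (hπ1 : ‖π‖ < 1) (k : ℤ) : level π (π ^ k) = k := by
  rw [level, norm_zpow, ← Real.rpow_intCast, Real.logb_rpow hπ0 hπ1.ne, Int.floor_intCast]

theorem norm_le_zpow_level (hπ0 : 0 < ‖π‖) (hπ1 : ‖π‖ < 1) {y : F} (hy : y ≠ 0) :
    ‖y‖ ≤ ‖π‖ ^ level π y := by
  rw [← Real.rpow_intCast, ← Real.le_logb_iff_rpow_le_of_base_lt_one hπ0 hπ1 (norm_pos_iff.2 hy)]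
  exact Int.floor_le _

theorem tendsto_level_nhdsNE_zero (hπ0 : 0 < ‖π‖) (hπ1 : ‖π‖ < 1) :
    Tendsto (level π) (𝓝[≠] 0) atTop :=
  tendsto_floor_atTop.comp
    ((Real.tendsto_logb_nhdsGT_zero_of_base_lt_one hπ0 hπ1).comp tendsto_norm_nhdsNE_zero)

theorem eventually_level_sub_eq [IsUltrametricDist F] (π : F) {a x : F} (hx : x ≠ a) :
    ∀ᶠ y in 𝓝 x, level π (y - a) = level π (x - a) := by
  have hopen : IsOpen (Metric.sphere a (dist x a)) :=
    IsUltrametricDist.isOpen_sphere a (dist_ne_zero.2 hx)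
  filter_upwards [hopen.mem_nhds rfl] with y hy
  rw [Metric.mem_sphere, dist_eq_norm, dist_eq_norm] at hy
  rw [level, level, hy]

end Level

section Generator

variable {F β : Type*} [NormedField F] {π a : F} {c : ℕ → β → ℕ}

/-- The generator with parameter `b`: on each shell around `a` it is a multiple of `x - a`, with
the factor depending only on the level of the shell. -/
noncomputable def generator (π a : F) (c : ℕ → β → ℕ) (b : β) (x : F) : F :=
  c (level π (x - a)).natAbs b * (steepness π (level π (x - a)).natAbs * (x - a))

theorem generator_self (b : β) : generator π a c b a = 0 := by simp [generator]

theorem generator_add_pow (hπ0 : 0 < ‖π‖) (hπ1 : ‖π‖ < 1) (j : ℕ) (b : β) :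
    generator π a c b (a + π ^ j) = c j b * π ^ j.sqrt := by
  rw [generator, add_sub_cancel_left, ← zpow_natCast, level_zpow hπ0 hπ1, Int.natAbs_natCast,
    zpow_natCast, steepness_mul_pow (norm_pos_iff.1 hπ0)]

theorem generator_injective [CharZero F] (hπ0 : 0 < ‖π‖) (hπ1 : ‖π‖ < 1)
    (hc : IsIndependentSequence c) : Function.Injective (generator π a c) := by
  classical
  intro b b' h
  by_contra hne
  obtain ⟨j, hj⟩ := (hc {b, b'} (Pi.single b 1)).exists
  have hjb : c j b = 1 := by simpa using hj b (by simp)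
  have hjb' : c j b' = 0 := by simpa [Ne.symm hne] using hj b' (by simp)
  have hvalue := congrFun h (a + π ^ j)
  simp only [generator_add_pow hπ0 hπ1, hjb, hjb', Nat.cast_one, Nat.cast_zero, one_mul,
    zero_mul] at hvalue
  exact pow_ne_zero _ (norm_pos_iff.1 hπ0) hvalue

theorem continuousAt_generator_self [IsUltrametricDist F] (hπ0 : 0 < ‖π‖) (hπ1 : ‖π‖ < 1)
    (b : β) : ContinuousAt (generator π a c b) a := by
  have hsub : Tendsto (fun x => x - a) (𝓝[≠] a) (𝓝[≠] 0) := by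
    refine tendsto_nhdsWithin_iff.2 ⟨?_, ?_⟩
    · simpa using ((continuous_sub_right a).tendsto a).mono_left nhdsWithin_le_nhds
    · filter_upwards [self_mem_nhdsWithin] with x hx using sub_ne_zero.2 hx
  have hlevel := (tendsto_level_nhdsNE_zero hπ0 hπ1).comp hsub
  have hsqrt : Tendsto (fun x => (level π (x - a)).natAbs.sqrt) (𝓝[≠] a) atTop :=
    tendsto_nat_sqrt_atTop.comp (tendsto_natAbs_atTop.comp hlevel)
  rw [continuousAt_iff_punctured_nhds, generator_self]
  refine squeeze_zero_norm' ?_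
    ((tendsto_pow_atTop_nhds_zero_of_lt_one hπ0.le hπ1).comp hsqrt)
  filter_upwards [hlevel.eventually_ge_atTop 0, self_mem_nhdsWithin] with x hlevel_nonneg hx
  obtain ⟨k, hk⟩ := Int.eq_ofNat_of_zero_le hlevel_nonneg
  have hnorm := norm_le_zpow_level hπ0 hπ1 (sub_ne_zero.2 hx)
  simp only [Function.comp_apply] at hk
  simp only [generator, hk, Int.natAbs_natCast, zpow_natCast, Function.comp_apply] at hnorm ⊢
  calc ‖(c k b : F) * (steepness π k * (x - a))‖
      = ‖(c k b : F)‖ * (‖steepness π k‖ * ‖x - a‖) := by rw [norm_mul, norm_mul]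
    _ ≤ 1 * (‖steepness π k‖ * ‖π‖ ^ k) := by
        gcongr
        exact IsUltrametricDist.norm_natCast_le_one F _
    _ = ‖π‖ ^ k.sqrt := by
        rw [one_mul, ← norm_pow π k, ← norm_mul, steepness_mul_pow (norm_pos_iff.1 hπ0), norm_pow]

variable {P : MvPolynomial β F}

theorem eval_generator_self (hP0 : MvPolynomial.constantCoeff P = 0) :
    MvPolynomial.eval (generator π a c · a) P = 0 := by
  simp only [generator_self, MvPolynomial.eval_zero', hP0]

theorem eval_generator_add_pow (hπ0 : 0 < ‖π‖) (hπ1 : ‖π‖ < 1) {w : β → ℕ} {j : ℕ}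
    (hw : ∀ b ∈ P.vars, c j b = w b) :
    MvPolynomial.eval (generator π a c · (a + π ^ j)) P =
      (restrictLine P fun b => (w b : F)).eval (π ^ j.sqrt) := by
  rw [← restrictLine_congr fun b hb => congrArg Nat.cast (hw b hb), eval_restrictLine]
  simp only [generator_add_pow hπ0 hπ1]

end Generator

section PolynomialInGenerators

variable {𝕜 β : Type*} [NontriviallyNormedField 𝕜] {π a : 𝕜} {c : ℕ → β → ℕ} {P : MvPolynomial β 𝕜}

theorem not_differentiableAt_eval_generator (hπ0 : 0 < ‖π‖) (hπ1 : ‖π‖ < 1)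
    (hc : IsIndependentSequence c) (hP0 : MvPolynomial.constantCoeff P = 0) {w : β → ℕ}
    (hw : restrictLine P (fun b => (w b : 𝕜)) ≠ 0) :
    ¬ DifferentiableAt 𝕜 (fun y => MvPolynomial.eval (generator π a c · y) P) a := by
  intro hdiff
  set φ := fun y => MvPolynomial.eval (generator π a c · y) P
  have hpoints : Tendsto (fun j : ℕ => a + π ^ j) atTop (𝓝[≠] a) :=
    tendsto_nhdsWithin_iff.2
      ⟨by simpa using (tendsto_pow_atTop_nhds_zero_of_norm_lt_one hπ1).const_add a,
        .of_forall fun j => by simpa using fun h => absurd h (norm_pos_iff.1 hπ0)⟩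
  have hbounded : ∀ᶠ j : ℕ in atTop, ‖slope φ a (a + π ^ j)‖ < ‖deriv φ a‖ + 1 :=
    (hdiff.hasDerivAt.tendsto_slope.comp hpoints).norm.eventually_lt_const (lt_add_one _)
  have hlarge := (tendsto_norm_eval_pow_sqrt_mul_inv_pow hπ0 hπ1 hw).eventually_gt_atTop
    (‖deriv φ a‖ + 1)
  obtain ⟨j, hj, hlt, hgt⟩ := ((hc P.vars w).and_eventually (hbounded.and hlarge)).exists
  have hφj : φ (a + π ^ j) = _ := eval_generator_add_pow hπ0 hπ1 hj
  have hφa : φ a = 0 := eval_generator_self hP0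
  refine lt_asymm hlt ?_
  rwa [slope_def_field, hφj, hφa, sub_zero, add_sub_cancel_left, div_eq_mul_inv]

variable [IsUltrametricDist 𝕜]

theorem hasDerivAt_eval_generator {x : 𝕜} (hx : x ≠ a) {k : ℕ}
    (hk : (level π (x - a)).natAbs = k) {w : β → ℕ} (hw : ∀ b ∈ P.vars, c k b = w b) :
    HasDerivAt (fun y => MvPolynomial.eval (generator π a c · y) P)
      ((derivative (restrictLine P fun b => (w b : 𝕜))).eval (steepness π k * (x - a)) *
        steepness π k) x := by
  set Q := restrictLine P fun b => (w b : 𝕜)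
  have hlocal : (fun y => MvPolynomial.eval (generator π a c · y) P) =ᶠ[𝓝 x]
      fun y => Q.eval (steepness π k * (y - a)) := by
    filter_upwards [eventually_level_sub_eq π hx] with y hy
    simp only [generator, hy, hk, ← eval_restrictLine]
    rw [restrictLine_congr fun b hb => congrArg Nat.cast (hw b hb)]
  have hinner : HasDerivAt (fun y => steepness π k * (y - a)) (steepness π k) x := by
    simpa using ((hasDerivAt_id x).sub_const a).const_mul (steepness π k)
  exact ((Q.hasDerivAt _).comp x hinner).congr_of_eventuallyEq hlocal

theorem differentiableAt_eval_generator (P : MvPolynomial β 𝕜) {x : 𝕜} (hx : x ≠ a) :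
    DifferentiableAt 𝕜 (fun y => MvPolynomial.eval (generator π a c · y) P) x :=
  (hasDerivAt_eval_generator hx rfl fun _ _ => rfl).differentiableAt

theorem continuous_eval_generator (hπ0 : 0 < ‖π‖) (hπ1 : ‖π‖ < 1) (P : MvPolynomial β 𝕜) :
    Continuous (fun y => MvPolynomial.eval (generator π a c · y) P) := by
  refine continuous_iff_continuousAt.2 fun x => ?_
  rcases eq_or_ne x a with rfl | hx
  · exact (MvPolynomial.continuous_eval P).continuousAt.comp
      (continuousAt_pi.2 (continuousAt_generator_self hπ0 hπ1))
  · exact (differentiableAt_eval_generator P hx).continuousAt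

theorem deriv_eval_generator_add_zpow (hπ0 : 0 < ‖π‖) (hπ1 : ‖π‖ < 1) {w : β → ℕ} {k : ℤ}
    (hw : ∀ b ∈ P.vars, c k.natAbs b = w b) :
    deriv (fun y => MvPolynomial.eval (generator π a c · y) P) (a + π ^ k) =
      (derivative (restrictLine P fun b => (w b : 𝕜))).eval (steepness π k.natAbs * π ^ k) *
        steepness π k.natAbs := by
  have hne : a + π ^ k ≠ a := by simpa using zpow_ne_zero k (norm_pos_iff.1 hπ0)
  rw [(hasDerivAt_eval_generator hne (by rw [add_sub_cancel_left, level_zpow hπ0 hπ1]) hw).deriv,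
    add_sub_cancel_left]

theorem exists_lt_norm_deriv_eval_generator_inside (hπ0 : 0 < ‖π‖) (hπ1 : ‖π‖ < 1)
    (hc : IsIndependentSequence c) {w : β → ℕ}
    (hw : derivative (restrictLine P fun b => (w b : 𝕜)) ≠ 0) (C : ℝ) :
    ∃ x, 0 < ‖x - a‖ ∧ ‖x - a‖ ≤ 1 ∧
      C < ‖deriv (fun y => MvPolynomial.eval (generator π a c · y) P) x‖ := by
  have hlarge := (tendsto_norm_eval_pow_sqrt_mul_inv_pow hπ0 hπ1
    (mul_ne_zero hw X_ne_zero)).eventually_gt_atTop C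
  obtain ⟨j, hj, hgt⟩ := ((hc P.vars w).and_eventually hlarge).exists
  refine ⟨a + π ^ (j : ℤ), ?_, ?_, ?_⟩
  · rw [add_sub_cancel_left, norm_zpow]
    positivity
  · rw [add_sub_cancel_left, zpow_natCast, norm_pow]
    exact pow_le_one₀ hπ0.le hπ1.le
  · rw [deriv_eval_generator_add_zpow hπ0 hπ1 hj, Int.natAbs_natCast, zpow_natCast,
      steepness_mul_pow (norm_pos_iff.1 hπ0)]
    simpa only [eval_mul, eval_X, mul_assoc, steepness] using hgt

theorem exists_lt_norm_deriv_eval_generator_outside (hπ0 : 0 < ‖π‖) (hπ1 : ‖π‖ < 1)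
    (hc : IsIndependentSequence c) {w : β → ℕ}
    (hw : derivative (restrictLine P fun b => (w b : 𝕜)) ≠ 0) (C : ℝ) :
    ∃ x, 1 < ‖x - a‖ ∧ C < ‖deriv (fun y => MvPolynomial.eval (generator π a c · y) P) x‖ := by
  obtain ⟨δ, hδ, hbound⟩ := exists_le_norm_eval_cobounded hw
  have hsteep := tendsto_norm_steepness hπ0 hπ1
  have hnorm (j : ℕ) : ‖π ^ (-(j : ℤ))‖ = ‖π‖⁻¹ ^ j := by simp
  have hπinv : 1 < ‖π‖⁻¹ := (one_lt_inv₀ hπ0).2 hπ1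
  have hargument : Tendsto (fun j : ℕ => steepness π j * π ^ (-(j : ℤ))) atTop
      (Bornology.cobounded 𝕜) := by
    refine tendsto_norm_atTop_iff_cobounded.1 (tendsto_atTop_mono (fun j => ?_) hsteep)
    rw [norm_mul, hnorm]
    exact le_mul_of_one_le_right (norm_nonneg _) (one_le_pow₀ hπinv.le)
  obtain ⟨j, hj, hj0, hle, hgt⟩ := ((hc P.vars w).and_eventually
    ((eventually_gt_atTop 0).and ((hargument.eventually hbound).and
      ((hsteep.const_mul_atTop hδ).eventually_gt_atTop C)))).exists
  refine ⟨a + π ^ (-(j : ℤ)), ?_, ?_⟩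
  · rw [add_sub_cancel_left, hnorm]
    exact one_lt_pow₀ hπinv hj0.ne'
  · rw [deriv_eval_generator_add_zpow hπ0 hπ1 (by simpa using hj), Int.natAbs_neg,
      Int.natAbs_natCast, norm_mul]
    exact hgt.trans_le (mul_le_mul_of_nonneg_right hle (norm_nonneg _))

end PolynomialInGenerators

end ShellwiseLinear

open ShellwiseLinear in
theorem stmt_4_general {𝕜 : Type*} [NontriviallyNormedField 𝕜] [IsUltrametricDist 𝕜] [CharZero 𝕜]
    (a : 𝕜) :
    ∃ B : Set (𝕜 → 𝕜), Cardinal.mk B = Cardinal.continuum ∧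
      ∀ n : ℕ, ∀ e : Fin n → (𝕜 → 𝕜), Function.Injective e → (∀ i, e i ∈ B) →
        ∀ P : MvPolynomial (Fin n) 𝕜, P ≠ 0 → MvPolynomial.coeff 0 P = 0 →
          Continuous (fun y => MvPolynomial.eval (fun i => e i y) P) ∧
          (∀ x : 𝕜, x ≠ a →
            DifferentiableAt 𝕜 (fun y => MvPolynomial.eval (fun i => e i y) P) x) ∧
          ¬ DifferentiableAt 𝕜 (fun y => MvPolynomial.eval (fun i => e i y) P) a ∧
          (∀ C : ℝ, ∃ x : 𝕜, 1 < ‖x - a‖ ∧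
            C < ‖deriv (fun y => MvPolynomial.eval (fun i => e i y) P) x‖) ∧
          (∀ C : ℝ, ∃ x : 𝕜, 0 < ‖x - a‖ ∧ ‖x - a‖ ≤ 1 ∧
            C < ‖deriv (fun y => MvPolynomial.eval (fun i => e i y) P) x‖) := by
  obtain ⟨π, hπ0, hπ1⟩ := NormedField.exists_norm_lt_one 𝕜
  obtain ⟨c, hc⟩ := exists_isIndependentSequence Bool ℕ
  refine ⟨Set.range (generator π a c), ?_, fun n e he heB P hP hP0 => ?_⟩
  · simpa using Cardinal.mk_range_eq_of_injective (generator_injective (a := a) hπ0 hπ1 hc)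
  choose b hb using heB
  obtain rfl : (fun i => generator π a c (b i)) = e := funext hb
  have hb_inj : Function.Injective b := .of_comp (f := generator π a c) he
  set R := MvPolynomial.rename b P
  have hR : R ≠ 0 := by
    simpa using (MvPolynomial.rename_injective b hb_inj).ne hP
  have hR0 : MvPolynomial.constantCoeff R = 0 := by rwa [MvPolynomial.constantCoeff_rename]
  have heval : (fun y => MvPolynomial.eval (fun i => generator π a c (b i) y) P) =
      fun y => MvPolynomial.eval (generator π a c · y) R := by
    simp only [R, MvPolynomial.eval_rename, Function.comp_def]
  obtain ⟨w, hw⟩ := exists_derivative_restrictLine_ne_zero hR hR0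
  have hw0 : restrictLine R (fun b => (w b : 𝕜)) ≠ 0 := fun h => hw (by rw [h, derivative_zero])
  rw [heval]
  exact ⟨continuous_eval_generator hπ0 hπ1 R, fun x => differentiableAt_eval_generator R,
    not_differentiableAt_eval_generator hπ0 hπ1 hc hR0 hw0,
    exists_lt_norm_deriv_eval_generator_outside hπ0 hπ1 hc hw,
    exists_lt_norm_deriv_eval_generator_inside hπ0 hπ1 hc hw⟩

/-- For fixed `a ∈ ℚ_[p]`, the set of continuous functions `ℚ_[p] → ℚ_[p]`
that are differentiable except at `a`, with derivative unbounded both on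
`{x : ‖x - a‖ > 1}` and on `{x : 0 < ‖x - a‖ ≤ 1}`, is strongly `𝔠`-algebrable. -/
theorem stmt_4 (p : ℕ) [Fact p.Prime] (a : ℚ_[p]) :
    ∃ B : Set (ℚ_[p] → ℚ_[p]), Cardinal.mk B = Cardinal.continuum ∧
      ∀ n : ℕ, 1 ≤ n → ∀ e : Fin n → (ℚ_[p] → ℚ_[p]), Function.Injective e →
        (∀ i, e i ∈ B) →
        ∀ P : MvPolynomial (Fin n) ℚ_[p], P ≠ 0 → MvPolynomial.coeff 0 P = 0 →
          Continuous (fun y => MvPolynomial.eval (fun i => e i y) P) ∧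
          (∀ x : ℚ_[p], x ≠ a →
            DifferentiableAt ℚ_[p] (fun y => MvPolynomial.eval (fun i => e i y) P) x) ∧
          ¬ DifferentiableAt ℚ_[p] (fun y => MvPolynomial.eval (fun i => e i y) P) a ∧
          (∀ C : ℝ, 0 < C → ∃ x : ℚ_[p], 1 < ‖x - a‖ ∧
            C < ‖deriv (fun y => MvPolynomial.eval (fun i => e i y) P) x‖) ∧
          (∀ C : ℝ, 0 < C → ∃ x : ℚ_[p], 0 < ‖x - a‖ ∧ ‖x - a‖ ≤ 1 ∧
            C < ‖deriv (fun y => MvPolynomial.eval (fun i => e i y) P) x‖) := by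
  obtain ⟨B, hB, h⟩ := stmt_4_general a
  refine ⟨B, hB, fun n _ e he heB P hP hP0 => ?_⟩
  obtain ⟨hcont, hdiff, hndiff, hout, hin⟩ := h n e he heB P hP hP0
  exact ⟨hcont, hdiff, hndiff, fun C _ => hout C, fun C _ => hin C⟩
end

section
/- Let p be a prime. The set A of all functions f : ℚ_p → ℚ_p such that (1) f is continuous on ℚ_p, (2) f is differentiable at every point x ≠ 0, (3) f is not differentiable at 0, (4) the derivative of f is bounded on ℚ_p \ {0} (there exists C with ‖deriv f x‖ ≤ C for all x ≠ 0), and (5) for every real α > 0, f is not Lipschitz of order α (there is no M > 0 with ‖f x - f y‖ ≤ M·‖x - y‖^α for all x, y ∈ ℚ_p), is 𝔠-lineable in the ℚ_p-vector space of all functions ℚ_p → ℚ_p: there exists a ℚ_p-submodule M of the space of functions ℚ_p → ℚ_p whose rank over ℚ_p equals the cardinality 𝔠 of the continuum and such that M \ {0} ⊆ A. -/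
/-!
Fix `ϖ` with `0 < ‖ϖ‖ < 1`. In an ultrametric field a function of `‖x‖` alone is locally constant
away from `0`, so it has derivative `0` there. Take such a function, supported on the spheres
`‖x‖ = ‖ϖ‖ ^ m ^ 2` and equal there to a bounded multiple of `ϖ ^ m`. It is continuous at `0`, and
if the multiples stay away from `0` along a subsequence, then at `0` it decays more slowly than
every power of `‖x‖`, since `‖ϖ‖ ^ (α * m ^ 2)` is negligible compared with `‖ϖ‖ ^ m`.

Letting the multiples run over a bounded sequence in which every term is repeated infinitely often,
we get a linear map from bounded sequences to functions, whose nonzero values all have the required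
properties. The geometric sequences with ratio in the open unit ball are linearly independent, and
there are as many of them as elements of the field.
-/

open Asymptotics Cardinal Filter Function Topology
open scoped BoundedContinuousFunction

theorem mk_padic_eq_continuum (p : ℕ) [Fact p.Prime] : #ℚ_[p] = 𝔠 := by
  apply le_antisymm
  · calc
      #ℚ_[p] ≤ #(PadicSeq p) := mk_quotient_le
      _ ≤ #(ℕ → ℚ) := mk_subtype_le _
      _ = 𝔠 := by simp
  · exact continuum_le_cardinal_of_nontriviallyNormedField ℚ_[p]

theorem linearIndependent_geometric (R : Type*) [CommRing R] [IsDomain R] :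
    LinearIndependent R fun (r : R) (n : ℕ) ↦ r ^ n :=
  (linearIndependent_monoidHom (Multiplicative ℕ) R).comp (powersHom R) (powersHom R).injective

theorem tendsto_extend_cofinite {ι X Y : Type*} [TopologicalSpace Y] {e : ι → X}
    (he : Injective e) {c : ι → Y} {y : Y} (hc : Tendsto c cofinite (𝓝 y)) :
    Tendsto (extend e c fun _ ↦ y) cofinite (𝓝 y) := by
  intro U hU
  have hfin : (e '' (c ⁻¹' U)ᶜ).Finite := (mem_cofinite.1 (hc hU)).image e
  refine mem_cofinite.2 (hfin.subset fun x hx ↦ ?_)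
  by_cases hxe : ∃ i, e i = x
  · obtain ⟨i, rfl⟩ := hxe
    exact ⟨i, by simpa [he.extend_apply] using hx, rfl⟩
  · exact absurd (mem_of_mem_nhds hU) (by simpa [extend_apply' _ _ _ hxe] using hx)

theorem isLittleO_rpow_pow_sq {r α : ℝ} (hr₀ : 0 < r) (hr₁ : r < 1) (hα : 0 < α) :
    (fun m : ℕ ↦ (r ^ m ^ 2) ^ α) =o[atTop] fun m ↦ r ^ m := by
  have hlarge : ∀ᶠ m : ℕ in atTop, 2 ≤ α * m :=
    (tendsto_natCast_atTop_atTop.const_mul_atTop hα).eventually_ge_atTop 2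
  have hbound : (fun m : ℕ ↦ (r ^ m ^ 2) ^ α) =O[atTop] fun m ↦ r ^ m * r ^ m := by
    refine IsBigO.of_bound' ?_
    filter_upwards [hlarge] with m hm
    have hexp : ((m + m : ℕ) : ℝ) ≤ ((m ^ 2 : ℕ) : ℝ) * α := by
      push_cast
      nlinarith [(Nat.cast_nonneg m : (0 : ℝ) ≤ m)]
    rw [Real.norm_of_nonneg (by positivity), Real.norm_of_nonneg (by positivity), ← pow_add]
    calc
      (r ^ m ^ 2) ^ α = r ^ (((m ^ 2 : ℕ) : ℝ) * α) := by
        rw [Real.rpow_mul hr₀.le, Real.rpow_natCast]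
      _ ≤ r ^ ((m + m : ℕ) : ℝ) := Real.rpow_le_rpow_of_exponent_ge hr₀ hr₁.le hexp
      _ = r ^ (m + m) := Real.rpow_natCast _ _
  have hzero : (fun m ↦ r ^ m) =o[atTop] fun _ : ℕ ↦ (1 : ℝ) :=
    (isLittleO_one_iff ℝ).2 (tendsto_pow_atTop_nhds_zero_of_lt_one hr₀.le hr₁)
  simpa using hbound.trans_isLittleO (hzero.mul_isBigO (isBigO_refl (fun m : ℕ ↦ r ^ m) atTop))

theorem tendsto_natPair_atTop (j : ℕ) : Tendsto (Nat.pair j) atTop atTop :=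
  tendsto_atTop_mono (Nat.right_le_pair j) tendsto_id

theorem injective_pow_sq {r : ℝ} (hr₀ : 0 < r) (hr₁ : r ≠ 1) :
    Injective fun m : ℕ ↦ r ^ m ^ 2 :=
  (pow_right_injective₀ hr₀ hr₁).comp (Nat.pow_left_injective two_ne_zero)

theorem eventuallyEq_comp_norm {E Y : Type*} [NormedAddCommGroup E] [IsUltrametricDist E]
    (g : ℝ → Y) {x : E} (hx : x ≠ 0) : (fun y ↦ g ‖y‖) =ᶠ[𝓝 x] fun _ ↦ g ‖x‖ := by
  have hsphere : Metric.sphere (0 : E) ‖x‖ ∈ 𝓝 x :=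
    (IsUltrametricDist.isOpen_sphere 0 (norm_ne_zero_iff.2 hx)).mem_nhds (by simp)
  filter_upwards [hsphere] with y hy
  rw [mem_sphere_zero_iff_norm.1 hy]

theorem isBigO_sub_of_forall_norm_sub_le_rpow {E F : Type*} [SeminormedAddCommGroup E]
    [SeminormedAddCommGroup F] {f : E → F} {C α : ℝ}
    (hf : ∀ x y, ‖f x - f y‖ ≤ C * ‖x - y‖ ^ α) (x₀ : E) :
    (fun x ↦ f x - f x₀) =O[𝓝 x₀] fun x ↦ ‖x - x₀‖ ^ α := by
  refine .of_bound C (.of_forall fun x ↦ ?_)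
  rw [Real.norm_of_nonneg (by positivity)]
  exact hf x x₀

section LacunaryRadial

variable {K : Type*} [NormedField K] {ϖ : K}

/-- The radial function on `K` with value `c m` on the sphere of radius `‖ϖ‖ ^ m ^ 2` for each `m`,
and `0` elsewhere, depending linearly on `c`. It makes a sequence decaying like `ϖ ^ m` into a
function decaying more slowly than every power of the norm. -/
noncomputable def lacunaryRadial (ϖ : K) : (ℕ → K) →ₗ[K] K → K :=
  LinearMap.funLeft K K norm ∘ₗ ExtendByZero.linearMap K fun m : ℕ ↦ ‖ϖ‖ ^ m ^ 2

theorem lacunaryRadial_apply (c : ℕ → K) (x : K) :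
    lacunaryRadial ϖ c x = extend (fun m : ℕ ↦ ‖ϖ‖ ^ m ^ 2) c 0 ‖x‖ :=
  rfl

theorem lacunaryRadial_apply_zero (hϖ₀ : ϖ ≠ 0) (c : ℕ → K) : lacunaryRadial ϖ c 0 = 0 := by
  rw [lacunaryRadial_apply]
  exact extend_apply' _ _ _ fun ⟨m, hm⟩ ↦ by simp [hϖ₀] at hm

theorem lacunaryRadial_apply_pow_sq (hϖ₀ : ϖ ≠ 0) (hϖ₁ : ‖ϖ‖ < 1) (c : ℕ → K) (m : ℕ) :
    lacunaryRadial ϖ c (ϖ ^ m ^ 2) = c m := by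
  rw [lacunaryRadial_apply, norm_pow]
  exact (injective_pow_sq (norm_pos_iff.2 hϖ₀) hϖ₁.ne).extend_apply c 0 m

theorem continuousAt_lacunaryRadial_zero (hϖ₀ : ϖ ≠ 0) (hϖ₁ : ‖ϖ‖ < 1) {c : ℕ → K}
    (hc : Tendsto c atTop (𝓝 0)) : ContinuousAt (lacunaryRadial ϖ c) 0 := by
  rw [← Nat.cofinite_eq_atTop] at hc
  have hprofile := tendsto_extend_cofinite (injective_pow_sq (norm_pos_iff.2 hϖ₀) hϖ₁.ne) hc
  have hnorm : Tendsto (norm : K → ℝ) (𝓝[≠] 0) cofinite :=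
    tendsto_norm_nhdsNE_zero.mono_right ((nhdsGT_le_nhdsNE 0).trans (nhdsNE_le_cofinite 0))
  rw [continuousAt_iff_punctured_nhds, lacunaryRadial_apply_zero hϖ₀]
  exact hprofile.comp hnorm

theorem isLittleO_pow_of_lacunaryRadial_isBigO (hϖ₀ : ϖ ≠ 0) (hϖ₁ : ‖ϖ‖ < 1) {c : ℕ → K} {α : ℝ}
    (hα : 0 < α) (hO : lacunaryRadial ϖ c =O[𝓝 0] fun x ↦ ‖x‖ ^ α) :
    c =o[atTop] fun m ↦ ϖ ^ m := by
  have hpoints : Tendsto (fun m : ℕ ↦ ϖ ^ m ^ 2) atTop (𝓝 0) :=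
    (tendsto_pow_atTop_nhds_zero_of_norm_lt_one hϖ₁).comp (tendsto_pow_atTop two_ne_zero)
  have hbound : c =O[atTop] fun m : ℕ ↦ (‖ϖ‖ ^ m ^ 2) ^ α := by
    simpa [comp_def, lacunaryRadial_apply_pow_sq hϖ₀ hϖ₁] using hO.comp_tendsto hpoints
  simpa only [← norm_pow, isLittleO_norm_right] using
    hbound.trans_isLittleO (isLittleO_rpow_pow_sq (norm_pos_iff.2 hϖ₀) hϖ₁ hα)

theorem lacunaryRadial_eventuallyEq [IsUltrametricDist K] (c : ℕ → K) {x : K} (hx : x ≠ 0) :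
    lacunaryRadial ϖ c =ᶠ[𝓝 x] fun _ ↦ lacunaryRadial ϖ c x :=
  eventuallyEq_comp_norm (extend (fun m : ℕ ↦ ‖ϖ‖ ^ m ^ 2) c 0) hx

theorem continuous_lacunaryRadial [IsUltrametricDist K] (hϖ₀ : ϖ ≠ 0) (hϖ₁ : ‖ϖ‖ < 1)
    {c : ℕ → K} (hc : Tendsto c atTop (𝓝 0)) : Continuous (lacunaryRadial ϖ c) := by
  refine continuous_iff_continuousAt.2 fun x ↦ ?_
  obtain rfl | hx := eq_or_ne x 0
  · exact continuousAt_lacunaryRadial_zero hϖ₀ hϖ₁ hc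
  · exact continuousAt_const.congr (lacunaryRadial_eventuallyEq c hx).symm

theorem hasDerivAt_lacunaryRadial {K : Type*} [NontriviallyNormedField K] [IsUltrametricDist K]
    {ϖ : K} (c : ℕ → K) {x : K} (hx : x ≠ 0) : HasDerivAt (lacunaryRadial ϖ c) 0 x :=
  (hasDerivAt_const x _).congr_of_eventuallyEq (lacunaryRadial_eventuallyEq c hx)

end LacunaryRadial

section DampedRepetition

variable {K : Type*} [NormedField K] {ϖ : K}

/-- The sequence `m ↦ a j * ϖ ^ m`, where `j` is the first component of the pair of natural numbers
encoded by `m`. Each term of the bounded sequence `a` is thus used for infinitely many `m`. -/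
def dampedRepetition (ϖ : K) : (ℕ →ᵇ K) →ₗ[K] ℕ → K where
  toFun a m := a m.unpair.1 * ϖ ^ m
  map_add' a b := by
    ext m
    simp [add_mul]
  map_smul' t a := by
    ext m
    simp [mul_assoc]

theorem dampedRepetition_apply (a : ℕ →ᵇ K) (m : ℕ) :
    dampedRepetition ϖ a m = a m.unpair.1 * ϖ ^ m :=
  rfl

theorem tendsto_dampedRepetition_zero (hϖ₁ : ‖ϖ‖ < 1) (a : ℕ →ᵇ K) :
    Tendsto (dampedRepetition ϖ a) atTop (𝓝 0) :=
  isBoundedUnder_le_mul_tendsto_zero (isBoundedUnder_of ⟨‖a‖, fun _ ↦ a.norm_coe_le_norm _⟩)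
    (tendsto_pow_atTop_nhds_zero_of_norm_lt_one hϖ₁)

theorem eq_zero_of_dampedRepetition_isLittleO_pow (hϖ₀ : ϖ ≠ 0) {a : ℕ →ᵇ K}
    (ho : dampedRepetition ϖ a =o[atTop] fun m ↦ ϖ ^ m) : a = 0 := by
  ext j
  have hj : (fun k ↦ a j * ϖ ^ Nat.pair j k) =o[atTop] fun k ↦ ϖ ^ Nat.pair j k := by
    simpa [comp_def, dampedRepetition_apply] using ho.comp_tendsto (tendsto_natPair_atTop j)
  by_contra hne
  have hpow : ∃ᶠ k in atTop, ϖ ^ Nat.pair j k ≠ 0 := .of_forall fun k ↦ pow_ne_zero _ hϖ₀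
  exact isLittleO_irrefl hpow ((isLittleO_const_mul_left_iff hne).1 hj)

end DampedRepetition

section Composition

variable {K : Type*} [NormedField K] {ϖ : K}

theorem eq_zero_of_lacunaryRadial_dampedRepetition_isBigO (hϖ₀ : ϖ ≠ 0) (hϖ₁ : ‖ϖ‖ < 1)
    {a : ℕ →ᵇ K} {α : ℝ} (hα : 0 < α)
    (hO : lacunaryRadial ϖ (dampedRepetition ϖ a) =O[𝓝 0] fun x ↦ ‖x‖ ^ α) : a = 0 :=
  eq_zero_of_dampedRepetition_isLittleO_pow hϖ₀
    (isLittleO_pow_of_lacunaryRadial_isBigO hϖ₀ hϖ₁ hα hO)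

theorem injective_lacunaryRadial_comp_dampedRepetition (hϖ₀ : ϖ ≠ 0) (hϖ₁ : ‖ϖ‖ < 1) :
    Injective (lacunaryRadial ϖ ∘ₗ dampedRepetition ϖ) := by
  refine (injective_iff_map_eq_zero _).2 fun a (ha : lacunaryRadial ϖ _ = 0) ↦ ?_
  refine eq_zero_of_lacunaryRadial_dampedRepetition_isBigO hϖ₀ hϖ₁ one_pos ?_
  rw [ha]
  exact isBigO_zero _ _

end Composition

section Geometric

variable {K : Type*} [NormedField K]

/-- The geometric sequence with ratio `r` in the open unit ball, as a bounded sequence. -/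
def boundedGeometric (r : Metric.ball (0 : K) 1) : ℕ →ᵇ K :=
  .ofNormedAddCommGroupDiscrete (fun n ↦ (r : K) ^ n) 1 fun n ↦ by
    rw [norm_pow]
    exact pow_le_one₀ (norm_nonneg _) (mem_ball_zero_iff.1 r.2).le

theorem linearIndependent_boundedGeometric :
    LinearIndependent K (boundedGeometric : Metric.ball (0 : K) 1 → ℕ →ᵇ K) :=
  .of_comp (ContinuousMap.coeFnLinearMap K ∘ₗ
      BoundedContinuousFunction.toContinuousMapLinearMap ℕ K K)
    ((linearIndependent_geometric K).comp _ Subtype.val_injective)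

end Geometric

theorem rank_span_boundedGeometric (K : Type*) [NontriviallyNormedField K] :
    Module.rank K (Submodule.span K (Set.range (boundedGeometric (K := K)))) = #K := by
  rw [rank_span linearIndependent_boundedGeometric,
    mk_range_eq _ linearIndependent_boundedGeometric.injective]
  exact cardinal_eq_of_isOpen K Metric.isOpen_ball ⟨0, by simp⟩

theorem stmt_5_general (K : Type*) [NontriviallyNormedField K] [IsUltrametricDist K] :
    ∃ M : Submodule K (K → K),
      Module.rank K M = #K ∧
      ∀ f ∈ (M : Set (K → K)), f ≠ 0 →
        Continuous f ∧
        (∀ x : K, x ≠ 0 → DifferentiableAt K f x) ∧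
        ¬ DifferentiableAt K f 0 ∧
        (∃ C : ℝ, ∀ x : K, x ≠ 0 → ‖deriv f x‖ ≤ C) ∧
        ∀ α : ℝ, 0 < α →
          ¬ ∃ M' : ℝ, 0 < M' ∧ ∀ x y : K, ‖f x - f y‖ ≤ M' * ‖x - y‖ ^ α := by
  obtain ⟨ϖ, hϖ_pos, hϖ₁⟩ := NormedField.exists_norm_lt_one K
  have hϖ₀ : ϖ ≠ 0 := norm_pos_iff.1 hϖ_pos
  have hinj := injective_lacunaryRadial_comp_dampedRepetition hϖ₀ hϖ₁
  refine ⟨(Submodule.span K (Set.range boundedGeometric)).map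
    (lacunaryRadial ϖ ∘ₗ dampedRepetition ϖ), ?_, ?_⟩
  · rw [← rank_span_boundedGeometric K]
    exact (Submodule.equivMapOfInjective _ hinj _).rank_eq.symm
  rintro _ ⟨a, -, rfl⟩ hne
  simp only [LinearMap.comp_apply] at hne ⊢
  set c := dampedRepetition ϖ a
  have hzero : lacunaryRadial ϖ c 0 = 0 := lacunaryRadial_apply_zero hϖ₀ c
  have hderiv {x : K} (hx : x ≠ 0) := hasDerivAt_lacunaryRadial (ϖ := ϖ) c hx
  have hslow {α : ℝ} (hα : 0 < α) : ¬ lacunaryRadial ϖ c =O[𝓝 0] fun x ↦ ‖x‖ ^ α := fun hO ↦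
    hne (by simp [c, eq_zero_of_lacunaryRadial_dampedRepetition_isBigO hϖ₀ hϖ₁ hα hO])
  refine ⟨continuous_lacunaryRadial hϖ₀ hϖ₁ (tendsto_dampedRepetition_zero hϖ₁ a),
    fun x hx ↦ (hderiv hx).differentiableAt, fun hdiff ↦ ?_,
    ⟨0, fun x hx ↦ by simp [(hderiv hx).deriv]⟩, ?_⟩
  · exact hslow one_pos (by simpa [hzero] using hdiff.isBigO_sub.norm_right)
  · rintro α hα ⟨C, -, hC⟩
    exact hslow hα (by simpa [hzero] using isBigO_sub_of_forall_norm_sub_le_rpow hC 0)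

/-- The set of continuous functions `ℚ_[p] → ℚ_[p]` that are differentiable
except at `0`, with bounded derivative on `ℚ_[p] \ {0}`, and not Lipschitz of any order
`α > 0`, is `𝔠`-lineable. -/
theorem stmt_5 (p : ℕ) [Fact p.Prime] :
    ∃ M : Submodule ℚ_[p] (ℚ_[p] → ℚ_[p]),
      Module.rank ℚ_[p] M = Cardinal.continuum ∧
      ∀ f ∈ (M : Set (ℚ_[p] → ℚ_[p])), f ≠ 0 →
        Continuous f ∧
        (∀ x : ℚ_[p], x ≠ 0 → DifferentiableAt ℚ_[p] f x) ∧
        ¬ DifferentiableAt ℚ_[p] f 0 ∧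
        (∃ C : ℝ, ∀ x : ℚ_[p], x ≠ 0 → ‖deriv f x‖ ≤ C) ∧
        ∀ α : ℝ, 0 < α →
          ¬ ∃ M' : ℝ, 0 < M' ∧ ∀ x y : ℚ_[p], ‖f x - f y‖ ≤ M' * ‖x - y‖ ^ α := by
  simpa only [mk_padic_eq_continuum] using stmt_5_general ℚ_[p]
end

section
/- Let p be a prime. There exists a function g : ℚ_p → ℚ_p, not identically zero, such that for every β ∈ ℚ_p with β ≠ 0 and every natural number k ≥ 1, the pointwise power function G = β·g^k satisfies: (1) G is continuous on ℚ_p, (2) G is differentiable at every point x ≠ 0 with deriv G x = 0, (3) G is not differentiable at 0, and (4) for every real α > 0 there is no M > 0 with ‖G x - G y‖ ≤ M·‖x - y‖^α for all x, y ∈ ℚ_p. -/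
/-!
Fix `π` with `0 < ‖π‖ < 1` and let `g` send an element of norm `‖π‖ ^ t`, `0 ≤ t`, to `π ^ ⌊√t⌋`,
with `g 0 = 0`. The norm is locally constant away from `0`, hence so are `g` and all `β * g ^ k`.
Along `π ^ (j ^ 2) → 0` the value of `g ^ k` is `π ^ (j * k)`: its norm decays only exponentially in
`j`, whereas every positive power of `‖π ^ (j ^ 2)‖` decays like a Gaussian. Hence `β * g ^ k`
satisfies no Hölder bound at `0`, not even the one of order `1` implied by differentiability.
-/

open Filter Topology Asymptotics

lemma eventually_norm_eq_of_norm_ne_zero {E : Type*} [SeminormedAddCommGroup E]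
    [IsUltrametricDist E] {x : E} (hx : ‖x‖ ≠ 0) : ∀ᶠ y in 𝓝 x, ‖y‖ = ‖x‖ := by
  have hx_pos : 0 < ‖x‖ := (norm_nonneg x).lt_of_ne' hx
  filter_upwards [Metric.ball_mem_nhds x hx_pos] with y hy
  rw [mem_ball_iff_norm] at hy
  simpa [hy.le] using IsUltrametricDist.norm_add_eq_max_of_norm_ne_norm hy.ne

lemma isLittleO_pow_sq_rpow_pow_pow {b α : ℝ} (hb₀ : 0 < b) (hb₁ : b < 1) (hα : 0 < α) (k : ℕ) :
    (fun j : ℕ ↦ (b ^ j ^ 2) ^ α) =o[atTop] fun j : ℕ ↦ (b ^ j) ^ k := by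
  have hquotient (j : ℕ) : (b ^ j ^ 2) ^ α / (b ^ j) ^ k = b ^ ((α * j - k) * j : ℝ) := by
    rw [← pow_mul, ← Real.rpow_natCast, ← Real.rpow_natCast, ← Real.rpow_mul hb₀.le,
      ← Real.rpow_sub hb₀]
    congr 1
    push_cast
    ring
  have hexponent : Tendsto (fun j : ℕ ↦ (α * j - k) * j : ℕ → ℝ) atTop atTop := by
    have hlinear : Tendsto (fun j : ℕ ↦ α * j - k : ℕ → ℝ) atTop atTop :=
      tendsto_atTop_add_const_right _ _ (tendsto_natCast_atTop_atTop.const_mul_atTop hα)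
    exact hlinear.atTop_mul_atTop₀ tendsto_natCast_atTop_atTop
  rw [isLittleO_iff_tendsto' (.of_forall fun j h ↦ absurd h (by positivity))]
  simp only [hquotient]
  exact (tendsto_rpow_atTop_of_base_lt_one b (by linarith) hb₁).comp hexponent

section NormedField

variable {K : Type*} [NormedField K]

open Classical in
/-- The function sending `x` with `‖x‖ = ‖π‖ ^ t` to `π ^ ⌊√t⌋`, and `0` to `0`; it tends to `0`
at `0`, but more slowly than any positive power of the norm. For `t < 0` the junk value `√t = 0`
makes it equal to `1`. -/
noncomputable def powSqrtLog (π : K) : K → K :=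
  Function.update (fun x ↦ π ^ ⌊√(Real.logb ‖π‖ ‖x‖)⌋₊) 0 0

namespace powSqrtLog

variable {π : K}

@[simp]
lemma apply_zero (π : K) : powSqrtLog π 0 = 0 := by
  classical exact Function.update_self ..

lemma apply_of_ne_zero {x : K} (hx : x ≠ 0) :
    powSqrtLog π x = π ^ ⌊√(Real.logb ‖π‖ ‖x‖)⌋₊ := by
  classical exact Function.update_of_ne hx ..

lemma apply_pow_sq (hπ₀ : 0 < ‖π‖) (hπ₁ : ‖π‖ < 1) (j : ℕ) :
    powSqrtLog π (π ^ j ^ 2) = π ^ j := by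
  rw [apply_of_ne_zero (pow_ne_zero _ (norm_pos_iff.1 hπ₀)), norm_pow, Real.logb_pow,
    Real.logb_self_eq_one_iff.2 ⟨hπ₀.ne', hπ₁.ne, by linarith⟩, mul_one, Nat.cast_pow,
    Real.sqrt_sq j.cast_nonneg, Nat.floor_natCast]

lemma ne_zero (π : K) : powSqrtLog π ≠ 0 := fun h ↦ by
  simpa [apply_of_ne_zero] using congr_fun h 1

lemma eventuallyEq_const [IsUltrametricDist K] (π : K) {x : K} (hx : x ≠ 0) :
    powSqrtLog π =ᶠ[𝓝 x] fun _ ↦ powSqrtLog π x := by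
  filter_upwards [eventually_norm_eq_of_norm_ne_zero (norm_ne_zero_iff.2 hx),
    eventually_ne_nhds hx] with y hnorm hy
  rw [apply_of_ne_zero hx, apply_of_ne_zero hy, hnorm]

lemma continuousAt_zero (hπ₀ : 0 < ‖π‖) (hπ₁ : ‖π‖ < 1) : ContinuousAt (powSqrtLog π) 0 := by
  classical
  have hlog : Tendsto (fun x : K ↦ Real.logb ‖π‖ ‖x‖) (𝓝[≠] 0) atTop :=
    (Real.tendsto_logb_nhdsGT_zero_of_base_lt_one hπ₀ hπ₁).comp tendsto_norm_nhdsNE_zero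
  exact continuousAt_update_same.2 <| (tendsto_pow_atTop_nhds_zero_of_norm_lt_one hπ₁).comp <|
    tendsto_nat_floor_atTop.comp <| Real.tendsto_sqrt_atTop.comp hlog

lemma continuous [IsUltrametricDist K] (hπ₀ : 0 < ‖π‖) (hπ₁ : ‖π‖ < 1) :
    Continuous (powSqrtLog π) := by
  refine continuous_iff_continuousAt.2 fun x ↦ ?_
  rcases eq_or_ne x 0 with rfl | hx
  · exact continuousAt_zero hπ₀ hπ₁
  · exact continuousAt_const.congr (eventuallyEq_const π hx).symm

lemma not_isBigO_pow_norm_rpow (hπ₀ : 0 < ‖π‖) (hπ₁ : ‖π‖ < 1) (k : ℕ) {α : ℝ} (hα : 0 < α) :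
    ¬ (fun x ↦ powSqrtLog π x ^ k) =O[𝓝 0] fun x ↦ ‖x‖ ^ α := by
  intro hbound
  have hseq : Tendsto (fun j : ℕ ↦ π ^ j ^ 2) atTop (𝓝 0) :=
    (tendsto_pow_atTop_nhds_zero_of_norm_lt_one hπ₁).comp (tendsto_pow_atTop two_ne_zero)
  have hbound_seq : (fun j : ℕ ↦ (‖π‖ ^ j) ^ k) =O[atTop] fun j : ℕ ↦ (‖π‖ ^ j ^ 2) ^ α := by
    simpa [Function.comp_def, apply_pow_sq hπ₀ hπ₁] using (hbound.comp_tendsto hseq).norm_left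
  exact (isLittleO_pow_sq_rpow_pow_pow hπ₀ hπ₁ hα k).not_isBigO
    (.of_forall fun j ↦ by positivity) hbound_seq

end powSqrtLog

end NormedField

theorem stmt_6_general (K : Type*) [NontriviallyNormedField K] [IsUltrametricDist K] :
    ∃ g : K → K, g ≠ 0 ∧
      ∀ β : K, β ≠ 0 → ∀ k : ℕ, 1 ≤ k →
        Continuous (fun x => β * g x ^ k) ∧
        (∀ x : K, x ≠ 0 → HasDerivAt (fun x => β * g x ^ k) 0 x) ∧
        ¬ DifferentiableAt K (fun x => β * g x ^ k) 0 ∧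
        ∀ α : ℝ, 0 < α →
          ¬ ∃ M : ℝ, 0 < M ∧ ∀ x y : K,
              ‖β * g x ^ k - β * g y ^ k‖ ≤ M * ‖x - y‖ ^ α := by
  obtain ⟨π, hπ₀, hπ₁⟩ := NormedField.exists_norm_lt_one K
  refine ⟨powSqrtLog π, powSqrtLog.ne_zero π, fun β hβ k hk ↦ ?_⟩
  have hk₀ : k ≠ 0 := Nat.one_le_iff_ne_zero.1 hk
  have not_isBigO {α : ℝ} (hα : 0 < α) :
      ¬ (fun x ↦ β * powSqrtLog π x ^ k) =O[𝓝 0] fun x ↦ ‖x‖ ^ α := by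
    rw [isBigO_const_mul_left_iff hβ]
    exact powSqrtLog.not_isBigO_pow_norm_rpow hπ₀ hπ₁ k hα
  refine ⟨((powSqrtLog.continuous hπ₀ hπ₁).pow k).const_mul β, fun x hx ↦ ?_, fun hdiff ↦ ?_, ?_⟩
  · have hconst := (powSqrtLog.eventuallyEq_const π hx).fun_comp fun z ↦ β * z ^ k
    exact (hasDerivAt_const x _).congr_of_eventuallyEq hconst
  · exact not_isBigO one_pos (by simpa [hk₀] using hdiff.isBigO_sub.norm_right)
  · rintro α hα ⟨M, -, hM⟩
    exact not_isBigO hα (.of_bound M (.of_forall fun x ↦ by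
      simpa [hk₀, abs_of_nonneg (Real.rpow_nonneg (norm_nonneg x) α)] using hM x 0))

/-- 1-algebrability: there exists a nonzero function `g : ℚ_[p] → ℚ_[p]`
such that every pointwise combination `β • g ^ k` (with `β ≠ 0`, `k ≥ 1`) is continuous,
differentiable with zero derivative away from `0`, not differentiable at `0`, and not
Lipschitz of any order `α > 0`. -/
theorem stmt_6 (p : ℕ) [Fact p.Prime] :
    ∃ g : ℚ_[p] → ℚ_[p], g ≠ 0 ∧
      ∀ β : ℚ_[p], β ≠ 0 → ∀ k : ℕ, 1 ≤ k →
        Continuous (fun x => β * g x ^ k) ∧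
        (∀ x : ℚ_[p], x ≠ 0 → HasDerivAt (fun x => β * g x ^ k) 0 x) ∧
        ¬ DifferentiableAt ℚ_[p] (fun x => β * g x ^ k) 0 ∧
        ∀ α : ℝ, 0 < α →
          ¬ ∃ M : ℝ, 0 < M ∧ ∀ x y : ℚ_[p],
              ‖β * g x ^ k - β * g y ^ k‖ ≤ M * ‖x - y‖ ^ α := by
  exact stmt_6_general ℚ_[p]
end

section
/- Let p be a prime and let μ be a nonzero additive Haar measure on ℤ_p (a translation-invariant, finite, regular Borel measure on the compact additive group ℤ_p). Say that f : ℤ_p → ℚ_p is differentiable at a ∈ ℤ_p with derivative L ∈ ℚ_p if (f x - f a)/((x : ℚ_p) - (a : ℚ_p)) tends to L as x → a within ℤ_p \ {a}. Let A be the set of all continuous functions f : ℤ_p → ℚ_p for which there exists a Borel set B ⊆ ℤ_p such that: (1) μ(ℤ_p \ B) = 0, (2) f is differentiable at every point of B, (3) the derivatives on B are uniformly bounded (there exists C such that for every a ∈ B the derivative L of f at a satisfies ‖L‖ ≤ C), (4) f is not differentiable at any point of ℤ_p \ B, and (5) the cardinality of ℤ_p \ B equals 𝔠 (the continuum). Then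 A is 𝔠-lineable in the ℚ_p-vector space of all functions ℤ_p → ℚ_p: there exists a ℚ_p-submodule M of the space of functions ℤ_p → ℚ_p whose rank over ℚ_p equals 𝔠 and such that M \ {0} ⊆ A. -/
/-- `f : ℤ_[p] → ℚ_[p]` is differentiable at `a` with derivative `L` if the difference
quotient `(f x - f a) / (x - a)` tends to `L` as `x → a` within `ℤ_[p] \ {a}`. -/
def PadicIntDerivAt (p : ℕ) [Fact p.Prime] (f : ℤ_[p] → ℚ_[p]) (a : ℤ_[p]) (L : ℚ_[p]) :
    Prop :=
  Filter.Tendsto (fun x : ℤ_[p] => (f x - f a) / ((x : ℚ_[p]) - (a : ℚ_[p])))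
    (nhdsWithin a {a}ᶜ) (nhds L)

/-!
Let `φ s = ∑ k, s k * p ^ (2 * k)` embed the Cantor space `ℕ → Bool` into `ℤ_[p]`, with image `C`.
The distance of two distinct points of `C` is an even power of `‖p‖`. By the ultrametric inequality,
`c + p ^ (2 * k + 1)` has therefore distance exactly `‖p‖ ^ (2 * k + 1)` from `C` for every `c ∈ C`.
In particular the translates of `C` by `p ^ (2 * k + 1)` are pairwise disjoint, so `C` is null.

For a bounded sequence `b`, let `f x = b k * p ^ k` if `x` has distance `‖p‖ ^ (2 * k + 1)` from
`C`, and `f x = 0` otherwise. The distance to `C` is locally constant off `C`, so `f` has derivative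
zero there, while `f` is at most of the order of the square root of the distance, hence continuous.
At `c ∈ C` the difference quotient along `c + p ^ (2 * k + 1)` is `b k / p ^ (k + 1)`, which is
unbounded as soon as `b` takes a nonzero value infinitely often. The sequences of powers of the
points of `C`, with every entry repeated infinitely often, span a `𝔠`-dimensional space of bounded
sequences in which every nonzero element has this property.
-/

open Cardinal Filter Metric Topology
open scoped ENNReal Pointwise

section Ultrametric

variable {X Y E : Type*}

theorem infDist_eq_of_dist_lt_infDist [PseudoMetricSpace X] [IsUltrametricDist X] {s : Set X}
    {x y : X} (h : dist x y < infDist x s) : infDist y s = infDist x s := by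
  rw [infDist_eq_iInf, infDist_eq_iInf]
  refine congrArg iInf (funext fun z => ?_)
  have hlt : dist y x < dist x z :=
    (dist_comm y x).trans_lt (h.trans_le (infDist_le_dist_of_mem z.2))
  rw [IsUltrametricDist.dist_eq_max_of_dist_ne_dist y x z hlt.ne, max_eq_right hlt.le]

theorem eventually_infDist_eq [PseudoMetricSpace X] [IsUltrametricDist X] {s : Set X} {x : X}
    (hx : 0 < infDist x s) : ∀ᶠ y in 𝓝 x, infDist y s = infDist x s := by
  filter_upwards [ball_mem_nhds x hx] with y hy
  exact infDist_eq_of_dist_lt_infDist (mem_ball'.1 hy)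

theorem continuous_comp_infDist [PseudoMetricSpace X] [IsUltrametricDist X] [TopologicalSpace Y]
    {h : ℝ → Y} (hh : ContinuousAt h 0) (s : Set X) : Continuous fun x => h (infDist x s) := by
  refine continuous_iff_continuousAt.2 fun x => ?_
  rcases (infDist_nonneg (x := x) (s := s)).eq_or_lt with hx | hx
  · exact ContinuousAt.comp (g := h) (f := fun y => infDist y s) (hx ▸ hh)
      (continuous_infDist_pt s).continuousAt
  · exact continuousAt_const.congr <|
      (eventually_infDist_eq hx).mono fun y hy => congrArg h hy.symm

theorem infDist_add_eq_norm [SeminormedAddCommGroup E] [IsUltrametricDist E] {s : Set E} {c v : E}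
    (hc : c ∈ s) (hv : ∀ d ∈ s, ‖c - d‖ ≠ ‖v‖) : infDist (c + v) s = ‖v‖ := by
  refine le_antisymm ?_ ((le_infDist ⟨c, hc⟩).2 fun d hd => ?_)
  · simpa using infDist_le_dist_of_mem (x := c + v) hc
  · rw [dist_eq_norm, add_sub_right_comm,
      IsUltrametricDist.norm_add_eq_max_of_norm_ne_norm (hv d hd)]
    exact le_max_right _ _

end Ultrametric

theorem measure_eq_zero_of_pairwise_disjoint_vadd {G X ι : Type*} [AddGroup G] [AddAction G X]
    [MeasurableSpace X] [MeasurableConstVAdd G X] [Infinite ι] (μ : MeasureTheory.Measure X)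
    [MeasureTheory.VAddInvariantMeasure G X μ] [MeasureTheory.IsFiniteMeasure μ] {s : Set X}
    (hs : MeasurableSet s) {g : ι → G} (hg : Pairwise fun i j => Disjoint (g i +ᵥ s) (g j +ᵥ s)) :
    μ s = 0 := by
  by_contra hμs
  have hfin := MeasureTheory.Measure.finite_const_le_meas_of_disjoint_iUnion μ
    (pos_iff_ne_zero.2 hμs) (fun i => hs.const_vadd (g i)) hg (MeasureTheory.measure_ne_top μ _)
  simp only [MeasureTheory.measure_vadd, le_refl, Set.ofPred_true] at hfin
  exact Set.infinite_univ hfin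

section RepeatedPowers

variable {𝕜 ι : Type*} [NormedField 𝕜]

/-- The sequence `1, t, t², …` rearranged so that every power occurs infinitely often: the `k`-th
entry has as exponent the first component of the pair coded by `k`. -/
def repeatedPowers (t : 𝕜) (k : ℕ) : 𝕜 := t ^ k.unpair.1

theorem linearIndependent_repeatedPowers {t : ι → 𝕜} (ht : Function.Injective t) :
    LinearIndependent 𝕜 fun i => repeatedPowers (t i) := by
  have hpow : LinearIndependent 𝕜 fun i (n : ℕ) => t i ^ n :=
    (linearIndependent_monoidHom (Multiplicative ℕ) 𝕜).comp (fun i => powersHom 𝕜 (t i))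
      ((powersHom 𝕜).injective.comp ht)
  have hsurj : Function.Surjective fun k : ℕ => k.unpair.1 := fun n => ⟨n.pair 0, by simp⟩
  exact hpow.map_injOn (LinearMap.funLeft 𝕜 𝕜 fun k : ℕ => k.unpair.1)
    (LinearMap.funLeft_injective_of_surjective 𝕜 𝕜 _ hsurj).injOn

theorem memℓp_of_mem_span_repeatedPowers {t : ι → 𝕜} (ht : ∀ i, ‖t i‖ ≤ 1) {b : ℕ → 𝕜}
    (hb : b ∈ Submodule.span 𝕜 (Set.range fun i => repeatedPowers (t i))) : Memℓp b ∞ := by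
  induction hb using Submodule.span_induction with
  | mem _ h =>
    obtain ⟨i, rfl⟩ := h
    refine memℓp_infty ⟨1, Set.forall_mem_range.2 fun k => ?_⟩
    exact (norm_pow (t i) _).trans_le (pow_le_one₀ (norm_nonneg _) (ht i))
  | zero => exact zero_memℓp
  | add _ _ _ _ hx hy => exact hx.add hy
  | smul r _ _ hx => exact hx.const_smul r

theorem exists_frequently_eq_of_mem_span_repeatedPowers {t : ι → 𝕜} {b : ℕ → 𝕜}
    (hb : b ∈ Submodule.span 𝕜 (Set.range fun i => repeatedPowers (t i))) (hb₀ : b ≠ 0) :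
    ∃ v ≠ 0, ∃ᶠ k in atTop, b k = v := by
  have hle : Submodule.span 𝕜 (Set.range fun i => repeatedPowers (t i)) ≤
      (LinearMap.funLeft 𝕜 𝕜 fun k : ℕ => k.unpair.1).range :=
    Submodule.span_le.2 <| Set.range_subset_iff.2 fun i => ⟨fun n => t i ^ n, rfl⟩
  obtain ⟨a, rfl⟩ := hle hb
  obtain ⟨k, hk⟩ := Function.ne_iff.1 hb₀
  refine ⟨a k.unpair.1, hk, frequently_atTop.2 fun N => ⟨k.unpair.1.pair N, ?_, ?_⟩⟩
  · exact Nat.right_le_pair _ _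
  · simp [LinearMap.funLeft_apply]

end RepeatedPowers

section RadialProfile

variable {𝕜 : Type*} [NormedField 𝕜] {ϖ : 𝕜}

/-- The function of a distance `r` which is `b k * ϖ ^ k` at `r = ‖ϖ‖ ^ (2 * k + 1)` and zero at all
other `r`. For bounded `b` and `0 < ‖ϖ‖ < 1` its size is at most of the order of `√r`. -/
noncomputable def radialProfile (ϖ : 𝕜) : (ℕ → 𝕜) →ₗ[𝕜] (ℝ → 𝕜) :=
  Function.ExtendByZero.linearMap 𝕜 (fun k : ℕ => ‖ϖ‖ ^ (2 * k + 1)) ∘ₗ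
    LinearMap.mulRight 𝕜 fun k : ℕ => ϖ ^ k

theorem radialProfile_pow (h₀ : 0 < ‖ϖ‖) (h₁ : ‖ϖ‖ < 1) (b : ℕ → 𝕜) (k : ℕ) :
    radialProfile ϖ b (‖ϖ‖ ^ (2 * k + 1)) = b k * ϖ ^ k := by
  have hinj : Function.Injective fun k : ℕ => ‖ϖ‖ ^ (2 * k + 1) := fun i j hij => by
    have := pow_right_injective₀ h₀ h₁.ne hij
    lia
  exact hinj.extend_apply _ _ k

theorem radialProfile_eq_zero (b : ℕ → 𝕜) {r : ℝ} (hr : ∀ k : ℕ, ‖ϖ‖ ^ (2 * k + 1) ≠ r) :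
    radialProfile ϖ b r = 0 :=
  Function.extend_apply' _ _ _ fun ⟨k, hk⟩ => hr k hk

theorem norm_radialProfile_le (h₀ : 0 < ‖ϖ‖) (h₁ : ‖ϖ‖ < 1) {b : ℕ → 𝕜} {K : ℝ}
    (hb : ∀ k, ‖b k‖ ≤ K) (r : ℝ) : ‖radialProfile ϖ b r‖ ≤ K * √(r / ‖ϖ‖) := by
  by_cases hr : ∃ k : ℕ, ‖ϖ‖ ^ (2 * k + 1) = r
  · obtain ⟨k, rfl⟩ := hr
    have hsqrt : √(‖ϖ‖ ^ (2 * k + 1) / ‖ϖ‖) = ‖ϖ‖ ^ k := by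
      rw [pow_succ, mul_div_cancel_right₀ _ h₀.ne', mul_comm 2 k, pow_mul]
      exact Real.sqrt_sq (by positivity)
    rw [radialProfile_pow h₀ h₁, norm_mul, norm_pow, hsqrt]
    gcongr
    exact hb k
  · have hK : 0 ≤ K := (norm_nonneg _).trans (hb 0)
    rw [radialProfile_eq_zero b (not_exists.1 hr), norm_zero]
    positivity

theorem radialProfile_zero (h₀ : 0 < ‖ϖ‖) (b : ℕ → 𝕜) : radialProfile ϖ b 0 = 0 :=
  radialProfile_eq_zero b fun _ => (pow_pos h₀ _).ne'

theorem continuousAt_radialProfile_zero (h₀ : 0 < ‖ϖ‖) (h₁ : ‖ϖ‖ < 1) {b : ℕ → 𝕜}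
    (hb : Memℓp b ∞) : ContinuousAt (radialProfile ϖ b) 0 := by
  obtain ⟨K, hK⟩ := memℓp_infty_iff.1 hb
  have hbound := norm_radialProfile_le h₀ h₁ fun k => hK (Set.mem_range_self k)
  have hlim : Tendsto (fun r : ℝ => K * √(r / ‖ϖ‖)) (𝓝 0) (𝓝 0) := by
    have hcont : Continuous fun r : ℝ => K * √(r / ‖ϖ‖) := by fun_prop
    simpa using hcont.tendsto 0
  rw [ContinuousAt, radialProfile_zero h₀]
  exact squeeze_zero_norm hbound hlim

end RadialProfile

section CantorPoint

variable {p : ℕ} [Fact p.Prime]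

theorem padicInt_norm_p_pos : 0 < ‖(p : ℤ_[p])‖ :=
  norm_pos_iff.2 PadicInt.prime_p.ne_zero

theorem padicInt_norm_p_lt_one : ‖(p : ℤ_[p])‖ < 1 :=
  PadicInt.norm_natCast_lt_one_iff.2 dvd_rfl

theorem tendsto_add_p_pow (a : ℤ_[p]) :
    Tendsto (fun k : ℕ => a + (p : ℤ_[p]) ^ (2 * k + 1)) atTop (𝓝[≠] a) := by
  refine tendsto_nhdsWithin_iff.2 ⟨?_, .of_forall fun k => ?_⟩
  · have hodd : Tendsto (fun k : ℕ => 2 * k + 1) atTop atTop :=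
      tendsto_atTop_mono (fun k => by rw [id]; lia) tendsto_id
    have hpow := (tendsto_pow_atTop_nhds_zero_of_norm_lt_one
      (padicInt_norm_p_lt_one (p := p))).comp hodd
    simpa using hpow.const_add a
  · simpa using PadicInt.prime_p.ne_zero

theorem norm_digit_mul_pow_le (s : ℕ → Bool) (k : ℕ) :
    ‖((s k).toNat : ℤ_[p]) * (p : ℤ_[p]) ^ (2 * k)‖ ≤ (‖(p : ℤ_[p])‖ ^ 2) ^ k := by
  rw [norm_mul, norm_pow, pow_mul]
  exact mul_le_of_le_one_left (by positivity) (PadicInt.norm_le_one _)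

theorem padicInt_norm_p_sq_lt_one : ‖(p : ℤ_[p])‖ ^ 2 < 1 :=
  pow_lt_one₀ (norm_nonneg _) padicInt_norm_p_lt_one two_ne_zero

theorem summable_norm_p_sq_pow : Summable fun k : ℕ => (‖(p : ℤ_[p])‖ ^ 2) ^ k :=
  summable_geometric_of_lt_one (by positivity) padicInt_norm_p_sq_lt_one

theorem summable_digit_mul_pow (s : ℕ → Bool) :
    Summable fun k => ((s k).toNat : ℤ_[p]) * (p : ℤ_[p]) ^ (2 * k) :=
  .of_norm_bounded summable_norm_p_sq_pow (norm_digit_mul_pow_le s)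

/-- The point of `ℤ_[p]` with `p`-adic digits `s 0, 0, s 1, 0, s 2, 0, …`. Its range is the Cantor
set at whose points differentiability will fail. -/
noncomputable def cantorPoint (p : ℕ) [Fact p.Prime] (s : ℕ → Bool) : ℤ_[p] :=
  ∑' k, ((s k).toNat : ℤ_[p]) * (p : ℤ_[p]) ^ (2 * k)

theorem cantorPoint_eq_add (s : ℕ → Bool) :
    cantorPoint p s = (s 0).toNat + (p : ℤ_[p]) ^ 2 * cantorPoint p fun k => s (k + 1) := by
  rw [cantorPoint, (summable_digit_mul_pow s).tsum_eq_zero_add, cantorPoint,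
    ← (summable_digit_mul_pow fun k => s (k + 1)).tsum_mul_left]
  simp only [mul_zero, pow_zero, mul_one]
  congr! 3
  ring

theorem continuous_cantorPoint : Continuous (cantorPoint p) := by
  refine continuous_tsum (fun k => ?_) summable_norm_p_sq_pow fun k s => norm_digit_mul_pow_le s k
  exact ((continuous_of_discreteTopology (f := fun i : Bool => (i.toNat : ℤ_[p]))).comp
    (continuous_apply k)).mul_const _

theorem isClosed_range_cantorPoint : IsClosed (Set.range (cantorPoint p)) :=
  (isCompact_range continuous_cantorPoint).isClosed

theorem norm_cantorPoint_sub_of_zero_ne {s t : ℕ → Bool} (h : s 0 ≠ t 0) :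
    ‖cantorPoint p s - cantorPoint p t‖ = 1 := by
  have hdigit : ‖((s 0).toNat : ℤ_[p]) - (t 0).toNat‖ = 1 := by
    cases hs : s 0 <;> cases ht : t 0 <;> simp_all
  have htail (w : ℤ_[p]) : ‖(p : ℤ_[p]) ^ 2 * w‖ < 1 := by
    rw [norm_mul, norm_pow]
    exact mul_lt_one_of_nonneg_of_lt_one_left (by positivity) padicInt_norm_p_sq_lt_one
      (PadicInt.norm_le_one w)
  rw [cantorPoint_eq_add s, cantorPoint_eq_add t, add_sub_add_comm, ← mul_sub,
    PadicInt.norm_add_eq_max_of_ne (hdigit ▸ (htail _).ne'), hdigit, max_eq_left (htail _).le]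

theorem exists_norm_cantorPoint_sub_eq {s t : ℕ → Bool} (h : s ≠ t) :
    ∃ m : ℕ, ‖cantorPoint p s - cantorPoint p t‖ = ‖(p : ℤ_[p])‖ ^ (2 * m) := by
  obtain ⟨n, hn⟩ := Function.ne_iff.1 h
  clear h
  induction n generalizing s t with
  | zero => exact ⟨0, by simpa using norm_cantorPoint_sub_of_zero_ne hn⟩
  | succ n ih =>
    by_cases h₀ : s 0 = t 0
    · obtain ⟨m, hm⟩ := ih (s := fun k => s (k + 1)) (t := fun k => t (k + 1)) hn
      refine ⟨m + 1, ?_⟩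
      rw [cantorPoint_eq_add s, cantorPoint_eq_add t, h₀, add_sub_add_left_eq_sub, ← mul_sub,
        norm_mul, norm_pow, hm]
      ring
    · exact ⟨0, by simpa using norm_cantorPoint_sub_of_zero_ne h₀⟩

theorem cantorPoint_injective : Function.Injective (cantorPoint p) := by
  intro s t hst
  by_contra h
  obtain ⟨m, hm⟩ := exists_norm_cantorPoint_sub_eq (p := p) h
  rw [hst, sub_self, norm_zero] at hm
  exact (pow_pos padicInt_norm_p_pos _).ne hm

theorem mk_range_cantorPoint : #(Set.range (cantorPoint p)) = 𝔠 := by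
  rw [mk_range_eq _ cantorPoint_injective]
  simp

theorem padicInt_norm_p_pow_injective : Function.Injective fun n : ℕ => ‖(p : ℤ_[p]) ^ n‖ := by
  simpa only [norm_pow] using pow_right_injective₀ padicInt_norm_p_pos padicInt_norm_p_lt_one.ne

theorem norm_sub_ne_of_mem_range_cantorPoint {c d : ℤ_[p]} (hc : c ∈ Set.range (cantorPoint p))
    (hd : d ∈ Set.range (cantorPoint p)) (k : ℕ) : ‖c - d‖ ≠ ‖(p : ℤ_[p]) ^ (2 * k + 1)‖ := by
  obtain ⟨s, rfl⟩ := hc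
  obtain ⟨t, rfl⟩ := hd
  rcases eq_or_ne s t with rfl | hst
  · rw [sub_self, norm_zero, norm_pow]
    exact (pow_pos padicInt_norm_p_pos _).ne
  · obtain ⟨m, hm⟩ := exists_norm_cantorPoint_sub_eq (p := p) hst
    rw [hm, ← norm_pow]
    exact padicInt_norm_p_pow_injective.ne (by lia)

theorem infDist_add_p_pow_range_cantorPoint {c : ℤ_[p]} (hc : c ∈ Set.range (cantorPoint p))
    (k : ℕ) : infDist (c + (p : ℤ_[p]) ^ (2 * k + 1)) (Set.range (cantorPoint p)) =
      ‖(p : ℤ_[p])‖ ^ (2 * k + 1) := by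
  rw [← norm_pow]
  exact infDist_add_eq_norm hc fun d hd => norm_sub_ne_of_mem_range_cantorPoint hc hd k

theorem measure_range_cantorPoint [MeasurableSpace ℤ_[p]] [BorelSpace ℤ_[p]]
    (μ : MeasureTheory.Measure ℤ_[p]) [MeasureTheory.IsFiniteMeasure μ] [μ.IsAddLeftInvariant] :
    μ (Set.range (cantorPoint p)) = 0 := by
  refine measure_eq_zero_of_pairwise_disjoint_vadd μ isClosed_range_cantorPoint.measurableSet
    (g := fun k : ℕ => (p : ℤ_[p]) ^ (2 * k + 1)) fun i j hij => Set.disjoint_left.2 ?_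
  rintro _ ⟨c, hc, rfl⟩ ⟨d, hd, hcd⟩
  have hdist := congrArg (infDist · (Set.range (cantorPoint p))) hcd
  simp only [vadd_eq_add, add_comm _ c, add_comm _ d, infDist_add_p_pow_range_cantorPoint hc,
    infDist_add_p_pow_range_cantorPoint hd, ← norm_pow] at hdist
  have := padicInt_norm_p_pow_injective hdist
  lia

end CantorPoint

section Derivative

variable {p : ℕ} [Fact p.Prime] {f : ℤ_[p] → ℚ_[p]} {a : ℤ_[p]}

theorem PadicIntDerivAt.unique {L L' : ℚ_[p]} (h : PadicIntDerivAt p f a L)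
    (h' : PadicIntDerivAt p f a L') : L = L' :=
  have := (tendsto_add_p_pow a).neBot
  tendsto_nhds_unique h h'

theorem padicIntDerivAt_zero_of_eventually_eq (h : ∀ᶠ x in 𝓝 a, f x = f a) :
    PadicIntDerivAt p f a 0 :=
  tendsto_const_nhds.congr' <|
    (h.filter_mono nhdsWithin_le_nhds).mono fun x hx => by simp only [hx, sub_self, zero_div]

end Derivative

section CantorProfile

variable {p : ℕ} [Fact p.Prime]

/-- The function `x ↦ b k * p ^ k` where `x` has distance `‖p‖ ^ (2 * k + 1)` from the Cantor set
`Set.range (cantorPoint p)`, and zero elsewhere, as a linear function of the sequence `b`. -/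
noncomputable def cantorProfile (p : ℕ) [Fact p.Prime] :
    (ℕ → ℚ_[p]) →ₗ[ℚ_[p]] (ℤ_[p] → ℚ_[p]) :=
  LinearMap.funLeft ℚ_[p] ℚ_[p] (infDist · (Set.range (cantorPoint p))) ∘ₗ
    radialProfile (p : ℚ_[p])

theorem cantorProfile_apply (b : ℕ → ℚ_[p]) (x : ℤ_[p]) :
    cantorProfile p b x = radialProfile (p : ℚ_[p]) b (infDist x (Set.range (cantorPoint p))) :=
  rfl

theorem cantorProfile_of_mem (b : ℕ → ℚ_[p]) {c : ℤ_[p]} (hc : c ∈ Set.range (cantorPoint p)) :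
    cantorProfile p b c = 0 := by
  rw [cantorProfile_apply, infDist_zero_of_mem hc]
  exact radialProfile_zero padicInt_norm_p_pos b

theorem cantorProfile_add_p_pow (b : ℕ → ℚ_[p]) {c : ℤ_[p]}
    (hc : c ∈ Set.range (cantorPoint p)) (k : ℕ) :
    cantorProfile p b (c + (p : ℤ_[p]) ^ (2 * k + 1)) = b k * (p : ℚ_[p]) ^ k := by
  rw [cantorProfile_apply, infDist_add_p_pow_range_cantorPoint hc]
  exact radialProfile_pow padicInt_norm_p_pos padicInt_norm_p_lt_one b k

theorem cantorProfile_injective : Function.Injective (cantorProfile p) := by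
  refine (injective_iff_map_eq_zero _).2 fun b hb => funext fun k => ?_
  have hk := cantorProfile_add_p_pow b (Set.mem_range_self fun _ => false) k
  rw [hb, Pi.zero_apply, eq_comm, mul_eq_zero] at hk
  exact hk.resolve_right (pow_ne_zero _ (norm_pos_iff.1 padicInt_norm_p_pos))

theorem continuous_cantorProfile {b : ℕ → ℚ_[p]} (hb : Memℓp b ∞) :
    Continuous (cantorProfile p b) :=
  continuous_comp_infDist
    (continuousAt_radialProfile_zero padicInt_norm_p_pos padicInt_norm_p_lt_one hb) _

theorem padicIntDerivAt_cantorProfile_zero (b : ℕ → ℚ_[p]) {a : ℤ_[p]}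
    (ha : a ∉ Set.range (cantorPoint p)) : PadicIntDerivAt p (cantorProfile p b) a 0 := by
  have hpos : 0 < infDist a (Set.range (cantorPoint p)) :=
    (isClosed_range_cantorPoint.notMem_iff_infDist_pos (Set.range_nonempty _)).1 ha
  refine padicIntDerivAt_zero_of_eventually_eq ((eventually_infDist_eq hpos).mono fun x hx => ?_)
  rw [cantorProfile_apply, hx, ← cantorProfile_apply]

theorem norm_slope_cantorProfile (b : ℕ → ℚ_[p]) {c : ℤ_[p]}
    (hc : c ∈ Set.range (cantorPoint p)) (k : ℕ) :
    ‖(cantorProfile p b (c + (p : ℤ_[p]) ^ (2 * k + 1)) - cantorProfile p b c) /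
      (((c + (p : ℤ_[p]) ^ (2 * k + 1) : ℤ_[p]) : ℚ_[p]) - c)‖ = ‖b k‖ * (p : ℝ) ^ (k + 1) := by
  have hp : (p : ℝ) ≠ 0 := Nat.cast_ne_zero.2 (Fact.out : p.Prime).ne_zero
  rw [cantorProfile_add_p_pow b hc, cantorProfile_of_mem b hc]
  push_cast
  rw [sub_zero, add_sub_cancel_left, norm_div, norm_mul, norm_pow, norm_pow, Padic.norm_p,
    inv_pow, inv_pow]
  field_simp
  ring

theorem not_padicIntDerivAt_cantorProfile {b : ℕ → ℚ_[p]} {v : ℚ_[p]} (hv : v ≠ 0)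
    (hb : ∃ᶠ k in atTop, b k = v) {c : ℤ_[p]} (hc : c ∈ Set.range (cantorPoint p)) (L : ℚ_[p]) :
    ¬ PadicIntDerivAt p (cantorProfile p b) c L := by
  intro hL
  have hslope : Tendsto (fun k => ‖b k‖ * (p : ℝ) ^ (k + 1)) atTop (𝓝 ‖L‖) :=
    (hL.comp (tendsto_add_p_pow c)).norm.congr (norm_slope_cantorProfile b hc)
  have hunbounded : Tendsto (fun k : ℕ => ‖v‖ * (p : ℝ) ^ (k + 1)) atTop atTop :=
    ((tendsto_pow_atTop_atTop_of_one_lt (Nat.one_lt_cast.2 (Fact.out : p.Prime).one_lt)).comp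
      (tendsto_add_atTop_nat 1)).const_mul_atTop (norm_pos_iff.2 hv)
  obtain ⟨k, rfl, hlt, hge⟩ := (hb.and_eventually
    ((hslope.eventually_lt_const (lt_add_one _)).and (hunbounded.eventually_ge_atTop _))).exists
  exact hlt.not_ge hge

end CantorProfile

/-- For any nonzero (translation-invariant, finite, regular Borel) Haar
measure `μ` on `ℤ_[p]`, the set of continuous functions `ℤ_[p] → ℚ_[p]` that are
differentiable with uniformly bounded derivative on a Borel full set for `μ`, and not
differentiable at any point of its complement, the complement having cardinality `𝔠`,
is `𝔠`-lineable. -/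
theorem stmt_7 (p : ℕ) [Fact p.Prime] [MeasurableSpace ℤ_[p]] [BorelSpace ℤ_[p]]
    (μ : MeasureTheory.Measure ℤ_[p]) (hμ : μ ≠ 0) [MeasureTheory.IsFiniteMeasure μ]
    [μ.IsAddLeftInvariant] [μ.Regular] :
    ∃ M : Submodule ℚ_[p] (ℤ_[p] → ℚ_[p]),
      Module.rank ℚ_[p] M = Cardinal.continuum ∧
      ∀ f ∈ (M : Set (ℤ_[p] → ℚ_[p])), f ≠ 0 →
        Continuous f ∧
        ∃ B : Set ℤ_[p], MeasurableSet B ∧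
          μ Bᶜ = 0 ∧
          (∀ a ∈ B, ∃ L : ℚ_[p], PadicIntDerivAt p f a L) ∧
          (∃ C : ℝ, ∀ a ∈ B, ∀ L : ℚ_[p], PadicIntDerivAt p f a L → ‖L‖ ≤ C) ∧
          (∀ a ∈ Bᶜ, ¬ ∃ L : ℚ_[p], PadicIntDerivAt p f a L) ∧
          Cardinal.mk ↥(Bᶜ) = Cardinal.continuum := by
  let t (s : ℕ → Bool) : ℚ_[p] := cantorPoint p s
  have ht_inj : Function.Injective t := Subtype.val_injective.comp cantorPoint_injective
  have ht_norm (s : ℕ → Bool) : ‖t s‖ ≤ 1 := (cantorPoint p s).norm_le_one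
  have hli := linearIndependent_repeatedPowers ht_inj
  refine ⟨(Submodule.span ℚ_[p] (Set.range fun s => repeatedPowers (t s))).map (cantorProfile p),
    ?_, ?_⟩
  · rw [rank_map_eq cantorProfile_injective, rank_span hli, mk_range_eq _ hli.injective]
    simp
  · rintro _ ⟨b, hb, rfl⟩ hb₀
    obtain ⟨v, hv, hbv⟩ := exists_frequently_eq_of_mem_span_repeatedPowers hb
      (ne_of_apply_ne (cantorProfile p) (by rwa [map_zero]))
    have hderiv (a : ℤ_[p]) (ha : a ∉ Set.range (cantorPoint p)) :
        PadicIntDerivAt p (cantorProfile p b) a 0 :=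
      padicIntDerivAt_cantorProfile_zero b ha
    refine ⟨continuous_cantorProfile (memℓp_of_mem_span_repeatedPowers ht_norm hb),
      (Set.range (cantorPoint p))ᶜ, isClosed_range_cantorPoint.measurableSet.compl, ?_⟩
    rw [compl_compl]
    exact ⟨measure_range_cantorPoint μ, fun a ha => ⟨0, hderiv a ha⟩,
      ⟨0, fun a ha L hL => by rw [hL.unique (hderiv a ha), norm_zero]⟩,
      fun a ha ⟨L, hL⟩ => not_padicIntDerivAt_cantorProfile hv hbv ha L hL,
      mk_range_cantorPoint⟩
end

section
/- Let p be a prime. For α ∈ ℤ_p define the binomial series function F_α : ℚ_p → ℚ_p by F_α(x) = ∑'_{k : ℕ} ((∏_{j < k} ((α : ℚ_p) - j)) / k!) · x^k (a tsum in ℚ_p; this series converges whenever ‖x‖ ≤ p⁻¹, where it represents (1+x)^α). Let n ≥ 1, let α₁, …, αₙ ∈ ℤ_p be pairwise distinct with αᵢ ≠ 0 for all i, and let γ₁, …, γₙ ∈ ℚ_p with γᵢ ≠ 0 for all i. Then the function x ↦ ∑_{i=1}^n γᵢ · F_{αᵢ}(x) is not constant on the ball pℤ_p = {x ∈ ℚ_p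 : ‖x‖ ≤ p⁻¹}: there exist x, y ∈ ℚ_p with ‖x‖ ≤ p⁻¹, ‖y‖ ≤ p⁻¹ and ∑_{i=1}^n γᵢ·F_{αᵢ}(x) ≠ ∑_{i=1}^n γᵢ·F_{αᵢ}(y). -/
/-- The `p`-adic binomial series `x ↦ ∑' k, (α (α - 1) ⋯ (α - k + 1) / k!) x^k`, which for
`‖x‖ ≤ p⁻¹` converges and represents `(1 + x) ^ α` for `α ∈ ℤ_[p]`. -/
noncomputable def padicBinomialSeries (p : ℕ) [Fact p.Prime] (α : ℤ_[p]) (x : ℚ_[p]) :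
    ℚ_[p] :=
  ∑' k : ℕ,
    ((∏ j ∈ Finset.range k, ((α : ℚ_[p]) - (j : ℚ_[p]))) / (Nat.factorial k : ℚ_[p])) * x ^ k

/-!
The `k`-th coefficient of `(1 + x) ^ α` is the value at `α` of a polynomial of degree exactly `k`.
These polynomials form a basis of `K[X]`, so a linear relation between the sequences of
coefficients attached to distinct exponents is a linear relation between the evaluations of
polynomials at these exponents. Evaluations at distinct points are distinct multiplicative
characters of `K[X]`, hence linearly independent (Dedekind). Thus the germs at `0` of the functions
`(1 + x) ^ α`, for `α ∈ ℤ_[p]`, are linearly independent. Since `α = 0` gives the constant function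
`1`, a combination that is constant near `0` can only involve the exponent `0`.
-/

open Filter Polynomial
open scoped Topology

section LinearAlgebra

theorem eq_zero_of_sum_smul_eq_smul {R M ι κ : Type*} [Semiring R] [AddCommMonoid M] [Module R M]
    [Fintype ι] {v : κ → M} (hv : LinearIndependent R v) {a : ι → κ} (ha : Function.Injective a)
    {g : ι → R} {b : κ} {c : R} (h : ∑ i, g i • v (a i) = c • v b) {i : ι} (hi : a i ≠ b) :
    g i = 0 := by
  have hcomb : (Finsupp.equivFunOnFinite.symm g).mapDomain a = Finsupp.single b c := by
    apply hv
    rw [Finsupp.linearCombination_mapDomain, Finsupp.linearCombination_single, ← h]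
    exact Finsupp.sum_fintype _ _ fun _ ↦ zero_smul R _
  simpa [Finsupp.mapDomain_apply ha, Finsupp.single_eq_of_ne hi] using
    DFunLike.congr_fun hcomb (a i)

theorem linearIndependent_leval (R : Type*) [CommRing R] [IsDomain R] :
    LinearIndependent R fun a : R ↦ (leval a : R[X] →ₗ[R] R) := by
  have hinj : Function.Injective fun a : R ↦ (evalRingHom a : R[X] →* R) := fun a b hab ↦ by
    simpa using DFunLike.congr_fun hab X
  exact .of_comp (LinearMap.ltoFun R R[X] R R) ((linearIndependent_monoidHom R[X] R).comp _ hinj)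

theorem linearIndependent_eval_basis {R ι : Type*} [CommRing R] [IsDomain R]
    (b : Module.Basis ι R R[X]) : LinearIndependent R fun (a : R) i ↦ (b i).eval a :=
  (linearIndependent_leval R).map' (b.constr R).symm.toLinearMap (LinearEquiv.ker _)

end LinearAlgebra

section BinomialCoefficients

variable (K : Type*) [Field K] [CharZero K]

/-- The binomial coefficients `X (X - 1) ⋯ (X - k + 1) / k!` as a sequence of polynomials of
degree `k`; its values are the coefficients `Ring.choose a k` of the binomial series. -/
noncomputable def choosePolynomial : Polynomial.Sequence K where
  elems' k := C (k.factorial : K)⁻¹ * descPochhammer K k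
  degree_eq' k := by
    rw [degree_C_mul (inv_ne_zero (Nat.cast_ne_zero.mpr k.factorial_ne_zero)),
      degree_eq_natDegree (monic_descPochhammer K k).ne_zero, descPochhammer_natDegree]

variable {K} in
theorem eval_choosePolynomial (a : K) (k : ℕ) :
    (choosePolynomial K k).eval a = Ring.choose a k := by
  rw [Ring.choose_eq_smul, ← aeval_eq_smeval, ← eval_map_algebraMap, descPochhammer_map,
    smul_eq_mul]
  exact eval_C_mul

variable {K} in
theorem choose_eq_prod_range_div_factorial (a : K) (k : ℕ) :
    Ring.choose a k = (∏ j ∈ Finset.range k, (a - j)) / k.factorial := by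
  rw [← eval_choosePolynomial, ← descPochhammer_eval_eq_prod_range, div_eq_inv_mul]
  exact eval_C_mul

theorem linearIndependent_choose : LinearIndependent K fun (a : K) (k : ℕ) ↦ Ring.choose a k := by
  have hunit (k : ℕ) : IsUnit (choosePolynomial K k).leadingCoeff :=
    (leadingCoeff_ne_zero.mpr ((choosePolynomial K).ne_zero k)).isUnit
  simpa only [Polynomial.Sequence.basis_eq_self, eval_choosePolynomial] using
    linearIndependent_eval_basis ((choosePolynomial K).basis hunit)

theorem linearIndependent_binomialSeries [TopologicalSpace K] [IsTopologicalRing K] :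
    LinearIndependent K fun a : K ↦ binomialSeries K a := by
  let coeffs : FormalMultilinearSeries K K K →ₗ[K] ℕ → K :=
    { toFun q k := q k fun _ ↦ 1, map_add' _ _ := rfl, map_smul' _ _ := rfl }
  have hcoeffs : (coeffs ∘ fun a : K ↦ binomialSeries K a) = fun a k ↦ Ring.choose a k := by
    ext a k
    simp [coeffs]
  exact .of_comp coeffs (hcoeffs ▸ linearIndependent_choose K)

end BinomialCoefficients

section Germ

theorem germ_coe_sum {X M ι : Type*} [AddCommMonoid M] (l : Filter X) (s : Finset ι)
    (f : ι → X → M) : ((∑ i ∈ s, f i : X → M) : Germ l M) = ∑ i ∈ s, (f i : Germ l M) :=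
  map_sum (Germ.coeAddHom l) f s

variable {𝕜 E F ι : Type*} [NontriviallyNormedField 𝕜] [NormedAddCommGroup E] [NormedSpace 𝕜 E]
  [NormedAddCommGroup F] [NormedSpace 𝕜 F]

theorem hasFPowerSeriesAt_sum {f : ι → E → F} {q : ι → FormalMultilinearSeries 𝕜 E F} {x : E}
    (hf : ∀ i, HasFPowerSeriesAt (f i) (q i) x) (s : Finset ι) :
    HasFPowerSeriesAt (∑ i ∈ s, f i) (∑ i ∈ s, q i) x := by
  induction s using Finset.cons_induction with
  | empty =>
    simp only [Finset.sum_empty, ← constFormalMultilinearSeries_zero (𝕜 := 𝕜) (E := E) (F := F)]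
    exact hasFPowerSeriesAt_const
  | cons i s hi ih => simpa only [Finset.sum_cons] using (hf i).add ih

theorem linearIndependent_germ_of_hasFPowerSeriesAt {f : ι → 𝕜 → F}
    {q : ι → FormalMultilinearSeries 𝕜 𝕜 F} {x : 𝕜} (hf : ∀ i, HasFPowerSeriesAt (f i) (q i) x)
    (hq : LinearIndependent 𝕜 q) : LinearIndependent 𝕜 fun i ↦ (f i : Germ (𝓝 x) F) := by
  rw [linearIndependent_iff'] at hq ⊢
  intro s c hc
  have hsum : HasFPowerSeriesAt (∑ i ∈ s, c i • f i) (∑ i ∈ s, c i • q i) x :=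
    hasFPowerSeriesAt_sum (fun i ↦ (hf i).const_smul) s
  have hzero : ∑ i ∈ s, c i • f i =ᶠ[𝓝 x] 0 := by
    rw [← Germ.coe_eq, germ_coe_sum, Germ.coe_zero]
    exact hc
  exact hq s c (hsum.eq_zero_of_eventually hzero)

end Germ

section Padic

variable {p : ℕ} [Fact p.Prime]

theorem norm_choose_padicInt_le_one (α : ℤ_[p]) (k : ℕ) : ‖Ring.choose (α : ℚ_[p]) k‖ ≤ 1 := by
  have hcoe : ((Ring.choose α k : ℤ_[p]) : ℚ_[p]) = Ring.choose (α : ℚ_[p]) k :=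
    Ring.map_choose PadicInt.Coe.ringHom α k
  exact hcoe ▸ PadicInt.norm_le_one _

theorem padicBinomialSeries_eq_tsum_choose (α : ℤ_[p]) (x : ℚ_[p]) :
    padicBinomialSeries p α x = ∑' k, Ring.choose (α : ℚ_[p]) k * x ^ k := by
  simp only [padicBinomialSeries, choose_eq_prod_range_div_factorial]

theorem padicBinomialSeries_zero : padicBinomialSeries p 0 = 1 := by
  ext x
  rw [padicBinomialSeries_eq_tsum_choose, tsum_eq_single 0 fun k hk ↦ ?_]
  · simp
  · simp [Ring.choose_zero_pos _ (Nat.pos_of_ne_zero hk)]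

theorem hasFPowerSeriesAt_padicBinomialSeries (α : ℤ_[p]) :
    HasFPowerSeriesAt (padicBinomialSeries p α) (binomialSeries ℚ_[p] (α : ℚ_[p])) 0 := by
  rw [hasFPowerSeriesAt_iff]
  filter_upwards [Metric.ball_mem_nhds (0 : ℚ_[p]) one_pos] with x hx
  have hsum : Summable fun k ↦ Ring.choose (α : ℚ_[p]) k * x ^ k := by
    refine .of_norm_bounded
      (summable_geometric_of_lt_one (norm_nonneg x) (mem_ball_zero_iff.mp hx)) fun k ↦ ?_
    rw [norm_mul, norm_pow]
    exact mul_le_of_le_one_left (by positivity) (norm_choose_padicInt_le_one α k)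
  simpa only [binomialSeries, FormalMultilinearSeries.coeff_ofScalars, smul_eq_mul, mul_comm,
    zero_add, padicBinomialSeries_eq_tsum_choose] using hsum.hasSum

theorem linearIndependent_germ_padicBinomialSeries :
    LinearIndependent ℚ_[p]
      fun α : ℤ_[p] ↦ (padicBinomialSeries p α : Germ (𝓝 (0 : ℚ_[p])) ℚ_[p]) :=
  linearIndependent_germ_of_hasFPowerSeriesAt hasFPowerSeriesAt_padicBinomialSeries
    ((linearIndependent_binomialSeries ℚ_[p]).comp _ Subtype.coe_injective)

end Padic

theorem stmt_8_general {p : ℕ} [Fact p.Prime] {ι : Type*} [Fintype ι] {α : ι → ℤ_[p]}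
    (hdist : Function.Injective α) {γ : ι → ℚ_[p]} (hαγ : ∃ i, α i ≠ 0 ∧ γ i ≠ 0)
    {r : ℝ} (hr : 0 < r) :
    ∃ x y : ℚ_[p], ‖x‖ ≤ r ∧ ‖y‖ ≤ r ∧
      (∑ i, γ i * padicBinomialSeries p (α i) x) ≠
        (∑ i, γ i * padicBinomialSeries p (α i) y) := by
  by_contra! hconst
  obtain ⟨i, hαi, hγi⟩ := hαγ
  set c := ∑ i, γ i * padicBinomialSeries p (α i) 0
  have hnear : ∑ i, γ i • padicBinomialSeries p (α i) =ᶠ[𝓝 0] c • padicBinomialSeries p 0 := by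
    filter_upwards [Metric.closedBall_mem_nhds 0 hr] with x hx
    simpa [padicBinomialSeries_zero] using
      hconst x 0 (mem_closedBall_zero_iff.mp hx) (by simpa using hr.le)
  have hgerm : ∑ i, γ i • (padicBinomialSeries p (α i) : Germ (𝓝 (0 : ℚ_[p])) ℚ_[p]) =
      c • (padicBinomialSeries p 0 : Germ (𝓝 (0 : ℚ_[p])) ℚ_[p]) :=
    (germ_coe_sum _ _ _).symm.trans (Germ.coe_eq.mpr hnear)
  exact hγi
    (eq_zero_of_sum_smul_eq_smul linearIndependent_germ_padicBinomialSeries hdist hgerm hαi)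

/-- A nontrivial `ℚ_[p]`-linear combination of the functions `(1 + x) ^ αᵢ`
(given by binomial series) with the `αᵢ ∈ ℤ_[p] \ {0}` pairwise distinct is not constant
on the ball `pℤ_[p] = {x : ‖x‖ ≤ p⁻¹}`. -/
theorem stmt_8 (p : ℕ) [Fact p.Prime] (n : ℕ) (hn : 1 ≤ n)
    (α : Fin n → ℤ_[p]) (hdist : Function.Injective α) (hα : ∀ i, α i ≠ 0)
    (γ : Fin n → ℚ_[p]) (hγ : ∀ i, γ i ≠ 0) :
    ∃ x y : ℚ_[p], ‖x‖ ≤ (p : ℝ)⁻¹ ∧ ‖y‖ ≤ (p : ℝ)⁻¹ ∧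
      (∑ i, γ i * padicBinomialSeries p (α i) x) ≠
        (∑ i, γ i * padicBinomialSeries p (α i) y) := by
  have hp : 0 < (p : ℝ)⁻¹ := inv_pos.mpr (Nat.cast_pos.mpr (Fact.out : p.Prime).pos)
  exact stmt_8_general hdist ⟨⟨0, hn⟩, hα _, hγ _⟩ hp
end

section
/- Let p be a prime and let f : ℚ_p → ℚ_p be a function satisfying: (1) for every natural number n ≥ 1 and every x ∈ ℚ_p with ‖x - (p : ℚ_p)^n‖ < (p : ℝ)^(−2n), one has f x = (p : ℚ_p)^(2n); and (2) f x = 0 for every x not belonging to any of the balls {x : ‖x - (p : ℚ_p)^n‖ < (p : ℝ)^(−2n)}, n ≥ 1. (These balls are pairwise disjoint, so such f exists and is unique.) Then: (a) f is differentiable at every point of ℚ_p with derivative 0 (HasDerivAt f 0 x for all x, so f has identically zero, hence continuous, derivative); but (b) f is not strictly differentiable at 0: there is no L ∈ ℚ_p such that (f x - f y)/(x - y) tends to L as (x,y) → (0,0) within {(x,y) : x ≠ y} (equivalently, ¬ HasStrictDerivAt f L 0 for every L). -/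
/-!
Write `Bₙ` for the ball around `pⁿ`. Its points have norm `‖p‖ ^ n`, so `‖f x‖ ≤ ‖x‖ ^ 2`, which
gives derivative `0` at the origin. Away from the origin `f` is locally constant: a point `y` with
`‖y - x‖ < ‖x‖` has the norm of `x`, and a ball `Bₙ` containing points of this norm has radius
`‖x‖ ^ 2`, so moving by less than `‖x‖ ^ 2` neither leaves nor enters it. On the other hand
`pⁿ + p²ⁿ` lies just outside `Bₙ`, and the slope of `f` between `pⁿ` and `pⁿ + p²ⁿ` is `-1` for
every `n ≥ 1`. The same argument works in any ultrametric field, with an element `ϖ` such that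
`0 < ‖ϖ‖ < 1` in place of `p`.
-/

open Filter Metric Topology

theorem norm_eq_of_dist_lt_norm_right {E : Type*} [SeminormedAddCommGroup E] [IsUltrametricDist E]
    {x y : E} (h : dist x y < ‖y‖) : ‖x‖ = ‖y‖ := by
  rw [dist_eq_norm, sub_eq_add_neg, ← norm_neg y] at h
  rw [← norm_neg y]
  exact IsUltrametricDist.norm_eq_of_add_norm_lt_max (lt_max_of_lt_right h)

theorem mem_ball_iff_of_dist_lt {X : Type*} [PseudoMetricSpace X] [IsUltrametricDist X]
    {x y c : X} {r : ℝ} (h : dist y x < r) : y ∈ ball c r ↔ x ∈ ball c r := by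
  rw [mem_ball_comm, mem_ball_comm (x := x), IsUltrametricDist.ball_eq_of_mem (mem_ball.2 h)]

theorem tendsto_slope_of_hasStrictDerivAt {𝕜 F ι : Type*} [NontriviallyNormedField 𝕜]
    [NormedAddCommGroup F] [NormedSpace 𝕜 F] {f : 𝕜 → F} {f' : F} {a : 𝕜} {l : Filter ι}
    {u v : ι → 𝕜} (hf : HasStrictDerivAt f f' a) (hu : Tendsto u l (𝓝 a)) (hv : Tendsto v l (𝓝 a))
    (huv : ∀ᶠ i in l, u i ≠ v i) : Tendsto (fun i ↦ slope f (u i) (v i)) l (𝓝 f') := by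
  have h_error : Tendsto (fun i ↦ (v i - u i)⁻¹ • (f (v i) - f (u i) - (v i - u i) • f')) l (𝓝 0) :=
    ((hasDerivAtFilter_iff_isLittleO.1 hf).comp_tendsto
      (hv.prodMk_nhds hu)).tendsto_inv_smul_nhds_zero
  rw [← tendsto_sub_nhds_zero_iff]
  refine h_error.congr' ?_
  filter_upwards [huv] with i hi
  rw [smul_sub, inv_smul_smul₀ (sub_ne_zero.2 hi.symm), slope_def_module]

section PowBall

variable {K : Type*} [NormedField K] {ϖ x y : K} {n : ℕ}

/-- The ball with centre `ϖ ^ n` and radius `‖ϖ ^ n‖ ^ 2`, on which the step function below is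
constant. For `ϖ = p` in `ℚ_[p]` the radius is `p ^ (-2 * n)`. -/
def powBall (ϖ : K) (n : ℕ) : Set K :=
  ball (ϖ ^ n) (‖ϖ‖ ^ (2 * n))

/-- `f` is the step function equal to `ϖ ^ (2 * n)` on `powBall ϖ n` for each `n ≥ 1`, and to `0`
off these balls. -/
structure IsPowBallStep (ϖ : K) (f : K → K) : Prop where
  eq_pow : ∀ n, 1 ≤ n → ∀ x ∈ powBall ϖ n, f x = ϖ ^ (2 * n)
  eq_zero : ∀ x, (∀ n, 1 ≤ n → x ∉ powBall ϖ n) → f x = 0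

theorem pow_mem_powBall (hϖ : ϖ ≠ 0) (n : ℕ) : ϖ ^ n ∈ powBall ϖ n :=
  mem_ball_self (pow_pos (norm_pos_iff.2 hϖ) _)

theorem IsPowBallStep.apply_eq_of_mem_iff {f : K → K} (hf : IsPowBallStep ϖ f)
    (h : ∀ n, y ∈ powBall ϖ n ↔ x ∈ powBall ϖ n) : f y = f x := by
  by_cases hx : ∃ n, 1 ≤ n ∧ x ∈ powBall ϖ n
  · obtain ⟨n, hn, hxn⟩ := hx
    rw [hf.eq_pow n hn x hxn, hf.eq_pow n hn y ((h n).2 hxn)]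
  · push Not at hx
    rw [hf.eq_zero x hx, hf.eq_zero y fun n hn hyn ↦ hx n hn ((h n).1 hyn)]

variable [IsUltrametricDist K]

theorem norm_eq_of_mem_powBall (hϖ : ‖ϖ‖ ≤ 1) (hx : x ∈ powBall ϖ n) : ‖x‖ = ‖ϖ‖ ^ n := by
  rw [← norm_pow]
  apply norm_eq_of_dist_lt_norm_right
  calc dist x (ϖ ^ n) < ‖ϖ‖ ^ (2 * n) := hx
    _ ≤ ‖ϖ‖ ^ n := pow_le_pow_of_le_one (norm_nonneg ϖ) hϖ (by lia)
    _ = ‖ϖ ^ n‖ := (norm_pow ϖ n).symm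

theorem mem_powBall_iff_of_dist_lt (hϖ : ‖ϖ‖ ≤ 1) (h_norm : dist y x < ‖x‖)
    (h_sq : dist y x < ‖x‖ ^ 2) : y ∈ powBall ϖ n ↔ x ∈ powBall ϖ n := by
  have hyx : ‖y‖ = ‖x‖ := norm_eq_of_dist_lt_norm_right h_norm
  by_cases hx : ‖x‖ = ‖ϖ‖ ^ n
  · rw [hx, ← pow_mul, mul_comm] at h_sq
    exact mem_ball_iff_of_dist_lt h_sq
  · exact iff_of_false (fun hy ↦ hx (hyx ▸ norm_eq_of_mem_powBall hϖ hy))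
      (fun hx' ↦ hx (norm_eq_of_mem_powBall hϖ hx'))

theorem eventually_mem_powBall_iff (hϖ : ‖ϖ‖ ≤ 1) (hx : x ≠ 0) :
    ∀ᶠ y in 𝓝 x, ∀ n, y ∈ powBall ϖ n ↔ x ∈ powBall ϖ n := by
  have hx_pos : 0 < ‖x‖ := norm_pos_iff.2 hx
  filter_upwards [ball_mem_nhds x hx_pos, ball_mem_nhds x (pow_pos hx_pos 2)] with y h_norm h_sq n
  exact mem_powBall_iff_of_dist_lt hϖ h_norm h_sq

theorem pow_add_pow_notMem_powBall (hϖ₀ : ϖ ≠ 0) (hϖ₁ : ‖ϖ‖ < 1) (hn : n ≠ 0) (m : ℕ) :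
    ϖ ^ n + ϖ ^ (2 * n) ∉ powBall ϖ m := by
  intro hm
  have hϖ_pos : 0 < ‖ϖ‖ := norm_pos_iff.2 hϖ₀
  have h_dist : dist (ϖ ^ n + ϖ ^ (2 * n)) (ϖ ^ n) = ‖ϖ‖ ^ (2 * n) := by
    rw [dist_eq_norm, add_sub_cancel_left, norm_pow]
  have h_norm : ‖ϖ ^ n + ϖ ^ (2 * n)‖ = ‖ϖ‖ ^ n := by
    rw [← norm_pow]
    apply norm_eq_of_dist_lt_norm_right
    rw [h_dist, norm_pow]
    exact pow_lt_pow_right_of_lt_one₀ hϖ_pos hϖ₁ (by lia)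
  obtain rfl : n = m := (pow_right_strictAnti₀ hϖ_pos hϖ₁).injective
    (h_norm.symm.trans (norm_eq_of_mem_powBall hϖ₁.le hm))
  exact h_dist.not_lt hm

end PowBall

namespace IsPowBallStep

section NormedField

variable {K : Type*} [NormedField K] [IsUltrametricDist K] {ϖ : K} {f : K → K} {n : ℕ}

theorem norm_apply_le (hf : IsPowBallStep ϖ f) (hϖ : ‖ϖ‖ ≤ 1) (x : K) : ‖f x‖ ≤ ‖x‖ ^ 2 := by
  by_cases hx : ∃ n, 1 ≤ n ∧ x ∈ powBall ϖ n
  · obtain ⟨n, hn, hxn⟩ := hx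
    rw [hf.eq_pow n hn x hxn, norm_eq_of_mem_powBall hϖ hxn, norm_pow, mul_comm, pow_mul]
  · push Not at hx
    rw [hf.eq_zero x hx, norm_zero]
    positivity

theorem slope_pow_pow_add_pow (hf : IsPowBallStep ϖ f) (hϖ₀ : ϖ ≠ 0) (hϖ₁ : ‖ϖ‖ < 1)
    (hn : 1 ≤ n) : slope f (ϖ ^ n) (ϖ ^ n + ϖ ^ (2 * n)) = -1 := by
  rw [slope_def_field, hf.eq_pow n hn _ (pow_mem_powBall hϖ₀ n),
    hf.eq_zero _ fun m _ ↦ pow_add_pow_notMem_powBall hϖ₀ hϖ₁ (by lia) m,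
    zero_sub, add_sub_cancel_left, neg_div, div_self (pow_ne_zero _ hϖ₀)]

end NormedField

variable {K : Type*} [NontriviallyNormedField K] [IsUltrametricDist K] {ϖ : K} {f : K → K}

protected theorem hasDerivAt (hf : IsPowBallStep ϖ f) (hϖ : ‖ϖ‖ ≤ 1) (x : K) :
    HasDerivAt f 0 x := by
  rcases eq_or_ne x 0 with rfl | hx
  · have h_bigO : f =O[𝓝 0] fun x ↦ ‖x - 0‖ ^ 2 :=
      .of_norm_le fun x ↦ by simpa using hf.norm_apply_le hϖ x
    simpa using (h_bigO.hasFDerivAt (𝕜 := K) one_lt_two).hasDerivAt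
  · refine (hasDerivAt_const x (f x)).congr_of_eventuallyEq ?_
    filter_upwards [eventually_mem_powBall_iff hϖ hx] with y hy
    exact hf.apply_eq_of_mem_iff hy

theorem not_hasStrictDerivAt_zero (hf : IsPowBallStep ϖ f) (hϖ₀ : ϖ ≠ 0) (hϖ₁ : ‖ϖ‖ < 1) (L : K) :
    ¬ HasStrictDerivAt f L 0 := by
  intro hL
  have hL_zero : L = 0 := hL.hasDerivAt.unique (hf.hasDerivAt hϖ₁.le 0)
  have h_pow : Tendsto (fun n : ℕ ↦ ϖ ^ n) atTop (𝓝 0) :=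
    tendsto_pow_atTop_nhds_zero_of_norm_lt_one hϖ₁
  have h_add : Tendsto (fun n : ℕ ↦ ϖ ^ n + ϖ ^ (2 * n)) atTop (𝓝 0) := by
    simpa [pow_mul'] using h_pow.add (h_pow.pow 2)
  have h_slope : Tendsto (fun n : ℕ ↦ slope f (ϖ ^ n) (ϖ ^ n + ϖ ^ (2 * n))) atTop (𝓝 L) :=
    tendsto_slope_of_hasStrictDerivAt hL h_pow h_add <| .of_forall fun n ↦ by simp [hϖ₀]
  have hL_neg_one : L = -1 := by
    refine tendsto_nhds_unique h_slope (tendsto_const_nhds.congr' ?_)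
    filter_upwards [eventually_ge_atTop 1] with n hn
    exact (hf.slope_pow_pow_add_pow hϖ₀ hϖ₁ hn).symm
  exact neg_ne_zero.2 one_ne_zero (hL_neg_one.symm.trans hL_zero)

end IsPowBallStep

theorem stmt_9_general {K : Type*} [NontriviallyNormedField K] [IsUltrametricDist K] {ϖ : K}
    (hϖ₀ : ϖ ≠ 0) (hϖ₁ : ‖ϖ‖ < 1) {f : K → K} (hf : IsPowBallStep ϖ f) :
    (∀ x : K, HasDerivAt f 0 x) ∧ ∀ L : K, ¬ HasStrictDerivAt f L 0 :=
  ⟨hf.hasDerivAt hϖ₁.le, hf.not_hasStrictDerivAt_zero hϖ₀ hϖ₁⟩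

theorem mem_powBall_padic_iff {p : ℕ} [Fact p.Prime] {n : ℕ} {x : ℚ_[p]} :
    x ∈ powBall (p : ℚ_[p]) n ↔ ‖x - (p : ℚ_[p]) ^ n‖ < (p : ℝ) ^ (-(2 * (n : ℤ))) := by
  have h_radius : ‖(p : ℚ_[p])‖ ^ (2 * n) = (p : ℝ) ^ (-(2 * (n : ℤ))) := by
    rw [← norm_pow, Padic.norm_p_pow, Nat.cast_mul, Nat.cast_ofNat]
  rw [powBall, mem_ball_iff_norm, h_radius]

/-- The function `f : ℚ_[p] → ℚ_[p]` equal to `p^{2n}` on each ball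
`{x : ‖x - p^n‖ < p^{-2n}}` (`n ≥ 1`) and `0` elsewhere is everywhere differentiable
with derivative `0` (hence has continuous derivative), but is not strictly
differentiable at `0`. -/
theorem stmt_9 (p : ℕ) [Fact p.Prime] (f : ℚ_[p] → ℚ_[p])
    (h1 : ∀ n : ℕ, 1 ≤ n → ∀ x : ℚ_[p],
      ‖x - (p : ℚ_[p]) ^ n‖ < (p : ℝ) ^ (-(2 * (n : ℤ))) → f x = (p : ℚ_[p]) ^ (2 * n))
    (h2 : ∀ x : ℚ_[p],
      (∀ n : ℕ, 1 ≤ n → ¬ ‖x - (p : ℚ_[p]) ^ n‖ < (p : ℝ) ^ (-(2 * (n : ℤ)))) → f x = 0) :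
    (∀ x : ℚ_[p], HasDerivAt f 0 x) ∧ ∀ L : ℚ_[p], ¬ HasStrictDerivAt f L 0 := by
  simp only [← mem_powBall_padic_iff] at h1 h2
  exact stmt_9_general (NeZero.ne _) Padic.norm_p_lt_one ⟨h1, h2⟩
end
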